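/- In the DaC model on the triangular lattice, for every p < 2 sin(π/18), limsup_{n→∞} ℙ_{p,1/2}(V^b_{n,3n}) > 0. -/

import Mathlib

/-!
Common definitions for the Divide-and-Colour (DaC) model of
Bálint, Camia and Meester, "Sharp phase transition and critical
behaviour in 2D divide and colour models".

The model is built concretely: a single uniform random variable on `(0,1]`
is decomposed into countably many i.i.d. uniform random variables (via its
binary digits); one family of uniforms drives the Bernoulli(p) bond
percolation (the edge configuration), and an independent family of uniforms
attaches an independent Bernoulli(r) colour to each bond cluster (the colour
of a cluster is determined by the uniform label of its canonical
representative, the vertex of minimal encoding).  The DaC measure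
`ℙ_{p,r}` is the pushforward of Lebesgue measure on `(0,1]` under the map
producing the pair (edge configuration, colour configuration).
-/

open MeasureTheory ENNReal

namespace DaC

/-- Vertices of the lattice. -/
abbrev V : Type := ℤ × ℤ

/-- Square lattice adjacency: Euclidean distance `1`. -/
def SqAdj (u v : V) : Prop := (u.1 - v.1) ^ 2 + (u.2 - v.2) ^ 2 = 1

/-- `*`-adjacency (matching graph of the square lattice):
Euclidean distance `1` or `√2`. -/
def StarAdj (u v : V) : Prop :=
  (u.1 - v.1) ^ 2 + (u.2 - v.2) ^ 2 = 1 ∨ (u.1 - v.1) ^ 2 + (u.2 - v.2) ^ 2 = 2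

/-- Triangular lattice adjacency. -/
def TriAdj (u v : V) : Prop :=
  (u.1 - v.1, u.2 - v.2) ∈
    ({(1, 0), (-1, 0), (0, 1), (0, -1), (1, 1), (-1, -1)} : Set (ℤ × ℤ))

/-- Classical indicator of a proposition, as a boolean. -/
noncomputable def boolOf (P : Prop) : Bool := @decide P (Classical.propDecidable P)

/-- The `n`-th binary digit of a real number `x ∈ (0,1]`. -/
noncomputable def bit (n : ℕ) (x : ℝ) : Bool := boolOf (⌊x * 2 ^ (n + 1)⌋ % 2 = 1)

/-- A countable family of i.i.d. uniform random variables on `[0,1]`, extracted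
from a single uniform sample `x` by splitting its binary digits. -/
noncomputable def unif (i : ℕ) (x : ℝ) : ℝ :=
  ∑' k : ℕ, if bit (Nat.pair i k) x then ((2 : ℝ)⁻¹) ^ (k + 1) else 0

/-- A symmetric encoding of (unordered) pairs of vertices. -/
noncomputable def eIdx (u v : V) : ℕ :=
  min (Encodable.encode (u, v)) (Encodable.encode (v, u))

/-- The uniform label attached to the edge `{u,v}`. -/
noncomputable def edgeU (u v : V) (x : ℝ) : ℝ := unif (2 * eIdx u v) x

/-- The uniform label attached to the vertex `v` (independent of the edge labels). -/
noncomputable def vtxU (v : V) (x : ℝ) : ℝ := unif (2 * Encodable.encode v + 1) x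

/-- Edge configurations: a boolean (open/closed) for each (ordered) pair of
vertices; configurations arising from the model are symmetric and are
supported on pairs of adjacent vertices. -/
abbrev EdgeCfg : Type := V → V → Bool

/-- Colour configurations: a colour (black = `true`, white = `false`) for each vertex. -/
abbrev ColourCfg : Type := V → Bool

/-- Full configurations of the DaC model: an edge configuration together with
a colour configuration. -/
abbrev Config : Type := EdgeCfg × ColourCfg

/-- The Bernoulli(p) edge configuration determined by the uniform sample `x`,
on the lattice with adjacency `adj`: an edge `{u,v}` of the lattice is open
iff its uniform label is `< p`. -/
noncomputable def edgeCfg (adj : V → V → Prop) (p : ℝ) (x : ℝ) : EdgeCfg :=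
  fun u v => boolOf (adj u v) && boolOf (edgeU u v x < p)

/-- Connectivity through open edges of the edge configuration `η`. -/
def Conn (η : EdgeCfg) (u v : V) : Prop :=
  Relation.ReflTransGen (fun a b => η a b = true) u v

/-- The `p`-cluster of the vertex `v`: its connected component in the graph
retaining only open edges. -/
def pCluster (η : EdgeCfg) (v : V) : Set V := {w | Conn η v w}

/-- Canonical representative of the `p`-cluster of `v`: the vertex of the
cluster with minimal encoding. -/
noncomputable def clusterRep (η : EdgeCfg) (v : V) : V :=
  (Encodable.decode (α := V) (sInf (Encodable.encode '' pCluster η v))).getD v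

/-- The colour configuration with parameters `p, r` determined by the uniform
sample `x`: every `p`-cluster is coloured black (with probability `r`)
or white, independently of all other `p`-clusters, according to the uniform
label of its canonical representative. -/
noncomputable def colourCfg (adj : V → V → Prop) (p r : ℝ) (x : ℝ) : ColourCfg :=
  fun v => boolOf (vtxU (clusterRep (edgeCfg adj p x) v) x < r)

/-- The uniform sample: Lebesgue measure on `(0,1]`. -/
noncomputable def base : Measure ℝ := volume.restrict (Set.Ioc 0 1)

/-- `ν_p`: the product Bernoulli(p) measure on edge configurations of the
lattice with adjacency `adj`. -/
noncomputable def edgeMeasure (adj : V → V → Prop) (p : ℝ) : Measure EdgeCfg :=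
  base.map (edgeCfg adj p)

/-- `ℙ_{p,r}`: the DaC measure on pairs (edge configuration, colour
configuration) for the lattice with adjacency `adj`. -/
noncomputable def DaCMeasure (adj : V → V → Prop) (p r : ℝ) : Measure Config :=
  base.map (fun x => (edgeCfg adj p x, colourCfg adj p r x))

/-- Monochromatic connectivity: `u` and `v` are joined by a path (for the
adjacency `adj`) all of whose vertices have colour `c`. -/
def MonoConn (adj : V → V → Prop) (ξ : ColourCfg) (c : Bool) (u v : V) : Prop :=
  Relation.ReflTransGen (fun a b => adj a b ∧ ξ a = c ∧ ξ b = c) u v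

/-- The colour-`c` cluster of `v` (for the adjacency `adj`): empty if `v` does
not have colour `c`, and otherwise the maximal `adj`-connected set of
`c`-coloured vertices containing `v`. -/
def monoCluster (adj : V → V → Prop) (ξ : ColourCfg) (c : Bool) (v : V) : Set V :=
  {w | ξ v = c ∧ MonoConn adj ξ c v w}

/-- The origin. -/
def origin : V := (0, 0)

/-- The size (cardinality) of a set of vertices, with values in `ℝ≥0∞`. -/
noncomputable def sizeE (S : Set V) : ℝ≥0∞ := S.encard

/-- The probability, under the DaC measure with edge adjacency `eadj` and
parameters `p, r`, that the origin lies in an infinite colour-`c` cluster for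
the adjacency `cadj`. -/
noncomputable def percProb (eadj cadj : V → V → Prop) (c : Bool) (p r : ℝ) : ℝ≥0∞ :=
  DaCMeasure eadj p r {ω | (monoCluster cadj ω.2 c origin).Infinite}

/-- `Θ(p,r)` for the square lattice: probability that the origin lies in an
infinite black `r`-cluster. -/
noncomputable def thetaSq (p r : ℝ) : ℝ≥0∞ := percProb SqAdj SqAdj true p r

/-- `Θ*(p,s)` for the square lattice: the `ℙ_{p,1-s}`-probability that the
origin lies in an infinite white `*`-cluster. -/
noncomputable def thetaStarSq (p s : ℝ) : ℝ≥0∞ := percProb SqAdj StarAdj false p (1 - s)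

/-- `Θ(p,r)` for the triangular lattice. -/
noncomputable def thetaTri (p r : ℝ) : ℝ≥0∞ := percProb TriAdj TriAdj true p r

/-- The critical colouring density `r_c(p)` of the square lattice DaC model. -/
noncomputable def rcSq (p : ℝ) : ℝ :=
  sSup {r : ℝ | r ∈ Set.Icc (0 : ℝ) 1 ∧ thetaSq p r = 0}

/-- The critical colouring density `r_c*(p)` for white `*`-percolation. -/
noncomputable def rcStarSq (p : ℝ) : ℝ :=
  sSup {s : ℝ | s ∈ Set.Icc (0 : ℝ) 1 ∧ thetaStarSq p s = 0}

/-- The critical colouring density `r_c(p)` of the triangular lattice DaC model. -/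
noncomputable def rcTri (p : ℝ) : ℝ :=
  sSup {r : ℝ | r ∈ Set.Icc (0 : ℝ) 1 ∧ thetaTri p r = 0}

/-! ### Rectangles and crossings -/

/-- The rectangle `S_{n,m} = ([0,n] × [0,m]) ∩ ℤ²`. -/
def Rect (n m : ℕ) : Set V :=
  {v | 0 ≤ v.1 ∧ v.1 ≤ (n : ℤ) ∧ 0 ≤ v.2 ∧ v.2 ≤ (m : ℤ)}

/-- The top side of `S_{n,m}`. -/
def TopSide (n m : ℕ) : Set V := {v | v ∈ Rect n m ∧ v.2 = (m : ℤ)}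

/-- The bottom side of `S_{n,m}`. -/
def BotSide (n m : ℕ) : Set V := {v | v ∈ Rect n m ∧ v.2 = 0}

/-- The left side of `S_{n,m}`. -/
def LeftSide (n m : ℕ) : Set V := {v | v ∈ Rect n m ∧ v.1 = 0}

/-- The right side of `S_{n,m}`. -/
def RightSide (n m : ℕ) : Set V := {v | v ∈ Rect n m ∧ v.1 = (n : ℤ)}

/-- There is a path (for the adjacency `adj`), all of whose vertices lie in the
region `R` and satisfy the predicate `good`, from the set `A` to the set `B`. -/
def HasCrossing (adj : V → V → Prop) (good : V → Prop) (R A B : Set V) : Prop :=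
  ∃ (k : ℕ) (f : Fin (k + 1) → V),
    (∀ i, f i ∈ R ∧ good (f i)) ∧
    (∀ i : Fin k, adj (f i.castSucc) (f i.succ)) ∧
    f 0 ∈ A ∧ f (Fin.last k) ∈ B

/-- `V^b_{n,m}` as a set of colour configurations: there is a black vertical
crossing of `S_{n,m}` (for the adjacency `adj`). -/
def VertBC (adj : V → V → Prop) (n m : ℕ) : Set ColourCfg :=
  {ξ | HasCrossing adj (fun v => ξ v = true) (Rect n m) (TopSide n m) (BotSide n m)}

/-- `V^{w*}_{n,m}` as a set of colour configurations: there is a white vertical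
`*`-crossing of `S_{n,m}`. -/
def VertWStarC (n m : ℕ) : Set ColourCfg :=
  {ξ | HasCrossing StarAdj (fun v => ξ v = false) (Rect n m) (TopSide n m) (BotSide n m)}

/-- `H^{w*}_{n,m}` as a set of colour configurations: there is a white
horizontal `*`-crossing of `S_{n,m}`. -/
def HorizWStarC (n m : ℕ) : Set ColourCfg :=
  {ξ | HasCrossing StarAdj (fun v => ξ v = false) (Rect n m) (LeftSide n m) (RightSide n m)}

/-- The event (set of full configurations) determined by a set of colour
configurations. -/
def colourEvent (C : Set ColourCfg) : Set Config := {ω | ω.2 ∈ C}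

/-! ### Events depending on colours, increasing events, pivotal clusters -/

/-- The event `A` is defined in terms of the colours of the vertices in `W`. -/
def DependsOnColoursIn (A : Set Config) (W : Set V) : Prop :=
  ∀ ω ω' : Config, (∀ v ∈ W, ω.2 v = ω'.2 v) → (ω ∈ A ↔ ω' ∈ A)

/-- The event `A` is increasing (for the partial order comparing colour
configurations pointwise, black = `true` above white = `false`). -/
def IncreasingColourEvent (A : Set Config) : Prop :=
  ∀ ω ω' : Config, (∀ v : V, ω.2 v = true → ω'.2 v = true) → ω ∈ A → ω' ∈ A

/-- Flip the colours of the vertices of `C`. -/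
noncomputable def flipOn (C : Set V) (ξ : ColourCfg) : ColourCfg :=
  fun v => @ite _ (v ∈ C) (Classical.propDecidable _) (!ξ v) (ξ v)

/-- The set `C` is a pivotal `p`-cluster for the event `A` in the
configuration `ω`: `C` is a `p`-cluster of the edge configuration of `ω`, and
flipping the colour of (all the vertices of) `C` changes whether the
configuration belongs to `A`. -/
def IsPivotal (A : Set Config) (ω : Config) (C : Set V) : Prop :=
  (∃ v : V, C = pCluster ω.1 v) ∧ ¬ (ω ∈ A ↔ (ω.1, flipOn C ω.2) ∈ A)

/-- `n(A)`: the number of pivotal `p`-clusters for the event `A`, with values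
in `ℝ≥0∞`. -/
noncomputable def numPivotal (A : Set Config) (ω : Config) : ℝ≥0∞ :=
  {C : Set V | IsPivotal A ω C}.encard

/-! ### Barriers -/

/-- Connectivity in the square lattice avoiding the edges of `E`. -/
def AvoidConn (E : Set (V × V)) (u v : V) : Prop :=
  Relation.ReflTransGen (fun a b => SqAdj a b ∧ (a, b) ∉ E ∧ (b, a) ∉ E) u v

/-- `E` is a barrier: a set of edges of the square lattice whose removal
(keeping the end-vertices) separates `ℤ²` into two or more connected
components, exactly one of which is infinite. -/
def IsBarrier (E : Set (V × V)) : Prop :=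
  (∀ e ∈ E, SqAdj e.1 e.2) ∧
  (∃ v, {w | AvoidConn E v w}.Infinite) ∧
  (∀ v w, {x | AvoidConn E v x}.Infinite → {x | AvoidConn E w x}.Infinite → AvoidConn E v w) ∧
  (∃ v, {w | AvoidConn E v w}.Finite)

/-- The exterior of a barrier: its unique infinite complementary component. -/
def barrierExt (E : Set (V × V)) : Set V := {v | {w | AvoidConn E v w}.Infinite}

/-- The interior of a barrier: the union of the finite complementary components. -/
def barrierInt (E : Set (V × V)) : Set V := {v | {w | AvoidConn E v w}.Finite}

/-- The event `A ⊆ EdgeCfg` is increasing (opening edges preserves it). -/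
def IncreasingEdgeEvent (A : Set EdgeCfg) : Prop :=
  ∀ η η' : EdgeCfg, (∀ a b : V, η a b = true → η' a b = true) → η ∈ A → η' ∈ A

/-- The event `A ⊆ EdgeCfg` depends only on the states of the edges both of
whose endpoints lie in `W`. -/
def DependsOnEdgesIn (A : Set EdgeCfg) (W : Set V) : Prop :=
  ∀ η η' : EdgeCfg, (∀ a b : V, a ∈ W → b ∈ W → η a b = η' a b) → (η ∈ A ↔ η' ∈ A)

/-! ### Translations -/

/-- Translation of configurations by the vector `u`. -/
def shift (u : V) (ω : Config) : Config :=
  (fun a b => ω.1 (a + u) (b + u), fun a => ω.2 (a + u))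

end DaC

namespace DaC

/-! ### Connections inside a vertex set -/

theorem triAdj_iff (u v : V) : TriAdj u v ↔
    (u.1 - v.1 = 1 ∧ u.2 - v.2 = 0) ∨ (u.1 - v.1 = -1 ∧ u.2 - v.2 = 0) ∨
    (u.1 - v.1 = 0 ∧ u.2 - v.2 = 1) ∨ (u.1 - v.1 = 0 ∧ u.2 - v.2 = -1) ∨
    (u.1 - v.1 = 1 ∧ u.2 - v.2 = 1) ∨ (u.1 - v.1 = -1 ∧ u.2 - v.2 = -1) := by
  simp only [TriAdj, Set.mem_insert_iff, Set.mem_singleton_iff, Prod.mk.injEq]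

theorem triAdj_symm {u v : V} (h : TriAdj u v) : TriAdj v u := by
  rw [triAdj_iff] at *
  omega

/-- `J T a b`: the vertices `a` and `b` are joined by a lattice path inside `T`. -/
def J (T : Set V) (a b : V) : Prop :=
  a ∈ T ∧ Relation.ReflTransGen (fun u v => TriAdj u v ∧ v ∈ T) a b

theorem J.refl {T : Set V} {a : V} (h : a ∈ T) : J T a a := ⟨h, .refl⟩

theorem J.left {T : Set V} {a b : V} (h : J T a b) : a ∈ T := h.1

theorem J.tail {T : Set V} {a b c : V} (h : J T a b) (hbc : TriAdj b c) (hc : c ∈ T) :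
    J T a c := ⟨h.1, h.2.tail ⟨hbc, hc⟩⟩

/-- Induction principle for connections. -/
theorem J.ind {T : Set V} {a b : V} (h : J T a b) {C : V → Prop} (h0 : C a)
    (hs : ∀ u v, J T a u → C u → TriAdj u v → v ∈ T → C v) : C b := by
  obtain ⟨ha, hr⟩ := h
  induction hr with
  | refl => exact h0
  | tail hab hbc ih => exact hs _ _ ⟨ha, hab⟩ ih hbc.1 hbc.2

theorem J.right {T : Set V} {a b : V} (h : J T a b) : b ∈ T :=
  h.ind (C := fun v => v ∈ T) h.1 (fun _ _ _ _ _ h => h)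

theorem J.trans {T : Set V} {a b c : V} (h : J T a b) (h2 : J T b c) : J T a c :=
  h2.ind (C := fun v => J T a v) h (fun _ _ _ hu huv hv => hu.tail huv hv)

theorem J.step {T : Set V} {a b : V} (ha : a ∈ T) (hb : b ∈ T) (h : TriAdj a b) : J T a b :=
  (J.refl ha).tail h hb

theorem J.symm {T : Set V} {a b : V} (h : J T a b) : J T b a :=
  h.ind (C := fun v => J T v a) (J.refl h.1)
    (fun _ _ hau hu huv hv => (J.step hv hau.right (triAdj_symm huv)).trans hu)

theorem J.mono {S T : Set V} {a b : V} (h : J S a b) (hST : S ⊆ T) : J T a b :=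
  h.ind (C := fun v => J T a v) (J.refl (hST h.1)) (fun _ _ _ hu huv hv => hu.tail huv (hST hv))

/-- The connection stays in the component. -/
theorem J.comp {T : Set V} {a b : V} (h : J T a b) : J {v | J T a v} a b :=
  h.ind (C := fun v => J {v | J T a v} a v) (J.refl (J.refl h.1))
    (fun _ _ hau hu huv hv => hu.tail huv (hau.tail huv hv))

theorem J.comp2 {T : Set V} {o a b : V} (ho : J T o a) (h : J T a b) : J {v | J T o v} a b :=
  (h.comp).mono (fun _ hv => ho.trans hv)

/-- First exit from `R`. -/
theorem J.exit {T : Set V} {a b : V} (h : J T a b) {R : Set V} (ha : a ∈ R) (hb : b ∉ R) :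
    ∃ c d, J (T ∩ R) a c ∧ TriAdj c d ∧ d ∈ T ∧ d ∉ R := by
  have key : J (T ∩ R) a b ∨ ∃ c d, J (T ∩ R) a c ∧ TriAdj c d ∧ d ∈ T ∧ d ∉ R := by
    refine h.ind (C := fun v => J (T ∩ R) a v ∨
      ∃ c d, J (T ∩ R) a c ∧ TriAdj c d ∧ d ∈ T ∧ d ∉ R) (Or.inl (J.refl ⟨h.1, ha⟩)) ?_
    intro u v _ hu huv hv
    rcases hu with hu | hu
    · by_cases hvR : v ∈ R
      · exact Or.inl (hu.tail huv ⟨hv, hvR⟩)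
      · exact Or.inr ⟨u, v, hu, huv, hv, hvR⟩
    · exact Or.inr hu
  rcases key with h | h
  · exact absurd h.right.2 hb
  · exact h

/-- Transport of a connection along a map preserving adjacency. -/
theorem J.map {S T : Set V} {a b : V} (h : J S a b) (g : V → V)
    (hg : ∀ u v, TriAdj u v → TriAdj (g u) (g v)) (hST : ∀ u ∈ S, g u ∈ T) : J T (g a) (g b) :=
  h.ind (C := fun v => J T (g a) (g v)) (J.refl (hST _ h.1))
    (fun _ _ _ hu huv hv => hu.tail (hg _ _ huv) (hST _ hv))

/-- A straight segment. -/
theorem J.ray {T : Set V} (a d : V) (hd : ∀ u : V, TriAdj u (u + d)) (n : ℕ)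
    (hT : ∀ i : ℕ, i ≤ n → a + i • d ∈ T) : J T a (a + n • d) := by
  induction n with
  | zero => simpa using J.refl (by simpa using hT 0 le_rfl)
  | succ n ih =>
    have h1 := ih (fun i hi => hT i (by omega))
    refine h1.tail ?_ (hT _ le_rfl)
    have := hd (a + n • d)
    rwa [add_assoc, ← succ_nsmul] at this

/-! ### Crossing paths intersect -/

/-- Signed crossing number of the step `b → c` with the upward half line at `v.1 + 1/2`. -/
noncomputable def stepU (b c v : V) : ℤ :=
  if b.1 = v.1 ∧ c.1 = v.1 + 1 ∧ v.2 < b.2 then 1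
  else if c.1 = v.1 ∧ b.1 = v.1 + 1 ∧ v.2 < c.2 then -1 else 0

/-- Indicator that `b` is strictly above `v`. -/
noncomputable def aboveI (b v : V) : ℤ := if b.1 = v.1 ∧ v.2 < b.2 then 1 else 0

/-- Indicator that `b` is weakly to the left of `v`. -/
noncomputable def leftI (b v : V) : ℤ := if b.1 ≤ v.1 then 1 else 0

theorem stepU_col {b c u v : V} (h : TriAdj b c) (hub : u ≠ b) (huc : u ≠ c) (hvb : v ≠ b)
    (hvc : v ≠ c) (huv : TriAdj u v) (hcol : u.1 = v.1) : stepU b c u = stepU b c v := by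
  obtain ⟨b1, b2⟩ := b
  obtain ⟨c1, c2⟩ := c
  obtain ⟨u1, u2⟩ := u
  obtain ⟨v1, v2⟩ := v
  rw [triAdj_iff] at h huv
  simp only [stepU, ne_eq, Prod.mk.injEq] at *
  split_ifs <;> omega

theorem stepU_next {b c u v : V} (h : TriAdj b c) (hub : u ≠ b) (huc : u ≠ c) (hvb : v ≠ b)
    (hvc : v ≠ c) (huv : TriAdj u v) (hcol : v.1 = u.1 + 1) :
    stepU b c v - stepU b c u = aboveI b v - aboveI c v := by
  obtain ⟨b1, b2⟩ := b
  obtain ⟨c1, c2⟩ := c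
  obtain ⟨u1, u2⟩ := u
  obtain ⟨v1, v2⟩ := v
  rw [triAdj_iff] at h huv
  simp only [stepU, aboveI, ne_eq, Prod.mk.injEq] at *
  have huv2 : v1 = u1 + 1 ∧ (v2 = u2 ∨ v2 = u2 + 1) := by omega
  clear huv hcol
  obtain ⟨rfl, huv2⟩ := huv2
  have h' : (b1 = c1 + 1) ∨ (c1 = b1 + 1) ∨ b1 = c1 := by omega
  rcases h' with rfl | rfl | rfl <;> rcases huv2 with rfl | rfl <;> split_ifs <;> omega

theorem stepU_above {b c v : V} (hb : b.1 = v.1 → b.2 < v.2) (hc : c.1 = v.1 → c.2 < v.2) :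
    stepU b c v = 0 := by
  simp only [stepU]
  split_ifs <;> omega

theorem stepU_below {b c v : V} (h : TriAdj b c) (hb : b.1 = v.1 → v.2 < b.2)
    (hc : c.1 = v.1 → v.2 < c.2) :
    stepU b c v = leftI b v - leftI c v := by
  rw [triAdj_iff] at h
  simp only [stepU, leftI]
  split_ifs <;> omega

/-- The crossing number of a path with upward half lines. -/
theorem exists_crossing_number {F : Set V} {a b : V} (h : J F a b) : ∃ N : V → ℤ,
    (∀ u v, u ∉ F → v ∉ F → TriAdj u v → u.1 = v.1 → N u = N v) ∧
    (∀ u v, u ∉ F → v ∉ F → TriAdj u v → v.1 = u.1 + 1 →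
      N v - N u = aboveI a v - aboveI b v) ∧
    (∀ v, (∀ u ∈ F, u.1 = v.1 → u.2 < v.2) → N v = 0) ∧
    (∀ v, (∀ u ∈ F, u.1 = v.1 → v.2 < u.2) → N v = leftI a v - leftI b v) := by
  refine h.ind (C := fun b => ∃ N : V → ℤ,
    (∀ u v, u ∉ F → v ∉ F → TriAdj u v → u.1 = v.1 → N u = N v) ∧
    (∀ u v, u ∉ F → v ∉ F → TriAdj u v → v.1 = u.1 + 1 →
      N v - N u = aboveI a v - aboveI b v) ∧
    (∀ v, (∀ u ∈ F, u.1 = v.1 → u.2 < v.2) → N v = 0) ∧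
    (∀ v, (∀ u ∈ F, u.1 = v.1 → v.2 < u.2) → N v = leftI a v - leftI b v)) ?_ ?_
  · exact ⟨fun _ => 0, by simp, by simp, by simp, by simp⟩
  · rintro c d hac ⟨N, h1, h2, h3, h4⟩ hcd hd
    have hc := hac.right
    refine ⟨fun v => N v + stepU c d v, ?_, ?_, ?_, ?_⟩
    · intro u v hu hv huv hcol
      have := stepU_col hcd (by rintro rfl; exact hu hc) (by rintro rfl; exact hu hd)
        (by rintro rfl; exact hv hc) (by rintro rfl; exact hv hd) huv hcol
      have := h1 u v hu hv huv hcol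
      simp only
      omega
    · intro u v hu hv huv hcol
      have := stepU_next hcd (by rintro rfl; exact hu hc) (by rintro rfl; exact hu hd)
        (by rintro rfl; exact hv hc) (by rintro rfl; exact hv hd) huv hcol
      have := h2 u v hu hv huv hcol
      simp only
      omega
    · intro v hv
      have := stepU_above (v := v) (hv c hc) (hv d hd)
      have := h3 v hv
      simp only
      omega
    · intro v hv
      have := stepU_below (v := v) hcd (hv c hc) (hv d hd)
      have := h4 v hv
      simp only
      omega

/-- A left-right path and a top-bottom path intersect. -/
theorem paths_meet {F G : Set V} {a b c d : V} (hF : J F a b) (hG : J G c d)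
    (ha : ∀ u ∈ G, a.1 ≤ u.1) (hb : ∀ u ∈ G, u.1 < b.1)
    (hc : ∀ u ∈ F, u.1 = c.1 → u.2 ≤ c.2) (hd : ∀ u ∈ F, u.1 = d.1 → d.2 ≤ u.2) :
    ∃ v, v ∈ F ∧ v ∈ G := by
  by_contra hne
  push Not at hne
  have hGF : ∀ v ∈ G, v ∉ F := fun v hv hF => hne v hF hv
  obtain ⟨N, h1, h2, h3, h4⟩ := exists_crossing_number hF
  have hcst : N d = N c := by
    refine hG.ind (C := fun v => N v = N c) rfl ?_
    intro u v hcu hu huv hv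
    have huG := hcu.right
    have hu' := hGF u huG
    have hv' := hGF v hv
    have hau := ha u huG
    have hbu := hb u huG
    have hav := ha v hv
    have hbv := hb v hv
    have htri := (triAdj_iff u v).1 huv
    rcases (by omega : u.1 = v.1 ∨ v.1 = u.1 + 1 ∨ u.1 = v.1 + 1) with h | h | h
    · rw [← h1 u v hu' hv' huv h, hu]
    · have := h2 u v hu' hv' huv h
      simp only [aboveI] at this
      split_ifs at this <;> omega
    · have := h2 v u hv' hu' (triAdj_symm huv) h
      simp only [aboveI] at this
      split_ifs at this <;> omega
  have e1 : N c = 0 := by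
    apply h3
    intro u hu hcol
    have h5 := hc u hu hcol
    rcases lt_or_eq_of_le h5 with h6 | h6
    · exact h6
    · exact absurd hu (by rw [Prod.ext hcol h6]; exact hGF c hG.left)
  have e2 : N d = leftI a d - leftI b d := by
    apply h4
    intro u hu hcol
    have h5 := hd u hu hcol
    rcases lt_or_eq_of_le h5 with h6 | h6
    · exact h6
    · exact absurd hu (by rw [Prod.ext hcol h6.symm]; exact hGF d hG.right)
  have h7 := ha d hG.right
  have h8 := hb d hG.right
  simp only [leftI] at e2
  split_ifs at e2 <;> omega

end DaC

namespace DaC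

/-- Horizontal Euclidean coordinate (doubled). -/
def X (v : V) : ℤ := 2 * v.1 - v.2

theorem triAdj_X {u v : V} (h : TriAdj u v) :
    X v ≤ X u + 2 ∧ X u ≤ X v + 2 ∧ v.2 ≤ u.2 + 1 ∧ u.2 ≤ v.2 + 1 := by
  rw [triAdj_iff] at h
  simp only [X]
  omega

/-! ### Paths that cross must touch -/

theorem touch {F G : Set V} {a b c d : V} {y0 y1 M : ℤ} (hF : J F a b) (hG : J G c d)
    (hFy : ∀ v ∈ F, y0 ≤ v.2 ∧ v.2 ≤ y1) (hGM : ∀ v ∈ G, -M ≤ v.1 ∧ v.1 ≤ M)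
    (hL : ∀ v ∈ G, v.2 = a.2 → a.1 - 1 ≤ v.1) (hR : ∀ v ∈ G, v.2 = b.2 → v.1 ≤ b.1 + 1)
    (hup : ∀ v ∈ F, c.2 < v.2 → v.1 - c.1 ≠ v.2 - c.2)
    (hupa : c.2 < a.2 → a.1 < c.1 + (a.2 - c.2)) (hupb : c.2 < b.2 → c.1 + (b.2 - c.2) < b.1)
    (hdn : ∀ v ∈ F, v.2 < d.2 → v.1 ≠ d.1)
    (hdna : a.2 < d.2 → a.1 < d.1) (hdnb : b.2 < d.2 → d.1 < b.1) :
    ∃ u ∈ F, ∃ v ∈ G, u = v ∨ TriAdj u v := by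
  have ha := hFy a hF.left
  have hb := hFy b hF.right
  have hcG := hGM c hG.left
  have hdG := hGM d hG.right
  -- arms
  obtain ⟨n, hn⟩ : ∃ n : ℕ, y1 ≤ c.2 + n ∧ d.2 - n ≤ y0 :=
    ⟨(y1 - c.2).toNat + (d.2 - y0).toNat, by omega, by omega⟩
  obtain ⟨m, hm⟩ : ∃ m : ℕ, a.1 - m ≤ -(M + n) ∧ M + n < b.1 + m :=
    ⟨(a.1 + (M + n)).toNat + (M + n + 1 - b.1).toNat, by omega, by omega⟩
  let F' : Set V := F ∪ {v | v.2 = a.2 ∧ v.1 ≤ a.1} ∪ {v | v.2 = b.2 ∧ b.1 ≤ v.1}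
  let G' : Set V := G ∪ {v | c.2 ≤ v.2 ∧ v.2 ≤ c.2 + n ∧ v.1 - c.1 = v.2 - c.2} ∪
    {v | v.2 ≤ d.2 ∧ d.2 - n ≤ v.2 ∧ v.1 = d.1}
  have r1 : J F' a (a + m • ((-1, 0) : V)) := by
    apply J.ray
    · intro u; rw [triAdj_iff]; simp
    · intro i hi; left; right; simp
  have r2 : J F' b (b + m • ((1, 0) : V)) := by
    apply J.ray
    · intro u; rw [triAdj_iff]; simp
    · intro i hi; right; simp
  have r3 : J G' c (c + n • ((1, 1) : V)) := by
    apply J.ray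
    · intro u; rw [triAdj_iff]; simp
    · intro i hi; left; right; simp; omega
  have r4 : J G' d (d + n • ((0, -1) : V)) := by
    apply J.ray
    · intro u; rw [triAdj_iff]; simp
    · intro i hi; right; simp; omega
  have hF' : J F' (a + m • ((-1, 0) : V)) (b + m • ((1, 0) : V)) :=
    r1.symm.trans ((hF.mono (fun v hv => Or.inl (Or.inl hv))).trans r2)
  have hG' : J G' (c + n • ((1, 1) : V)) (d + n • ((0, -1) : V)) :=
    r3.symm.trans ((hG.mono (fun v hv => Or.inl (Or.inl hv))).trans r4)
  have hF'y : ∀ v ∈ F', y0 ≤ v.2 ∧ v.2 ≤ y1 := by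
    rintro v ((hv | hv) | hv)
    · exact hFy v hv
    · obtain ⟨h1, h2⟩ := hv; omega
    · obtain ⟨h1, h2⟩ := hv; omega
  have hG'x : ∀ v ∈ G', -(M + n) ≤ v.1 ∧ v.1 ≤ M + n := by
    rintro v ((hv | hv) | hv)
    · have := hGM v hv; omega
    · obtain ⟨h1, h2, h3⟩ := hv; omega
    · obtain ⟨h1, h2, h3⟩ := hv; omega
  obtain ⟨v, hvF, hvG⟩ := paths_meet hF' hG'
    (fun u hu => by have := hG'x u hu; simp; omega) (fun u hu => by have := hG'x u hu; simp; omega)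
    (fun u hu _ => by have := hF'y u hu; simp; omega)
    (fun u hu _ => by have := hF'y u hu; simp; omega)
  -- reduce to the vertex of `G`
  have key : v ∈ G → ∃ u ∈ F, ∃ v ∈ G, u = v ∨ TriAdj u v := by
    intro hvG
    rcases hvF with (h | ⟨h1, h2⟩) | ⟨h1, h2⟩
    · exact ⟨v, h, v, hvG, Or.inl rfl⟩
    · have := hL v hvG h1
      refine ⟨a, hF.left, v, hvG, ?_⟩
      rcases (by omega : v.1 = a.1 ∨ v.1 = a.1 - 1) with h3 | h3
      · exact Or.inl (Prod.ext h3.symm h1.symm)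
      · right; rw [triAdj_iff]; omega
    · have := hR v hvG h1
      refine ⟨b, hF.right, v, hvG, ?_⟩
      rcases (by omega : v.1 = b.1 ∨ v.1 = b.1 + 1) with h3 | h3
      · exact Or.inl (Prod.ext h3.symm h1.symm)
      · right; rw [triAdj_iff]; omega
  rcases hvG with (h | ⟨h1, h2, h3⟩) | ⟨h1, h2, h3⟩
  · exact key h
  · rcases eq_or_lt_of_le h1 with e | e
    · have : v = c := Prod.ext (by omega) e.symm
      exact key (this ▸ hG.left)
    · exfalso
      rcases hvF with (h | ⟨h4, h5⟩) | ⟨h4, h5⟩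
      · exact hup v h e h3
      · have := hupa (by omega); omega
      · have := hupb (by omega); omega
  · rcases eq_or_lt_of_le h1 with e | e
    · have : v = d := Prod.ext (by omega) e
      exact key (this ▸ hG.right)
    · exfalso
      rcases hvF with (h | ⟨h4, h5⟩) | ⟨h4, h5⟩
      · exact hdn v h e h3
      · have := hdna (by omega); omega
      · have := hdnb (by omega); omega

theorem J.of_touch {T : Set V} {u v : V} (hu : u ∈ T) (hv : v ∈ T) (h : u = v ∨ TriAdj u v) :
    J T u v := by
  rcases h with rfl | h
  · exact J.refl hu
  · exact J.step hu hv h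

/-! ### Hex lemma -/

/-- Antisymmetric cochain. -/
noncomputable def coch (a1 w1 a2 w2 : Prop) : ℤ :=
  open Classical in
  (if a1 ∧ w2 then 1 else 0) - (if w1 ∧ a2 then 1 else 0)

theorem coch_closed {a1 w1 a2 w2 a3 w3 : Prop} (d1 : ¬ (a1 ∧ w1)) (d2 : ¬ (a2 ∧ w2))
    (d3 : ¬ (a3 ∧ w3)) (t1 : (a2 ∧ w3) ∨ (w2 ∧ a3) → a1 ∨ w1)
    (t2 : (a1 ∧ w3) ∨ (w1 ∧ a3) → a2 ∨ w2) (t3 : (a1 ∧ w2) ∨ (w1 ∧ a2) → a3 ∨ w3) :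
    coch a1 w1 a2 w2 + coch a2 w2 a3 w3 = coch a1 w1 a3 w3 := by
  unfold coch
  by_cases a1 <;> by_cases w1 <;> by_cases a2 <;> by_cases w2 <;> by_cases a3 <;> by_cases w3 <;>
    simp_all

theorem sperner (A W : ℕ → ℕ → Prop) (n m : ℕ)
    (hd : ∀ i j, ¬ (A i j ∧ W i j))
    (h0 : ∀ j ≤ m, A 0 j) (h1 : ∀ j ≤ m, ¬ A (n + 1) j)
    (h2 : ∀ i ≤ n + 1, ¬ W i 0) (h3 : ∀ i, 1 ≤ i → i ≤ n + 1 → W i m)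
    (hadj : ∀ i j i' j', i ≤ n + 1 → i' ≤ n + 1 → j ≤ m → j' ≤ m →
      (i ≤ i' + 1 ∧ i' ≤ i + 1 ∧ j ≤ j' + 1 ∧ j' ≤ j + 1) →
      ((i ≤ i' ∧ j ≤ j') ∨ (i' ≤ i ∧ j' ≤ j)) → A i j → ¬ A i' j' → ¬ W i' j' →
      ∀ i'' j'', i'' ≤ n + 1 → j'' ≤ m → (i' ≤ i'' + 1 ∧ i'' ≤ i' + 1 ∧ j' ≤ j'' + 1 ∧ j'' ≤ j' + 1) →
      ((i' ≤ i'' ∧ j' ≤ j'') ∨ (i'' ≤ i' ∧ j'' ≤ j')) → ¬ W i'' j'') : False := by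
  let c : ℕ → ℕ → ℕ → ℕ → ℤ := fun i j i' j' => coch (A i j) (W i j) (A i' j') (W i' j')
  have tri : ∀ i j i' j' i'' j'', i'' ≤ n + 1 → j'' ≤ m → i ≤ i' → i' ≤ i'' → i'' ≤ i + 1 →
      j ≤ j' → j' ≤ j'' → j'' ≤ j + 1 → c i j i' j' + c i' j' i'' j'' = c i j i'' j'' := by
    intro i j i' j' i'' j'' _ _ _ _ _ _ _ _
    apply coch_closed (hd _ _) (hd _ _) (hd _ _)
    · rintro (⟨p, q⟩ | ⟨p, q⟩) <;> by_contra hc <;> rw [not_or] at hc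
      · exact hadj i' j' i j (by omega) (by omega) (by omega) (by omega) (by omega) (by omega) p
          hc.1 hc.2 i'' j'' (by omega) (by omega) (by omega) (by omega) q
      · exact hadj i'' j'' i j (by omega) (by omega) (by omega) (by omega) (by omega) (by omega) q
          hc.1 hc.2 i' j' (by omega) (by omega) (by omega) (by omega) p
    · rintro (⟨p, q⟩ | ⟨p, q⟩) <;> by_contra hc <;> rw [not_or] at hc
      · exact hadj i j i' j' (by omega) (by omega) (by omega) (by omega) (by omega) (by omega) p
          hc.1 hc.2 i'' j'' (by omega) (by omega) (by omega) (by omega) q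
      · exact hadj i'' j'' i' j' (by omega) (by omega) (by omega) (by omega) (by omega) (by omega) q
          hc.1 hc.2 i j (by omega) (by omega) (by omega) (by omega) p
    · rintro (⟨p, q⟩ | ⟨p, q⟩) <;> by_contra hc <;> rw [not_or] at hc
      · exact hadj i j i'' j'' (by omega) (by omega) (by omega) (by omega) (by omega) (by omega) p
          hc.1 hc.2 i' j' (by omega) (by omega) (by omega) (by omega) q
      · exact hadj i' j' i'' j'' (by omega) (by omega) (by omega) (by omega) (by omega) (by omega) q
          hc.1 hc.2 i j (by omega) (by omega) (by omega) (by omega) p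
  let r : ℕ → ℤ := fun j => ∑ i ∈ Finset.range (n + 1), c i j (i + 1) j
  have hr : ∀ j < m, r (j + 1) = r j := by
    intro j hj
    have e : ∀ i < n + 1, c i (j + 1) (i + 1) (j + 1) - c i j (i + 1) j =
        c (i + 1) j (i + 1) (j + 1) - c i j i (j + 1) := by
      intro i hi
      have e1 := tri i j (i + 1) j (i + 1) (j + 1) (by omega) (by omega) (by omega) (by omega)
        (by omega) (by omega) (by omega) (by omega)
      have e2 := tri i j i (j + 1) (i + 1) (j + 1) (by omega) (by omega) (by omega) (by omega)
        (by omega) (by omega) (by omega) (by omega)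
      omega
    have e3 : r (j + 1) - r j = c (n + 1) j (n + 1) (j + 1) - c 0 j 0 (j + 1) := by
      rw [← Finset.sum_range_sub (fun i => c i j i (j + 1)) (n + 1)]
      simp only [r]
      rw [← Finset.sum_sub_distrib]
      exact Finset.sum_congr rfl (fun i hi => e i (Finset.mem_range.1 hi))
    have e4 : c (n + 1) j (n + 1) (j + 1) = 0 := by
      have a1 := h1 j (by omega)
      have a2 := h1 (j + 1) (by omega)
      simp [c, coch, a1, a2]
    have e5 : c 0 j 0 (j + 1) = 0 := by
      have a1 := h0 j (by omega)
      have a2 := h0 (j + 1) (by omega)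
      have a3 := hd 0 j
      have a4 := hd 0 (j + 1)
      have a5 : ¬ W 0 j := fun h => a3 ⟨a1, h⟩
      have a6 : ¬ W 0 (j + 1) := fun h => a4 ⟨a2, h⟩
      simp [c, coch, a5, a6]
    omega
  have hr0 : r 0 = 0 := by
    apply Finset.sum_eq_zero
    intro i hi
    have := Finset.mem_range.1 hi
    have a1 := h2 i (by omega)
    have a2 := h2 (i + 1) (by omega)
    simp [c, coch, a1, a2]
  have hrm : r m = 1 := by
    simp only [r]
    rw [Finset.sum_range_succ', Finset.sum_eq_zero]
    · have a1 := h0 m le_rfl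
      have a2 := h3 1 le_rfl (by omega)
      have a3 : ¬ W 0 m := fun h => hd 0 m ⟨a1, h⟩
      simp [c, coch, a1, a2, a3]
    · intro i hi
      have := Finset.mem_range.1 hi
      have a1 := h3 (i + 1) (by omega) (by omega)
      have a2 := h3 (i + 1 + 1) (by omega) (by omega)
      have a3 := hd (i + 1) m
      have a4 := hd (i + 1 + 1) m
      have a5 : ¬ A (i + 1) m := fun h => a3 ⟨h, a1⟩
      have a6 : ¬ A (i + 1 + 1) m := fun h => a4 ⟨h, a2⟩
      simp [c, coch, a5, a6]
  have : ∀ j ≤ m, r j = 0 := by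
    intro j
    induction j with
    | zero => intro _; exact hr0
    | succ j ih => intro hj; rw [hr j (by omega)]; exact ih (by omega)
  have := this m le_rfl
  omega

/-- The parallelogram. -/
def Par (x0 x1 y0 y1 : ℤ) : Set V := {v | x0 ≤ v.1 ∧ v.1 ≤ x1 ∧ y0 ≤ v.2 ∧ v.2 ≤ y1}

theorem hex (B : Set V) {x0 x1 y0 y1 : ℤ} (hx : x0 ≤ x1) (hy : y0 ≤ y1) :
    (∃ a b, J (Par x0 x1 y0 y1 ∩ B) a b ∧ a.1 = x0 ∧ b.1 = x1) ∨
    (∃ c d, J (Par x0 x1 y0 y1 ∩ Bᶜ) c d ∧ c.2 = y1 ∧ d.2 = y0) := by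
  by_contra hcon
  rw [not_or] at hcon
  obtain ⟨hA, hW⟩ := hcon
  push Not at hA hW
  let AA : V → Prop := fun v => v.1 = x0 - 1 ∨ ∃ a, J (Par x0 x1 y0 y1 ∩ B) a v ∧ a.1 = x0
  let WW : V → Prop := fun v => v.1 ≠ x0 - 1 ∧
    (v.2 = y1 + 1 ∨ ∃ a, J (Par x0 x1 y0 y1 ∩ Bᶜ) a v ∧ a.2 = y1)
  let pt : ℕ → ℕ → V := fun i j => (x0 - 1 + i, y0 + j)
  have hpt : ∀ i j i' j' : ℕ, (i ≤ i' + 1 ∧ i' ≤ i + 1 ∧ j ≤ j' + 1 ∧ j' ≤ j + 1) →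
      ((i ≤ i' ∧ j ≤ j') ∨ (i' ≤ i ∧ j' ≤ j)) → ¬ (i = i' ∧ j = j') →
      TriAdj (pt i j) (pt i' j') := by
    intro i j i' j' h1 h2 h3
    rw [triAdj_iff]
    simp only [pt]
    clear hA hW AA WW
    omega
  have stepA : ∀ u v, AA u → TriAdj u v → v ∈ Par x0 x1 y0 y1 ∩ B → AA v := by
    rintro u v (h | ⟨a, h, ha⟩) huv hv
    · right
      refine ⟨v, J.refl hv, ?_⟩
      have h1 := hv.1.1
      rw [triAdj_iff] at huv
      omega
    · exact Or.inr ⟨a, h.tail huv hv, ha⟩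
  have stepW : ∀ u v, WW u → TriAdj u v → v ∈ Par x0 x1 y0 y1 ∩ Bᶜ → WW v := by
    rintro u v ⟨h0, h⟩ huv hv
    have h1 := hv.1
    refine ⟨by have := h1.1; omega, Or.inr ?_⟩
    rcases h with h | ⟨a, h, ha⟩
    · refine ⟨v, J.refl hv, ?_⟩
      have := h1.2.2.2
      rw [triAdj_iff] at huv
      omega
    · exact ⟨a, h.tail huv hv, ha⟩
  refine sperner (fun i j => AA (pt i j)) (fun i j => WW (pt i j)) (x1 - x0).toNat
    (y1 + 1 - y0).toNat ?_ ?_ ?_ ?_ ?_ ?_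
  · rintro i j ⟨h1, h2, h3⟩
    rcases h1 with h1 | ⟨a, h1, ha⟩
    · exact h2 h1
    · rcases h3 with h3 | ⟨a', h3, _⟩
      · have := h1.right.1.2.2.2; omega
      · exact h3.right.2 h1.right.2
  · intro j _
    left; simp [pt]
  · rintro j hj (h | ⟨a, h, ha⟩)
    · simp [pt] at h; omega
    · exact hA _ _ h ha (by simp [pt]; omega)
  · rintro i hi ⟨h0, h | ⟨a, h, ha⟩⟩
    · simp [pt] at h; omega
    · exact hW _ _ h ha (by simp [pt])
  · intro i h1 h2
    refine ⟨by simp [pt]; omega, Or.inl (by simp [pt]; omega)⟩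
  · intro i j i' j' hi hi' hj hj' hn ho hAu hAv hWv i'' j'' hi'' hj'' hn' ho' hWw
    have n1 : pt i' j' ∈ Par x0 x1 y0 y1 := by
      refine ⟨?_, ?_, ?_, ?_⟩
      · by_contra hc
        refine hAv (Or.inl ?_)
        simp only [pt] at hc ⊢
        clear hAv hWv hWw hAu
        omega
      · simp only [pt]
        clear hAv hWv hWw hAu
        omega
      · simp [pt]
      · by_contra hc
        refine hWv ⟨fun h => hAv (Or.inl h), Or.inl ?_⟩
        simp only [pt] at hc ⊢
        clear hAv hWv hWw hAu
        omega
    by_cases hB : pt i' j' ∈ B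
    · by_cases he : i = i' ∧ j = j'
      · obtain ⟨rfl, rfl⟩ := he; exact hAv hAu
      · exact hAv (stepA _ _ hAu (hpt i j i' j' hn ho he) ⟨n1, hB⟩)
    · by_cases he : i'' = i' ∧ j'' = j'
      · obtain ⟨rfl, rfl⟩ := he; exact hWv hWw
      · exact hWv (stepW _ _ hWw (triAdj_symm (hpt i' j' i'' j'' hn' ho'
          (fun e => he ⟨e.1.symm, e.2.symm⟩))) ⟨n1, hB⟩)

/-! ### Trimming -/

theorem trim {T : Set V} {a b : V} {w : ℤ} (hw : 1 ≤ w) (h : J T a b) (ha : X a < -w)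
    (hb : w < X b) :
    ∃ a' b', J (T ∩ {v | -w ≤ X v ∧ X v ≤ w}) a' b' ∧ X a' ≤ -w + 1 ∧ w - 1 ≤ X b' := by
  obtain ⟨c, d, h1, h2, h3, h4⟩ := h.exit (R := {v | X v ≤ w}) (by simp; omega) (by simp; omega)
  have h5 := h1.symm
  simp only [Set.mem_ofPred_eq] at h4
  have h6 := triAdj_X h2
  obtain ⟨c', d', g1, g2, g3, g4⟩ := h5.exit (R := {v | -w ≤ X v}) (by simp; omega)
    (by simp; omega)
  simp only [Set.mem_ofPred_eq] at g4
  have g6 := triAdj_X g2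
  refine ⟨c', c, g1.symm.mono ?_, by omega, by omega⟩
  rintro v ⟨⟨k1, k2⟩, k3⟩
  exact ⟨k1, k3, k2⟩

/-- Trimming to a parallelogram. -/
theorem trimx {T : Set V} {a b : V} {x0 x1 : ℤ} (hx : x0 ≤ x1) (h : J T a b) (ha : a.1 ≤ x0)
    (hb : x1 ≤ b.1) :
    ∃ a' b', J (T ∩ {v | x0 ≤ v.1 ∧ v.1 ≤ x1}) a' b' ∧ a'.1 = x0 ∧ b'.1 = x1 := by
  have s1 : ∃ c, J (T ∩ {v | v.1 ≤ x1}) a c ∧ c.1 = x1 := by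
    by_cases hbx : b.1 = x1 ∧ ∀ v, J T a v → v.1 ≤ x1
    · refine ⟨b, (h.comp).mono (fun v hv => ⟨hv.right, hbx.2 v hv⟩), hbx.1⟩
    · have : ∃ e, J T a e ∧ x1 < e.1 := by
        by_contra hc
        push Not at hc
        exact hbx ⟨le_antisymm (hc b h) hb, hc⟩
      obtain ⟨e, he, hxe⟩ := this
      obtain ⟨c, d, h1, h2, h3, h4⟩ := he.exit (R := {v | v.1 ≤ x1}) (by simp; omega)
        (by simp; omega)
      have h5 := h1.right.2
      simp only [Set.mem_ofPred_eq] at h4 h5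
      rw [triAdj_iff] at h2
      exact ⟨c, h1, by omega⟩
  obtain ⟨c, hc, hcx⟩ := s1
  have s2 : ∃ a', J (T ∩ {v | v.1 ≤ x1} ∩ {v | x0 ≤ v.1}) c a' ∧ a'.1 = x0 := by
    by_cases hbx : a.1 = x0 ∧ ∀ v, J (T ∩ {v | v.1 ≤ x1}) c v → x0 ≤ v.1
    · exact ⟨a, (hc.symm.comp).mono (fun v hv => ⟨hv.right, hbx.2 v hv⟩), hbx.1⟩
    · have : ∃ e, J (T ∩ {v | v.1 ≤ x1}) c e ∧ e.1 < x0 := by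
        by_contra hc'
        push Not at hc'
        exact hbx ⟨le_antisymm ha (hc' a hc.symm), hc'⟩
      obtain ⟨e, he, hxe⟩ := this
      obtain ⟨c', d, h1, h2, h3, h4⟩ := he.exit (R := {v | x0 ≤ v.1}) (by simp; omega)
        (by simp; omega)
      have h5 := h1.right.2
      simp only [Set.mem_ofPred_eq] at h4 h5
      rw [triAdj_iff] at h2
      exact ⟨c', h1, by omega⟩
  obtain ⟨a', h1, h2⟩ := s2
  refine ⟨a', c, h1.symm.mono ?_, h2, hcx⟩
  rintro v ⟨⟨k1, k2⟩, k3⟩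
  exact ⟨k1, k3, k2⟩

end DaC

namespace DaC

/-- The hexagonal-lattice box with centre `(cx, cy)` in the coordinates `(X, y)`. -/
def BoxC (cx cy w h : ℤ) : Set V :=
  {v | cx - w ≤ X v ∧ X v ≤ cx + w ∧ cy - h ≤ v.2 ∧ v.2 ≤ cy + h}

/-- A trimmed left-right crossing ending at height in `[lo, hi]`. -/
def pTr (cx w lo hi : ℤ) (T : Set V) : Prop :=
  ∃ a b, b ∈ T ∧ J ((T ∩ {v | X v < cx + w - 2}) ∪ {b}) a b ∧ X a ≤ cx - w + 2 ∧
    cx + w - 2 ≤ X b ∧ lo ≤ b.2 ∧ b.2 ≤ hi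

/-- A vertical crossing. -/
def pV (cy h : ℤ) (T : Set V) : Prop := ∃ c d, J T c d ∧ c.2 = cy + h ∧ d.2 = cy - h

theorem connP {F G : Set V} {a b c d : V} {x0 x1 y0 y1 : ℤ} (hF : J F a b) (hG : J G c d)
    (hFy : ∀ v ∈ F, y0 ≤ v.2 ∧ v.2 ≤ y1) (hGx : ∀ v ∈ G, x0 ≤ v.1 ∧ v.1 ≤ x1)
    (ha : a.1 ≤ x0) (hb : x1 ≤ b.1) (hc : y1 ≤ c.2) (hd : d.2 ≤ y0) : J (F ∪ G) a c := by
  have hFc := hF.comp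
  have hGc := hG.comp
  have hFy' : ∀ v ∈ {v | J F a v}, y0 ≤ v.2 ∧ v.2 ≤ y1 := fun v hv => hFy v (J.right hv)
  have hGx' : ∀ v ∈ {v | J G c v}, x0 ≤ v.1 ∧ v.1 ≤ x1 := fun v hv => hGx v (J.right hv)
  have hay := hFy a hF.left
  have hby := hFy b hF.right
  obtain ⟨u, hu, v, hv, huv⟩ := touch (M := x1.toNat + (-x0).toNat) hFc hGc hFy'
    (fun v hv => by have := hGx' v hv; omega) (fun v hv _ => by have := hGx' v hv; omega)
    (fun v hv _ => by have := hGx' v hv; omega) (fun v hv h => by have := hFy' v hv; omega)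
    (by omega) (by omega) (fun v hv h => by have := hFy' v hv; omega) (by omega) (by omega)
  have h1 : J (F ∪ G) a u := J.mono hu Set.subset_union_left
  have h2 : J (F ∪ G) c v := J.mono hv Set.subset_union_right
  exact h1.trans ((J.of_touch h1.right h2.right huv).trans h2.symm)

theorem conn2 {F G : Set V} {a b c d : V} {cx cy w h : ℤ} (hF : J F a b) (hG : J G c d)
    (hFy : ∀ v ∈ F, cy - h ≤ v.2 ∧ v.2 ≤ cy + h) (hGB : G ⊆ BoxC cx cy w h)
    (ha : X a ≤ cx - w + 2) (hb : cx + w - 2 ≤ X b) (hc : c.2 = cy + h) (hd : d.2 = cy - h) :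
    J (F ∪ G) a c := by
  have hFc := hF.comp
  have hGc := hG.comp
  have hFy' : ∀ v ∈ {v | J F a v}, cy - h ≤ v.2 ∧ v.2 ≤ cy + h := fun v hv => hFy v (J.right hv)
  have hGB' : ∀ v ∈ {v | J G c v}, v ∈ BoxC cx cy w h := fun v hv => hGB (J.right hv)
  have hay := hFy a hF.left
  have hby := hFy b hF.right
  simp only [BoxC, Set.mem_ofPred_eq, X] at *
  obtain ⟨u, hu, v, hv, huv⟩ := touch
    (M := (cx + w + cy + h).toNat + (-(cx - w + cy - h)).toNat) hFc hGc hFy'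
    (fun v hv => by have := hGB' v hv; omega)
    (fun v hv _ => by have := hGB' v hv; omega)
    (fun v hv _ => by have := hGB' v hv; omega) (fun v hv h => by have := hFy' v hv; omega)
    (by omega) (by omega) (fun v hv h => by have := hFy' v hv; omega) (by omega) (by omega)
  have h1 : J (F ∪ G) a u := J.mono hu Set.subset_union_left
  have h2 : J (F ∪ G) c v := J.mono hv Set.subset_union_right
  exact h1.trans ((J.of_touch h1.right h2.right huv).trans h2.symm)

theorem conn1 {T : Set V} {a b c d : V} {cx cy w h : ℤ} (hF : J T a b) (hG : J T c d)
    (hGB : T ⊆ BoxC cx cy w h)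
    (ha : X a ≤ cx - w + 2) (hb : cx + w - 2 ≤ X b) (hc : c.2 = cy + h) (hd : d.2 = cy - h) :
    J T a c := by
  have := conn2 hF hG (fun v hv => (hGB hv).2.2) hGB ha hb hc hd
  rwa [Set.union_self] at this

theorem tr_sub {T : Set V} {b : V} {k : ℤ} (hb : b ∈ T) : (T ∩ {v | X v < k}) ∪ {b} ⊆ T := by
  rintro v (hv | hv)
  · exact hv.1
  · rw [Set.mem_singleton_iff] at hv; rwa [hv]

/-- Case A gluing. -/
theorem archA {T0 T1 : Set V} {cx cy w h d α : ℤ} {c0 d0 c1 d1 : V}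
    (hT0 : T0 ⊆ BoxC cx cy w h) (hT1 : T1 ⊆ BoxC cx (cy + d) w h) (hw : 2 ≤ w)
    (h0 : J T0 c0 d0) (hc0 : c0.2 = cy + h) (hd0 : d0.2 = cy - h)
    (h1 : J T1 c1 d1) (hc1 : c1.2 = cy + d + h) (hd1 : d1.2 = cy + d - h)
    (hd : 0 ≤ d) (hα : d ≤ 2 * α)
    (ht0 : pTr cx w (cy + α) (cy + h) T0) (ht1 : pTr cx w (cy + d - h) (cy + d - α) T1) :
    J (T0 ∪ T1) c0 c1 := by
  obtain ⟨l, r, hr, hlr, hl, hrX, hr1, hr2⟩ := ht0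
  obtain ⟨a, b, hb, hab, ha, hbX, hb1, hb2⟩ := ht1
  have e0 : J T0 l c0 := conn1 (hlr.mono (tr_sub hr)) h0 hT0 hl hrX hc0 hd0
  have e1 : J T1 a c1 := conn1 (hab.mono (tr_sub hb)) h1 hT1 ha hbX hc1 hd1
  have e2 : J T0 r d0 := (hlr.mono (tr_sub hr)).symm.trans (e0.trans h0)
  have hFc := hab.comp
  have hGc := e2.comp
  set S := (T1 ∩ {v | X v < cx + w - 2}) ∪ {b} with hS
  have hF1 : ∀ v ∈ {v | J S a v}, cy + d - h ≤ v.2 ∧ v.2 ≤ cy + d + h :=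
    fun v hv => (hT1 (tr_sub hb (J.right hv))).2.2
  have hF2 : ∀ v ∈ {v | J S a v}, X v < cx + w - 2 ∨ v.2 = b.2 := by
    intro v hv
    rcases J.right hv with h | h
    · exact Or.inl h.2
    · right; rw [Set.mem_singleton_iff] at h; rw [h]
  have hG1 : ∀ v ∈ {v | J T0 r v}, v ∈ BoxC cx cy w h := fun v hv => hT0 (J.right hv)
  have hay := hF1 a (J.refl hab.left)
  have hby := hF1 b hab
  simp only [BoxC, Set.mem_ofPred_eq, X] at hF1 hF2 hG1 ha hl hrX hbX
  obtain ⟨u, hu, v, hv, huv⟩ := touch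
    (M := (cx + w + cy + h).toNat + (-(cx - w + cy - h)).toNat) hFc hGc hF1
    (fun v hv => by have := hG1 v hv; omega)
    (fun v hv _ => by have := hG1 v hv; omega)
    (fun v hv _ => by have := hG1 v hv; omega)
    (fun v hv h => by have := hF2 v hv; omega)
    (by omega) (by omega) (fun v hv h => by have := hF1 v hv; omega) (by omega) (by omega)
  have k1 : J (T0 ∪ T1) a u := J.mono hu ((tr_sub hb).trans Set.subset_union_right)
  have k2 : J (T0 ∪ T1) r v := J.mono hv Set.subset_union_left
  have k3 : J (T0 ∪ T1) r c0 := J.mono (e2.trans h0.symm) Set.subset_union_left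
  have k4 : J (T0 ∪ T1) a c1 := J.mono e1 Set.subset_union_right
  exact k3.symm.trans (k2.trans ((J.of_touch k1.right k2.right huv).symm.trans (k1.symm.trans k4)))

/-- Case B gluing. -/
theorem archB {T TQ : Set V} {w h w' h' cx j α : ℤ} {c d : V}
    (hT : T ⊆ BoxC 0 0 w h) (hTQ : TQ ⊆ BoxC cx j w' h') (hw : 3 ≤ w)
    (hww : w' < w) (hg1 : w - 1 ≤ cx + w') (hg2 : cx + w' ≤ w) (hα : 0 ≤ α)
    (hV : J TQ c d) (hc : c.2 = j + h') (hd : d.2 = j - h')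
    (ht : pTr 0 w j (j + α) T)
    (hu : pTr cx w' (j + α) (j + h') TQ) (hl : pTr cx w' (j - h') (j - α) TQ) :
    ∃ a, J (T ∪ TQ) a c ∧ X a ≤ -w + 2 := by
  obtain ⟨l, r, hr, hlr, hl1, hrX, hr1, hr2⟩ := hu
  obtain ⟨l', r', hr', hlr', hl1', hrX', hr1', hr2'⟩ := hl
  obtain ⟨a, b, hb, hab, ha, hbX, hb1, hb2⟩ := ht
  have e0 : J TQ l c := conn1 (hlr.mono (tr_sub hr)) hV hTQ hl1 hrX hc hd
  have e1 : J TQ l' c := conn1 (hlr'.mono (tr_sub hr')) hV hTQ hl1' hrX' hc hd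
  have e0' : J TQ r c := (hlr.mono (tr_sub hr)).symm.trans e0
  have e1' : J TQ r' c := (hlr'.mono (tr_sub hr')).symm.trans e1
  have e2 : J TQ r r' := e0'.trans e1'.symm
  have hFc := hab.comp
  have hGc := e2.comp
  set S := (T ∩ {v | X v < 0 + w - 2}) ∪ {b} with hS
  have hF1 : ∀ v ∈ {v | J S a v}, 0 - h ≤ v.2 ∧ v.2 ≤ 0 + h :=
    fun v hv => (hT (tr_sub hb (J.right hv))).2.2
  have hF2 : ∀ v ∈ {v | J S a v}, X v < 0 + w - 2 ∨ v.2 = b.2 := by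
    intro v hv
    rcases J.right hv with h | h
    · exact Or.inl h.2
    · right; rw [Set.mem_singleton_iff] at h; rw [h]
  have hG1 : ∀ v ∈ {v | J TQ r v}, v ∈ BoxC cx j w' h' := fun v hv => hTQ (J.right hv)
  have hay := hF1 a (J.refl hab.left)
  have hby := hF1 b hab
  refine ⟨a, ?_, by omega⟩
  simp only [BoxC, Set.mem_ofPred_eq, X] at hF1 hF2 hG1 ha hrX hrX' hbX
  obtain ⟨u, hu, v, hv, huv⟩ := touch
    (M := (cx + w' + j + h').toNat + (-(cx - w' + j - h')).toNat) hFc hGc hF1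
    (fun v hv => by have := hG1 v hv; omega)
    (fun v hv _ => by have := hG1 v hv; omega)
    (fun v hv _ => by have := hG1 v hv; omega)
    (fun v hv h => by have := hF2 v hv; omega)
    (by omega) (by omega) (fun v hv h => by have := hF2 v hv; omega) (by omega) (by omega)
  have k1 : J (T ∪ TQ) a u := J.mono hu ((tr_sub hb).trans Set.subset_union_left)
  have k2 : J (T ∪ TQ) r v := J.mono hv Set.subset_union_right
  have k3 : J (T ∪ TQ) r c := J.mono e0' Set.subset_union_right
  exact k1.trans ((J.of_touch k1.right k2.right huv).trans (k2.symm.trans k3))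

/-- Reflection in the vertical line `X = cx`. -/
def mir (cx : ℤ) : V ≃ V where
  toFun v := (cx - v.1 + v.2, v.2)
  invFun v := (cx - v.1 + v.2, v.2)
  left_inv v := by ext <;> simp <;> ring
  right_inv v := by ext <;> simp <;> ring

theorem mir_mir (cx : ℤ) (v : V) : mir cx (mir cx v) = v := by ext <;> simp [mir] <;> ring

theorem X_mir (cx : ℤ) (v : V) : X (mir cx v) = 2 * cx - X v := by
  simp only [X, mir, Equiv.coe_fn_mk]; ring

theorem mir_adj (cx : ℤ) (u v : V) (h : TriAdj u v) : TriAdj (mir cx u) (mir cx v) := by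
  rw [triAdj_iff] at *
  simp only [mir, Equiv.coe_fn_mk]
  omega

theorem mir_box {cx j w h : ℤ} {v : V} (hv : v ∈ BoxC cx j w h) : mir cx v ∈ BoxC cx j w h := by
  simp only [BoxC, Set.mem_ofPred_eq, X_mir] at *
  simp only [mir, Equiv.coe_fn_mk]
  omega

/-- The long crossing obtained by reflection. -/
theorem long_of {B : Set V} {w h w' h' cx j α : ℤ} (hw : 3 ≤ w) (hww : w' < w) (hw0 : 0 ≤ w')
    (hg1 : w - 1 ≤ cx + w') (hg2 : cx + w' ≤ w) (hα : 0 ≤ α) (hj0 : h' - h ≤ j) (hj : j + h' ≤ h)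
    (hV : pV j h' (BoxC cx j w' h' ∩ B))
    (ht : pTr 0 w j (j + α) (BoxC 0 0 w h ∩ B))
    (hu : pTr cx w' (j + α) (j + h') (BoxC cx j w' h' ∩ B))
    (hl : pTr cx w' (j - h') (j - α) (BoxC cx j w' h' ∩ B))
    (ht' : pTr 0 w j (j + α) (BoxC 0 0 w h ∩ mir cx ⁻¹' B))
    (hu' : pTr cx w' (j + α) (j + h') (BoxC cx j w' h' ∩ mir cx ⁻¹' B))
    (hl' : pTr cx w' (j - h') (j - α) (BoxC cx j w' h' ∩ mir cx ⁻¹' B)) :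
    ∃ a e, J (BoxC 0 0 (3 * w) h ∩ B) a e ∧ X a ≤ -w + 2 ∧ 3 * w - 2 * w' - 4 ≤ X e := by
  obtain ⟨c, d, hcd, hc, hd⟩ := hV
  obtain ⟨a, ha, haX⟩ := archB Set.inter_subset_left Set.inter_subset_left hw hww hg1 hg2 hα
    hcd hc hd ht hu hl
  have hcd' : J (BoxC cx j w' h' ∩ mir cx ⁻¹' B) (mir cx c) (mir cx d) := by
    refine hcd.map _ (mir_adj cx) ?_
    rintro u ⟨h1, h2⟩
    refine ⟨mir_box h1, ?_⟩
    show mir cx (mir cx u) ∈ B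
    rwa [mir_mir]
  obtain ⟨e, he, heX⟩ := archB Set.inter_subset_left Set.inter_subset_left hw hww hg1 hg2 hα
    hcd' (by simpa [mir] using hc) (by simpa [mir] using hd) ht' hu' hl'
  have he' : J (BoxC 0 0 (3 * w) h ∩ B) (mir cx e) (mir cx (mir cx c)) := by
    refine he.map _ (mir_adj cx) ?_
    rintro u (⟨h1, h2⟩ | ⟨h1, h2⟩)
    · refine ⟨?_, h2⟩
      simp only [BoxC, Set.mem_ofPred_eq, X_mir] at *
      simp only [mir, Equiv.coe_fn_mk]
      omega
    · refine ⟨?_, h2⟩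
      simp only [BoxC, Set.mem_ofPred_eq, X_mir] at *
      simp only [mir, Equiv.coe_fn_mk]
      omega
  rw [mir_mir] at he'
  have ha' : J (BoxC 0 0 (3 * w) h ∩ B) a c := by
    refine ha.mono ?_
    rintro u (⟨h1, h2⟩ | ⟨h1, h2⟩)
    · refine ⟨?_, h2⟩
      simp only [BoxC, Set.mem_ofPred_eq] at *
      omega
    · refine ⟨?_, h2⟩
      simp only [BoxC, Set.mem_ofPred_eq] at *
      omega
  refine ⟨a, mir cx e, ha'.trans he'.symm, haX, ?_⟩
  rw [X_mir]
  omega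

/-- Chaining long crossings. -/
theorem chainB {B : Set V} {w h L : ℤ} (hL : h + w - 2 ≤ L) (K : ℕ)
    (hlong : ∀ i : ℕ, i ≤ K → ∃ a e, J (BoxC (i * h) 0 (3 * w) h ∩ B) a e ∧
      X a ≤ i * h - w + 2 ∧ i * h + L ≤ X e)
    (hV : ∀ i : ℕ, i ≤ K → pV 0 h (BoxC (i * h) 0 w h ∩ B)) :
    ∃ a e, J ({v | 0 - h ≤ v.2 ∧ v.2 ≤ 0 + h} ∩ B) a e ∧ X a ≤ -w + 2 ∧ K * h + L ≤ X e := by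
  set U := {v : V | 0 - h ≤ v.2 ∧ v.2 ≤ 0 + h} ∩ B with hU
  have sub : ∀ cx w, BoxC cx 0 w h ∩ B ⊆ U := by
    rintro cx w v ⟨h1, h2⟩
    exact ⟨h1.2.2, h2⟩
  have key : ∀ K' : ℕ, K' ≤ K → ∃ a e f, J U a e ∧ J U a f ∧ X a ≤ -w + 2 ∧ X f ≤ K' * h - w + 2 ∧
      K' * h + L ≤ X e := by
    intro K'
    induction K' with
    | zero =>
      intro hk
      obtain ⟨a, e, h1, h2, h3⟩ := hlong 0 hk
      have h4 := h1.mono (sub _ _)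
      exact ⟨a, e, a, h4, J.refl h4.left, by simpa using h2, by simpa using h2, h3⟩
    | succ n ih =>
      intro hk
      obtain ⟨a, e, f, h1, h2, h3, h4, h5⟩ := ih (by omega)
      obtain ⟨a', e', g1, g2, g3⟩ := hlong (n + 1) hk
      obtain ⟨c, d, k1, k2, k3⟩ := hV (n + 1) hk
      have g1' := g1.mono (sub _ _)
      push_cast at *
      have hh : 0 ≤ h := by
        have := (k1.left.1).2.2
        omega
      have m1 := conn2 (h2.symm.trans h1) k1 (fun v hv => hv.1) Set.inter_subset_left
        (by linarith) (by linarith) k2 k3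
      have m2 := conn2 g1' k1 (fun v hv => hv.1) Set.inter_subset_left (by linarith)
        (by linarith) k2 k3
      have m1' := m1.mono (Set.union_subset le_rfl (sub _ _))
      have m2' := m2.mono (Set.union_subset le_rfl (sub _ _))
      have m3 := h2.trans (m1'.trans m2'.symm)
      exact ⟨a, e', a', m3.trans g1', m3, h3, g2, g3⟩
  obtain ⟨a, e, f, h1, h2, h3, h4, h5⟩ := key K le_rfl
  exact ⟨a, e, h1, h3, h5⟩

/-- Chaining vertical crossings. -/
theorem chainA {B : Set V} {w h d α : ℤ} (hw : 2 ≤ w) (hd : 0 ≤ d) (hα : d ≤ 2 * α) (K : ℕ)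
    (hV : ∀ i : ℕ, i ≤ K → pV (i * d) h (BoxC 0 (i * d) w h ∩ B))
    (hu : ∀ i : ℕ, i ≤ K → pTr 0 w (i * d + α) (i * d + h) (BoxC 0 (i * d) w h ∩ B))
    (hl : ∀ i : ℕ, i ≤ K → pTr 0 w (i * d - h) (i * d - α) (BoxC 0 (i * d) w h ∩ B)) :
    ∃ a e, J ({v | 0 - w ≤ X v ∧ X v ≤ 0 + w ∧ - h ≤ v.2 ∧ v.2 ≤ K * d + h} ∩ B) a e ∧
      a.2 = - h ∧ e.2 = K * d + h := by
  set U := {v : V | 0 - w ≤ X v ∧ X v ≤ 0 + w ∧ - h ≤ v.2 ∧ v.2 ≤ K * d + h} ∩ B with hU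
  have sub : ∀ i : ℕ, i ≤ K → BoxC 0 (i * d) w h ∩ B ⊆ U := by
    rintro i hi v ⟨⟨h1, h2, h3, h4⟩, h5⟩
    have e1 : 0 ≤ (i : ℤ) * d := by positivity
    have e2 : (i : ℤ) * d ≤ K * d := by
      have : (i : ℤ) ≤ K := by exact_mod_cast hi
      nlinarith
    exact ⟨⟨h1, h2, by linarith, by linarith⟩, h5⟩
  have key : ∀ K' : ℕ, K' ≤ K → ∃ a c e, J U a c ∧ J (BoxC 0 (K' * d) w h ∩ B) c e ∧ a.2 = -h ∧
      c.2 = K' * d + h ∧ e.2 = K' * d - h := by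
    intro K'
    induction K' with
    | zero =>
      intro hk
      obtain ⟨c, e, h1, h2, h3⟩ := hV 0 hk
      exact ⟨e, c, e, (h1.mono (sub 0 hk)).symm, h1, by simpa using h3, by simpa using h2, h3⟩
    | succ n ih =>
      intro hk
      obtain ⟨a, c, e, h1, h2, h3, h4, h5⟩ := ih (by omega)
      obtain ⟨c', e', g1, g2, g3⟩ := hV (n + 1) hk
      have e0 : ((n + 1 : ℕ) : ℤ) * d = n * d + d := by push_cast; ring
      have t1 := hl (n + 1) hk
      have s1 := sub (n + 1) hk
      rw [e0] at g1 g2 g3 t1 s1 ⊢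
      have := archA Set.inter_subset_left Set.inter_subset_left hw h2 h4 h5 g1 g2 g3 hd hα
        (hu n (by omega)) t1
      exact ⟨a, c', e', h1.trans (this.mono (Set.union_subset (sub n (by omega)) s1)), g1, h3,
        g2, g3⟩
  obtain ⟨a, c, e, h1, h2, h3, h4, h5⟩ := key K le_rfl
  exact ⟨a, c, h1, h3, h4⟩

end DaC

namespace DaC

/-- Black vertices. -/
def blk (ξ : V → Bool) : Set V := {v | ξ v = true}

/-- Local events. -/
def Loc (A : Set (V → Bool)) : Prop :=
  ∃ Λ : Finset V, ∀ ξ ξ' : V → Bool, (∀ v ∈ Λ, ξ v = ξ' v) → ξ ∈ A → ξ' ∈ A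

/-- Increasing events. -/
def Inc (A : Set (V → Bool)) : Prop :=
  ∀ ξ ξ' : V → Bool, (∀ v, ξ v = true → ξ' v = true) → ξ ∈ A → ξ' ∈ A

/-- Local increasing events. -/
def LI (A : Set (V → Bool)) : Prop := Loc A ∧ Inc A

/-- Automorphisms of the lattice. -/
def Aut (g : V ≃ V) : Prop := ∀ u v, TriAdj (g u) (g v) ↔ TriAdj u v

/-- The properties of the colour law that are used. -/
structure Law (P : Set (V → Bool) → ℝ) : Prop where
  mono : ∀ A B, A ⊆ B → P A ≤ P B
  nonneg : ∀ A, 0 ≤ P A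
  union_le : ∀ A B, P (A ∪ B) ≤ P A + P B
  univ : P Set.univ = 1
  empty : P ∅ = 0
  fkg : ∀ A B, LI A → LI B → P A * P B ≤ P (A ∩ B)
  inv : ∀ (g : V ≃ V) A, Aut g → Loc A → P {ξ | ξ ∘ g ∈ A} = P A
  flip : ∀ A, Loc A → P {ξ | (fun v => !ξ v) ∈ A} = P A

theorem LI.univ : LI Set.univ := ⟨⟨∅, fun _ _ _ _ => trivial⟩, fun _ _ _ _ => trivial⟩

theorem Loc.inter {A B : Set (V → Bool)} (hA : Loc A) (hB : Loc B) : Loc (A ∩ B) := by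
  classical
  obtain ⟨Λ, h⟩ := hA
  obtain ⟨Λ', h'⟩ := hB
  exact ⟨Λ ∪ Λ', fun ξ ξ' e hx => ⟨h ξ ξ' (fun v hv => e v (Finset.mem_union_left _ hv)) hx.1,
    h' ξ ξ' (fun v hv => e v (Finset.mem_union_right _ hv)) hx.2⟩⟩

theorem LI.inter {A B : Set (V → Bool)} (hA : LI A) (hB : LI B) : LI (A ∩ B) :=
  ⟨hA.1.inter hB.1, fun ξ ξ' e hx => ⟨hA.2 ξ ξ' e hx.1, hB.2 ξ ξ' e hx.2⟩⟩

theorem Loc.pre {A : Set (V → Bool)} (hA : Loc A) (g : V ≃ V) : Loc {ξ | ξ ∘ g ∈ A} := by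
  classical
  obtain ⟨Λ, h⟩ := hA
  refine ⟨Λ.image g, fun ξ ξ' e hx => h _ _ (fun v hv => ?_) hx⟩
  exact e _ (Finset.mem_image_of_mem g hv)

theorem LI.pre {A : Set (V → Bool)} (hA : LI A) (g : V ≃ V) : LI {ξ | ξ ∘ g ∈ A} :=
  ⟨hA.1.pre g, fun ξ ξ' e hx => hA.2 _ _ (fun v hv => e _ hv) hx⟩

/-- The event that the set of black vertices in `B` satisfies `Φ`. -/
def ev (B : Set V) (Φ : Set V → Prop) : Set (V → Bool) := {ξ | Φ (B ∩ blk ξ)}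

theorem LI_ev {B : Set V} (hB : B.Finite) {Φ : Set V → Prop} (hΦ : Monotone Φ) : LI (ev B Φ) := by
  refine ⟨⟨hB.toFinset, ?_⟩, ?_⟩
  · intro ξ ξ' e hx
    refine hΦ ?_ hx
    rintro v ⟨h1, h2⟩
    refine ⟨h1, ?_⟩
    have := e v (by simpa using h1)
    simp only [blk, Set.mem_ofPred_eq] at *
    rw [← this, h2]
  · intro ξ ξ' e hx
    refine hΦ ?_ hx
    rintro v ⟨h1, h2⟩
    exact ⟨h1, e v h2⟩

theorem Par_finite (x0 x1 y0 y1 : ℤ) : (Par x0 x1 y0 y1).Finite := by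
  refine ((Set.finite_Icc x0 x1).prod (Set.finite_Icc y0 y1)).subset ?_
  rintro v ⟨h1, h2, h3, h4⟩
  exact ⟨⟨h1, h2⟩, h3, h4⟩

theorem BoxC_finite (cx cy w h : ℤ) : (BoxC cx cy w h).Finite := by
  refine (Par_finite (-((cx + w + cy + h).toNat + (-(cx - w + cy - h)).toNat))
    ((cx + w + cy + h).toNat + (-(cx - w + cy - h)).toNat) (cy - h) (cy + h)).subset ?_
  rintro v ⟨h1, h2, h3, h4⟩
  simp only [X] at h1 h2
  refine ⟨?_, ?_, h3, h4⟩ <;> omega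

theorem pV_mono (cy h : ℤ) : Monotone (pV cy h) := by
  rintro S T hST ⟨c, d, h1, h2⟩
  exact ⟨c, d, h1.mono hST, h2⟩

theorem pTr_mono (cx w lo hi : ℤ) : Monotone (pTr cx w lo hi) := by
  rintro S T hST ⟨c, d, h0, h1, h2⟩
  exact ⟨c, d, hST h0, h1.mono (Set.union_subset_union_left _
    (Set.inter_subset_inter_left _ hST)), h2⟩

/-- Left-right crossing predicate. -/
def pLong (l r : ℤ) (T : Set V) : Prop := ∃ a b, J T a b ∧ X a ≤ l ∧ r ≤ X b

theorem pLong_mono (l r : ℤ) : Monotone (pLong l r) := by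
  rintro S T hST ⟨c, d, h1, h2⟩
  exact ⟨c, d, h1.mono hST, h2⟩

/-- Horizontal crossing of a parallelogram. -/
def pPH (x0 x1 : ℤ) (T : Set V) : Prop := ∃ a b, J T a b ∧ a.1 = x0 ∧ b.1 = x1

/-- Vertical crossing of a parallelogram. -/
def pPV (y0 y1 : ℤ) (T : Set V) : Prop := ∃ c d, J T c d ∧ c.2 = y1 ∧ d.2 = y0

theorem pPH_mono (l r : ℤ) : Monotone (pPH l r) := by
  rintro S T hST ⟨c, d, h1, h2⟩
  exact ⟨c, d, h1.mono hST, h2⟩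

theorem pPV_mono (l r : ℤ) : Monotone (pPV l r) := by
  rintro S T hST ⟨c, d, h1, h2⟩
  exact ⟨c, d, h1.mono hST, h2⟩

/-- Vertical crossing event of a box. -/
def evV (cx cy w h : ℤ) := ev (BoxC cx cy w h) (pV cy h)

/-- Trimmed crossing event of a box. -/
def evTr (cx cy w h lo hi : ℤ) := ev (BoxC cx cy w h) (pTr cx w (cy + lo) (cy + hi))

/-- Long crossing event. -/
def evL (cx cy w h l r : ℤ) := ev (BoxC cx cy w h) (pLong (cx + l) (cx + r))

/-- Horizontal crossing event of a parallelogram. -/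
def evPH (x0 x1 y0 y1 : ℤ) := ev (Par x0 x1 y0 y1) (pPH x0 x1)

/-- Vertical crossing event of a parallelogram. -/
def evPV (x0 x1 y0 y1 : ℤ) := ev (Par x0 x1 y0 y1) (pPV y0 y1)

theorem LI_evV (cx cy w h : ℤ) : LI (evV cx cy w h) := LI_ev (BoxC_finite _ _ _ _) (pV_mono _ _)
theorem LI_evTr (cx cy w h lo hi : ℤ) : LI (evTr cx cy w h lo hi) :=
  LI_ev (BoxC_finite _ _ _ _) (pTr_mono _ _ _ _)
theorem LI_evL (cx cy w h lo hi : ℤ) : LI (evL cx cy w h lo hi) :=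
  LI_ev (BoxC_finite _ _ _ _) (pLong_mono _ _)
theorem LI_evPH (x0 x1 y0 y1 : ℤ) : LI (evPH x0 x1 y0 y1) :=
  LI_ev (Par_finite _ _ _ _) (pPH_mono _ _)
theorem LI_evPV (x0 x1 y0 y1 : ℤ) : LI (evPV x0 x1 y0 y1) :=
  LI_ev (Par_finite _ _ _ _) (pPV_mono _ _)

/-! ### Automorphisms -/

/-- Translations. -/
def trn (p : V) : V ≃ V := Equiv.addRight p

theorem trn_aut (p : V) : Aut (trn p) := by
  intro u v
  simp only [triAdj_iff, trn, Equiv.coe_addRight, Prod.fst_add, Prod.snd_add,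
    add_sub_add_right_eq_sub]

theorem mir_aut (cx : ℤ) : Aut (mir cx) := by
  intro u v
  refine ⟨fun h => ?_, mir_adj cx u v⟩
  have := mir_adj cx _ _ h
  rwa [mir_mir, mir_mir] at this

/-- Reflection in the horizontal axis. -/
def rho : V ≃ V where
  toFun v := (v.1 - v.2, -v.2)
  invFun v := (v.1 - v.2, -v.2)
  left_inv v := by ext <;> simp
  right_inv v := by ext <;> simp

theorem rho_aut : Aut rho := by
  intro u v
  simp only [triAdj_iff, rho, Equiv.coe_fn_mk]
  omega

theorem X_rho (v : V) : X (rho v) = X v := by simp only [X, rho, Equiv.coe_fn_mk]; ring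

/-- Swap of the coordinates. -/
def swp : V ≃ V := Equiv.prodComm ℤ ℤ

theorem swp_aut : Aut swp := by
  intro u v
  simp only [triAdj_iff, swp, Equiv.prodComm_apply, Prod.fst_swap, Prod.snd_swap]
  omega

theorem Aut.trans {g g' : V ≃ V} (h : Aut g) (h' : Aut g') : Aut (g.trans g') := by
  intro u v
  exact (h' _ _).trans (h u v)


theorem Law.le_map {P : Set (V → Bool) → ℝ} (hP : Law P) (g : V ≃ V) (hg : Aut g) {A A' : Set (V → Bool)} (hA : LI A)
    (h : ∀ ξ : V → Bool, ξ ∘ g ∈ A → ξ ∈ A') : P A ≤ P A' := by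
  rw [← hP.inv g A hg hA.1]
  exact hP.mono _ _ h

theorem Law.inter_ge {P : Set (V → Bool) → ℝ} (hP : Law P) {A B : Set (V → Bool)} (hA : LI A) (hB : LI B) {x y : ℝ} (hx : x ≤ P A)
    (hy : y ≤ P B) (hy0 : 0 ≤ y) : x * y ≤ P (A ∩ B) :=
  (mul_le_mul hx hy hy0 (hP.nonneg A)).trans (hP.fkg A B hA hB)

theorem Law.all_ge {P : Set (V → Bool) → ℝ} (hP : Law P) (A : ℕ → Set (V → Bool)) (hA : ∀ i, LI (A i)) {x : ℝ} (hx : 0 ≤ x)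
    (h : ∀ i, x ≤ P (A i)) (K : ℕ) :
    LI {ξ | ∀ i, i < K → ξ ∈ A i} ∧ x ^ K ≤ P {ξ | ∀ i, i < K → ξ ∈ A i} := by
  induction K with
  | zero =>
    have : {ξ : V → Bool | ∀ i, i < 0 → ξ ∈ A i} = Set.univ := by
      ext; simp
    rw [this, hP.univ]
    exact ⟨LI.univ, by simp⟩
  | succ K ih =>
    have : {ξ : V → Bool | ∀ i, i < K + 1 → ξ ∈ A i} = {ξ | ∀ i, i < K → ξ ∈ A i} ∩ A K := by
      ext ξ
      constructor
      · intro h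
        exact ⟨fun i hi => h i (by omega), h K (by omega)⟩
      · rintro ⟨h1, h2⟩ i hi
        rcases Nat.lt_succ_iff_lt_or_eq.1 hi with h | rfl
        · exact h1 i h
        · exact h2
    rw [this, pow_succ]
    exact ⟨ih.1.inter (hA K), hP.inter_ge ih.1 (hA K) ih.2 (h K) hx⟩

/-! ### Translation and reflection of the events -/

theorem BoxC_trn {P : Set (V → Bool) → ℝ} (hP : Law P) {p : V} {cx cy w h : ℤ} (hp : X p = cx) (hp2 : p.2 = cy) {v : V}
    (hv : v ∈ BoxC 0 0 w h) : v + p ∈ BoxC cx cy w h := by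
  simp only [BoxC, Set.mem_ofPred_eq, X, Prod.fst_add, Prod.snd_add] at *
  omega

theorem exists_trn {P : Set (V → Bool) → ℝ} (hP : Law P) (cx cy : ℤ) (hc : (cx + cy) % 2 = 0) : ∃ p : V, X p = cx ∧ p.2 = cy :=
  ⟨((cx + cy) / 2, cy), by simp only [X]; omega, rfl⟩

theorem evV_le {P : Set (V → Bool) → ℝ} (hP : Law P) {cx cy w h : ℤ} (hc : (cx + cy) % 2 = 0) :
    P (evV 0 0 w h) ≤ P (evV cx cy w h) := by
  obtain ⟨p, hp, hp2⟩ := exists_trn hP cx cy hc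
  refine hP.le_map (trn p) (trn_aut p) (LI_evV _ _ _ _) ?_
  rintro ξ ⟨c, d, h1, h2, h3⟩
  refine ⟨c + p, d + p, h1.map (trn p) (fun u v => ((trn_aut p) u v).2) ?_, ?_, ?_⟩
  · rintro u ⟨k1, k2⟩
    exact ⟨BoxC_trn hP hp hp2 k1, k2⟩
  · simp only [Prod.snd_add]; omega
  · simp only [Prod.snd_add]; omega

theorem evL_le {P : Set (V → Bool) → ℝ} (hP : Law P) {cx cy w h l r : ℤ} (hc : (cx + cy) % 2 = 0) :
    P (evL 0 0 w h l r) ≤ P (evL cx cy w h l r) := by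
  obtain ⟨p, hp, hp2⟩ := exists_trn hP cx cy hc
  refine hP.le_map (trn p) (trn_aut p) (LI_evL _ _ _ _ _ _) ?_
  rintro ξ ⟨c, d, h1, h2, h3⟩
  refine ⟨c + p, d + p, h1.map (trn p) (fun u v => ((trn_aut p) u v).2) ?_, ?_, ?_⟩
  · rintro u ⟨k1, k2⟩
    exact ⟨BoxC_trn hP hp hp2 k1, k2⟩
  · simp only [Prod.snd_add, X, Prod.fst_add] at *; omega
  · simp only [Prod.snd_add, X, Prod.fst_add] at *; omega

theorem evTr_le {P : Set (V → Bool) → ℝ} (hP : Law P) {cx cy w h lo hi : ℤ} (hc : (cx + cy) % 2 = 0) :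
    P (evTr 0 0 w h lo hi) ≤ P (evTr cx cy w h lo hi) := by
  obtain ⟨p, hp, hp2⟩ := exists_trn hP cx cy hc
  refine hP.le_map (trn p) (trn_aut p) (LI_evTr _ _ _ _ _ _) ?_
  rintro ξ ⟨a, b, h0, h1, h2, h3, h4, h5⟩
  refine ⟨a + p, b + p, ⟨BoxC_trn hP hp hp2 h0.1, h0.2⟩,
    h1.map (trn p) (fun u v => ((trn_aut p) u v).2) ?_, ?_, ?_, ?_, ?_⟩
  · rintro u (⟨⟨k1, k2⟩, k3⟩ | k)
    · refine Or.inl ⟨⟨BoxC_trn hP hp hp2 k1, k2⟩, ?_⟩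
      simp only [Set.mem_ofPred_eq, X, trn, Equiv.coe_addRight, Prod.fst_add, Prod.snd_add] at *
      omega
    · right; rw [Set.mem_singleton_iff] at *; rw [k]; rfl
  all_goals
    simp only [Prod.snd_add, X, Prod.fst_add] at *
    omega

theorem evTr_rho {P : Set (V → Bool) → ℝ} (hP : Law P) {w h lo hi : ℤ} :
    P (evTr 0 0 w h lo hi) ≤ P (evTr 0 0 w h (-hi) (-lo)) := by
  refine hP.le_map rho rho_aut (LI_evTr _ _ _ _ _ _) ?_
  have hB : ∀ v ∈ BoxC 0 0 w h, rho v ∈ BoxC 0 0 w h := by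
    intro v hv
    simp only [BoxC, Set.mem_ofPred_eq, X_rho] at *
    simp only [rho, Equiv.coe_fn_mk]
    omega
  rintro ξ ⟨a, b, h0, h1, h2, h3, h4, h5⟩
  refine ⟨rho a, rho b, ⟨hB _ h0.1, h0.2⟩,
    h1.map rho (fun u v => (rho_aut u v).2) ?_, ?_, ?_, ?_, ?_⟩
  · rintro u (⟨⟨k1, k2⟩, k3⟩ | k)
    · refine Or.inl ⟨⟨hB _ k1, k2⟩, ?_⟩
      simp only [Set.mem_ofPred_eq, X_rho] at *
      exact k3
    · right; rw [Set.mem_singleton_iff] at *; rw [k]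
  · rwa [X_rho]
  · rwa [X_rho]
  · simp only [rho, Equiv.coe_fn_mk]; omega
  · simp only [rho, Equiv.coe_fn_mk]; omega

/-! ### Conversion to crossings -/

theorem J.toFun {T : Set V} {a b : V} (h : J T a b) : ∃ (k : ℕ) (f : ℕ → V), f 0 = a ∧ f k = b ∧
    (∀ i ≤ k, f i ∈ T) ∧ ∀ i < k, TriAdj (f i) (f (i + 1)) := by
  refine h.ind (C := fun b => ∃ (k : ℕ) (f : ℕ → V), f 0 = a ∧ f k = b ∧
    (∀ i ≤ k, f i ∈ T) ∧ ∀ i < k, TriAdj (f i) (f (i + 1))) ?_ ?_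
  · exact ⟨0, fun _ => a, rfl, rfl, fun _ _ => h.left, by simp⟩
  · rintro u v _ ⟨k, f, h1, h2, h3, h4⟩ huv hv
    refine ⟨k + 1, fun i => if i ≤ k then f i else v, by simp [h1], by simp, ?_, ?_⟩
    · intro i hi
      by_cases hik : i ≤ k
      · simp only [hik, if_true]; exact h3 i hik
      · simp only [hik, if_false]; exact hv
    · intro i hi
      by_cases hik : i < k
      · have e1 : i ≤ k := by omega
        have e2 : i + 1 ≤ k := by omega
        simp only [e1, e2, if_true]; exact h4 i hik
      · obtain rfl : i = k := by omega
        simp only [le_refl, if_true, Nat.not_succ_le_self, if_false, h2]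
        exact huv

theorem vertBC_of {ξ : V → Bool} {n m : ℕ} {c d : V} (h : J (Rect n m ∩ blk ξ) c d)
    (hc : c.2 = m) (hd : d.2 = 0) : ξ ∈ VertBC TriAdj n m := by
  obtain ⟨k, f, h1, h2, h3, h4⟩ := h.toFun
  refine ⟨k, fun i => f i, ?_, ?_, ?_, ?_⟩
  · intro i
    exact h3 i (by omega)
  · intro i
    exact h4 i i.2
  · refine ⟨?_, ?_⟩
    · simp only [Fin.val_zero, h1]; exact h.left.1
    · simp only [Fin.val_zero, h1]; exact hc
  · refine ⟨?_, ?_⟩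
    · simp only [Fin.val_last, h2]; exact h.right.1
    · simp only [Fin.val_last, h2]; exact hd


theorem evPV_le {P : Set (V → Bool) → ℝ} (hP : Law P) {x0 y0 : ℤ} {n m : ℕ} :
    P (evPV x0 (x0 + n) y0 (y0 + m)) ≤ P (VertBC TriAdj n m) := by
  refine hP.le_map (trn (-x0, -y0)) (trn_aut _) (LI_evPV _ _ _ _) ?_
  rintro ξ ⟨c, d, h1, h2, h3⟩
  have h4 : J (Rect n m ∩ blk ξ) _ _ :=
    h1.map (trn (-x0, -y0)) (fun u v => ((trn_aut _) u v).2) (by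
      rintro u ⟨k1, k2⟩
      refine ⟨?_, k2⟩
      simp only [Par, Rect, Set.mem_ofPred_eq, trn, Equiv.coe_addRight, Prod.fst_add,
        Prod.snd_add] at *
      omega)
  refine vertBC_of h4 ?_ ?_ <;>
  · simp only [trn, Equiv.coe_addRight, Prod.snd_add]
    omega

theorem evPH_le_evPV {P : Set (V → Bool) → ℝ} (hP : Law P) {x0 y0 x0' y0' : ℤ} {n m : ℕ} :
    P (evPH x0 (x0 + m) y0 (y0 + n)) ≤ P (evPV x0' (x0' + n) y0' (y0' + m)) := by
  refine hP.le_map (swp.trans (trn (x0' - y0, y0' - x0))) (swp_aut.trans (trn_aut _))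
    (LI_evPH _ _ _ _) ?_
  rintro ξ ⟨c, d, h1, h2, h3⟩
  have h4 : J (Par x0' (x0' + n) y0' (y0' + m) ∩ blk ξ) _ _ :=
    h1.map (swp.trans (trn (x0' - y0, y0' - x0)))
      (fun u v => ((swp_aut.trans (trn_aut _)) u v).2) (by
      rintro u ⟨k1, k2⟩
      refine ⟨?_, k2⟩
      simp only [Par, Set.mem_ofPred_eq, trn, swp, Equiv.coe_addRight, Prod.fst_add,
        Prod.snd_add, Equiv.trans_apply, Equiv.prodComm_apply, Prod.fst_swap, Prod.snd_swap] at *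
      omega)
  refine ⟨_, _, h4.symm, ?_, ?_⟩ <;>
  · simp only [trn, swp, Equiv.coe_addRight, Prod.snd_add, Equiv.trans_apply,
      Equiv.prodComm_apply, Prod.snd_swap]
    omega

theorem evPV_le_evPH {P : Set (V → Bool) → ℝ} (hP : Law P) {x0 y0 x0' y0' : ℤ} {n m : ℕ} :
    P (evPV x0 (x0 + n) y0 (y0 + m)) ≤ P (evPH x0' (x0' + m) y0' (y0' + n)) := by
  refine hP.le_map (swp.trans (trn (x0' - y0, y0' - x0))) (swp_aut.trans (trn_aut _))
    (LI_evPV _ _ _ _) ?_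
  rintro ξ ⟨c, d, h1, h2, h3⟩
  have h4 : J (Par x0' (x0' + m) y0' (y0' + n) ∩ blk ξ) _ _ :=
    h1.map (swp.trans (trn (x0' - y0, y0' - x0)))
      (fun u v => ((swp_aut.trans (trn_aut _)) u v).2) (by
      rintro u ⟨k1, k2⟩
      refine ⟨?_, k2⟩
      simp only [Par, Set.mem_ofPred_eq, trn, swp, Equiv.coe_addRight, Prod.fst_add,
        Prod.snd_add, Equiv.trans_apply, Equiv.prodComm_apply, Prod.fst_swap, Prod.snd_swap] at *
      omega)
  refine ⟨_, _, h4.symm, ?_, ?_⟩ <;>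
  · simp only [trn, swp, Equiv.coe_addRight, Prod.fst_add, Equiv.trans_apply,
      Equiv.prodComm_apply, Prod.fst_swap]
    omega

/-- Self-duality for rhombi. -/
theorem rhombus {P : Set (V → Bool) → ℝ} (hP : Law P) {x0 y0 : ℤ} (n : ℕ) : 1 / 2 ≤ P (evPH x0 (x0 + n) y0 (y0 + n)) := by
  have h1 : (1 : ℝ) ≤ P (evPH x0 (x0 + n) y0 (y0 + n)) + P (evPV x0 (x0 + n) y0 (y0 + n)) := by
    rw [← hP.univ, ← hP.flip (evPV x0 (x0 + n) y0 (y0 + n)) (LI_evPV _ _ _ _).1]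
    refine le_trans (hP.mono _ _ ?_) (hP.union_le _ _)
    intro ξ _
    rcases hex (blk ξ) (x0 := x0) (x1 := x0 + n) (y0 := y0) (y1 := y0 + n) (by omega) (by omega)
      with h | ⟨c, d, h, h2, h3⟩
    · left
      exact h
    · right
      refine ⟨c, d, h.mono ?_, h2, h3⟩
      rintro v ⟨k1, k2⟩
      refine ⟨k1, ?_⟩
      simpa [blk] using k2
  have h2 : P (evPV x0 (x0 + n) y0 (y0 + n)) ≤ P (evPH x0 (x0 + n) y0 (y0 + n)) :=
    evPV_le_evPH hP
  linarith

/-- Self-duality for boxes. -/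
theorem box_dual {P : Set (V → Bool) → ℝ} (hP : Law P) {w h : ℤ} (hw : 1 ≤ w) (hh : 0 ≤ h) :
    1 ≤ P (evL 0 0 w h (-w + 1) (w - 1)) + P (evV 0 0 w h) := by
  rw [← hP.univ, ← hP.flip (evV 0 0 w h) (LI_evV _ _ _ _).1]
  refine le_trans (hP.mono _ _ ?_) (hP.union_le _ _)
  intro ξ _
  rcases hex (blk ξ ∪ {v | X v < -w ∨ w < X v}) (x0 := -(w + h)) (x1 := w + h) (y0 := -h)
    (y1 := h) (by omega) (by omega) with ⟨a, b, h1, h2, h3⟩ | ⟨c, d, h1, h2, h3⟩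
  · left
    have ha := h1.left.1
    have hb := h1.right.1
    simp only [Par, Set.mem_ofPred_eq] at ha hb
    obtain ⟨a', b', g1, g2, g3⟩ := trim hw h1 (by simp only [X]; omega) (by simp only [X]; omega)
    refine ⟨a', b', g1.mono ?_, by omega, by omega⟩
    rintro v ⟨⟨k1, k2⟩, k3⟩
    simp only [Par, BoxC, Set.mem_ofPred_eq] at *
    refine ⟨⟨by omega, by omega, by omega, by omega⟩, ?_⟩
    rcases k2 with k2 | k2
    · exact k2
    · simp only [Set.mem_ofPred_eq] at k2; omega
  · right
    refine ⟨c, d, h1.mono ?_, by omega, by omega⟩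
    rintro v ⟨k1, k2⟩
    simp only [Par, BoxC, Set.mem_ofPred_eq, blk, Set.mem_compl_iff, Set.mem_union, not_or,
      not_lt] at *
    refine ⟨⟨by omega, by omega, by omega, by omega⟩, ?_⟩
    simpa using k2.1

end DaC

namespace DaC

/-- The data available at a scale `h` where the long crossing has small probability. -/
structure Dat (P : Set (V → Bool) → ℝ) (h w α : ℤ) : Prop where
  hw1 : h ≤ w
  hw2 : w ≤ 8 * h
  hα0 : 0 ≤ α
  hα1 : α ≤ h
  hV : 1 / 2 ≤ P (evV 0 0 w h)
  hT1 : 1 / 8 ≤ P (evTr 0 0 w h α h)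
  hT2 : 1 / 8 ≤ P (evTr 0 0 w h 0 α)

theorem wide_success {P : Set (V → Bool) → ℝ} (hP : Law P) (h : ℕ) (hh : 1 ≤ h) :
    P (evL 0 0 (8 * h) h (-(8 * h) + 1) (8 * h - 1)) ≤ P (VertBC TriAdj (2 * h) (3 * (2 * h))) := by
  have e1 : P (evPH (-(3 * h)) (-(3 * h) + (3 * (2 * h) : ℕ)) (-h) (-h + (2 * h : ℕ))) ≤
      P (VertBC TriAdj (2 * h) (3 * (2 * h))) :=
    (evPH_le_evPV hP (x0' := 0) (y0' := 0)).trans (evPV_le hP)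
  refine le_trans (hP.mono _ _ ?_) e1
  rintro ξ ⟨a, b, h1, h2, h3⟩
  have ha := h1.left.1
  have hb := h1.right.1
  simp only [BoxC, Set.mem_ofPred_eq, X] at ha hb h2 h3
  obtain ⟨a', b', g1, g2, g3⟩ := trimx (x0 := -(3 * h)) (x1 := -(3 * h) + (3 * (2 * h) : ℕ))
    (by push_cast; omega) h1 (by omega) (by push_cast; omega)
  refine ⟨a', b', g1.mono ?_, g2, g3⟩
  rintro v ⟨⟨k1, k2⟩, k3⟩
  simp only [BoxC, Par, Set.mem_ofPred_eq] at *
  refine ⟨⟨by omega, by omega, by omega, by push_cast; omega⟩, k2⟩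

theorem first_bad (f : ℤ → ℝ) (a b : ℤ) (hab : a ≤ b) (ha : 1 / 2 ≤ f a) (hb : f b < 1 / 2) :
    ∃ w, a < w ∧ w ≤ b ∧ 1 / 2 ≤ f (w - 1) ∧ f w < 1 / 2 := by
  by_contra hc
  push Not at hc
  have : ∀ n : ℕ, a + n ≤ b → 1 / 2 ≤ f (a + n) := by
    intro n
    induction n with
    | zero => intro _; simpa using ha
    | succ n ih =>
      intro hn
      push_cast at *
      refine hc _ (by omega) (by omega) ?_
      have := ih (by omega)
      convert this using 2
      ring
  have := this (b - a).toNat (by omega)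
  rw [show a + ((b - a).toNat : ℤ) = b by omega] at this
  linarith

theorem evL_narrow {P : Set (V → Bool) → ℝ} (hP : Law P) (h : ℕ) (hh : 3 ≤ h) :
    1 / 2 ≤ P (evL 0 0 (h - 1) h (-(h - 1) + 1) (h - 1 - 1)) := by
  refine (rhombus hP (x0 := -h) (y0 := -h) (2 * h)).trans (hP.mono _ _ ?_)
  rintro ξ ⟨a, b, h1, h2, h3⟩
  have ha := h1.left.1
  have hb := h1.right.1
  simp only [Par, Set.mem_ofPred_eq] at ha hb
  push_cast at *
  obtain ⟨a', b', g1, g2, g3⟩ := trim (w := h - 1) (by omega) h1 (by simp only [X]; omega)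
    (by simp only [X]; omega)
  refine ⟨a', b', g1.mono ?_, by omega, by omega⟩
  rintro v ⟨⟨k1, k2⟩, k3⟩
  simp only [BoxC, Par, Set.mem_ofPred_eq] at *
  refine ⟨⟨by omega, by omega, by omega, by omega⟩, k2⟩

theorem evTr_of_evL {P : Set (V → Bool) → ℝ} (hP : Law P) {w h : ℤ} (hw : 4 ≤ w) :
    P (evL 0 0 (w - 1) h (-(w - 1) + 1) (w - 1 - 1)) ≤ 2 * P (evTr 0 0 w h 0 h) := by
  have e1 : P (evTr 0 0 w h (-h) (-0)) ≤ P (evTr 0 0 w h 0 h) := by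
    have := evTr_rho hP (w := w) (h := h) (lo := -h) (hi := -0)
    simpa using this
  have e2 : P (evL 0 0 (w - 1) h (-(w - 1) + 1) (w - 1 - 1)) ≤
      P (evTr 0 0 w h 0 h ∪ evTr 0 0 w h (-h) (-0)) := by
    refine hP.mono _ _ ?_
    rintro ξ ⟨a, b, h1, h2, h3⟩
    obtain ⟨c, d, g1, g2, g3, g4⟩ := h1.exit (R := {v | X v < w - 2})
      (by simp only [Set.mem_ofPred_eq]; omega) (by simp only [Set.mem_ofPred_eq]; omega)
    have hd := g3.1
    have hBB : ∀ v ∈ BoxC 0 0 (w - 1) h, v ∈ BoxC 0 0 w h := by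
      intro v hv
      simp only [BoxC, Set.mem_ofPred_eq] at *
      omega
    have hJ : J ((BoxC 0 0 w h ∩ blk ξ ∩ {v | X v < 0 + w - 2}) ∪ {d}) a d := by
      refine J.tail (g1.mono ?_) g2 (Or.inr rfl)
      rintro v ⟨⟨k1, k2⟩, k3⟩
      refine Or.inl ⟨⟨hBB v k1, k2⟩, ?_⟩
      simp only [Set.mem_ofPred_eq] at *
      omega
    simp only [BoxC, Set.mem_ofPred_eq] at hd g4
    by_cases hs : 0 ≤ d.2
    · exact Or.inl ⟨a, d, ⟨hBB _ g3.1, g3.2⟩, hJ, by omega, by omega, by omega, by omega⟩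
    · exact Or.inr ⟨a, d, ⟨hBB _ g3.1, g3.2⟩, hJ, by omega, by omega, by omega, by omega⟩
  have e3 := hP.union_le (evTr 0 0 w h 0 h) (evTr 0 0 w h (-h) (-0))
  linarith

theorem evTr_split {P : Set (V → Bool) → ℝ} (hP : Law P) {w h a b c : ℤ} :
    P (evTr 0 0 w h a c) ≤ P (evTr 0 0 w h a b) + P (evTr 0 0 w h (b + 1) c) := by
  refine le_trans (hP.mono _ _ ?_) (hP.union_le _ _)
  rintro ξ ⟨l, r, h0, h1, h2, h3, h4, h5⟩
  by_cases hs : r.2 ≤ b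
  · exact Or.inl ⟨l, r, h0, h1, h2, h3, by omega, by omega⟩
  · exact Or.inr ⟨l, r, h0, h1, h2, h3, by omega, by omega⟩

theorem exists_dat {P : Set (V → Bool) → ℝ} (hP : Law P) (h : ℕ) (hh : 4 ≤ h) :
    1 / 2 ≤ P (VertBC TriAdj (2 * h) (3 * (2 * h))) ∨ ∃ w α : ℤ, Dat P h w α := by
  by_cases hs : 1 / 2 ≤ P (evL 0 0 (8 * h) h (-(8 * h) + 1) (8 * h - 1))
  · exact Or.inl (hs.trans (wide_success hP h (by omega)))
  right
  push Not at hs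
  obtain ⟨w, hw1, hw2, hw3, hw4⟩ := first_bad (fun w => P (evL 0 0 w h (-w + 1) (w - 1)))
    (h - 1) (8 * h) (by omega) (evL_narrow hP h (by omega)) hs
  have hV : 1 / 2 ≤ P (evV 0 0 w h) := by
    have := box_dual hP (w := w) (h := h) (by omega) (by omega)
    linarith
  have hT : 1 / 4 ≤ P (evTr 0 0 w h 0 h) := by
    have := evTr_of_evL hP (w := w) (h := h) (by omega)
    linarith
  classical
  let Q : ℕ → Prop := fun k => 1 / 8 ≤ P (evTr 0 0 w h k h)
  have hQ0 : Q 0 := by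
    simp only [Q, Nat.cast_zero]
    linarith
  let α := Nat.findGreatest Q h
  have hα : Q α := Nat.findGreatest_spec (Nat.zero_le h) hQ0
  have hαh : α ≤ h := Nat.findGreatest_le h
  refine ⟨w, α, by omega, by omega, by omega, by exact_mod_cast hαh, hV, hα, ?_⟩
  rcases Nat.lt_or_ge α h with hlt | hge
  · have hn : ¬ Q (α + 1) := Nat.findGreatest_is_greatest (Nat.lt_succ_self α) (by omega)
    have := evTr_split hP (w := w) (h := h) (a := 0) (b := α) (c := h)
    simp only [Q, not_le] at hn
    push_cast at hn
    linarith
  · have : α = h := by omega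
    rw [this]
    linarith

/-- Gluing of four vertical crossings in parallelograms. -/
theorem glue4 {P : Set (V → Bool) → ℝ} (hP : Law P) {x0 y0 : ℤ} {k : ℕ} {δ : ℝ} (hδ : 0 ≤ δ)
    (h : δ ≤ P (evPV x0 (x0 + (2 * k : ℕ)) y0 (y0 + (3 * k : ℕ)))) :
    δ ^ 4 * (1 / 2) ^ 4 ≤ P (VertBC TriAdj (2 * k) (3 * (2 * k))) := by
  let A : ℕ → Set (V → Bool) := fun i =>
    evPV x0 (x0 + (2 * k : ℕ)) (y0 + i * k) (y0 + i * k + (3 * k : ℕ))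
  let C : ℕ → Set (V → Bool) := fun i =>
    evPH x0 (x0 + (2 * k : ℕ)) (y0 + i * k + k) (y0 + i * k + k + (2 * k : ℕ))
  have hA := hP.all_ge A (fun i => LI_evPV _ _ _ _) hδ (fun i => by
    refine h.trans ((evPV_le_evPH hP (x0' := 0) (y0' := 0)).trans (evPH_le_evPV hP))) 4
  have hC := hP.all_ge C (fun i => LI_evPH _ _ _ _) (by norm_num : (0 : ℝ) ≤ 1 / 2)
    (fun i => rhombus hP _) 4
  refine (hP.inter_ge hA.1 hC.1 hA.2 hC.2 (by positivity)).trans ?_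
  refine le_trans (hP.mono _ _ ?_) (evPV_le hP (x0 := x0) (y0 := y0))
  rintro ξ ⟨h1, h2⟩
  simp only [Set.mem_ofPred_eq] at h1 h2
  obtain ⟨c0, d0, p0, q0, r0⟩ := h1 0 (by omega)
  obtain ⟨c1, d1, p1, q1, r1⟩ := h1 1 (by omega)
  obtain ⟨c2, d2, p2, q2, r2⟩ := h1 2 (by omega)
  obtain ⟨c3, d3, p3, q3, r3⟩ := h1 3 (by omega)
  obtain ⟨a0, b0, s0, t0, u0⟩ := h2 0 (by omega)
  obtain ⟨a1, b1, s1, t1, u1⟩ := h2 1 (by omega)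
  obtain ⟨a2, b2, s2, t2, u2⟩ := h2 2 (by omega)
  push_cast at *
  have hx : ∀ y1 y2 : ℤ, ∀ v ∈ Par x0 (x0 + 2 * (k : ℤ)) y1 y2 ∩ blk ξ,
    x0 ≤ v.1 ∧ v.1 ≤ x0 + 2 * (k : ℤ) := fun y1 y2 v hv => ⟨hv.1.1, hv.1.2.1⟩
  have hy : ∀ y1 y2 : ℤ, ∀ v ∈ Par x0 (x0 + 2 * (k : ℤ)) y1 y2 ∩ blk ξ,
    y1 ≤ v.2 ∧ v.2 ≤ y2 := fun y1 y2 v hv => hv.1.2.2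
  have m00 := connP s0 p0 (hy _ _) (hx _ _) (by omega) (by omega) (by omega) (by omega)
  have m01 := connP s0 p1 (hy _ _) (hx _ _) (by omega) (by omega) (by omega) (by omega)
  have m11 := connP s1 p1 (hy _ _) (hx _ _) (by omega) (by omega) (by omega) (by omega)
  have m12 := connP s1 p2 (hy _ _) (hx _ _) (by omega) (by omega) (by omega) (by omega)
  have m22 := connP s2 p2 (hy _ _) (hx _ _) (by omega) (by omega) (by omega) (by omega)
  have m23 := connP s2 p3 (hy _ _) (hx _ _) (by omega) (by omega) (by omega) (by omega)
  let U := Par x0 (x0 + 2 * (k : ℤ)) y0 (y0 + 3 * (2 * (k : ℤ))) ∩ blk ξ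
  have sub : ∀ y1 y2 : ℤ, y0 ≤ y1 → y2 ≤ y0 + 3 * (2 * (k : ℤ)) →
      Par x0 (x0 + 2 * (k : ℤ)) y1 y2 ∩ blk ξ ⊆ U := by
    rintro y1 y2 e1 e2 v ⟨⟨k1, k2, k3, k4⟩, k5⟩
    exact ⟨⟨k1, k2, by omega, by omega⟩, k5⟩
  have n00 : J U _ _ := m00.mono (Set.union_subset (sub _ _ (by omega) (by omega))
    (sub _ _ (by omega) (by omega)))
  have n01 : J U _ _ := m01.mono (Set.union_subset (sub _ _ (by omega) (by omega))
    (sub _ _ (by omega) (by omega)))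
  have n11 : J U _ _ := m11.mono (Set.union_subset (sub _ _ (by omega) (by omega))
    (sub _ _ (by omega) (by omega)))
  have n12 : J U _ _ := m12.mono (Set.union_subset (sub _ _ (by omega) (by omega))
    (sub _ _ (by omega) (by omega)))
  have n22 : J U _ _ := m22.mono (Set.union_subset (sub _ _ (by omega) (by omega))
    (sub _ _ (by omega) (by omega)))
  have n23 : J U _ _ := m23.mono (Set.union_subset (sub _ _ (by omega) (by omega))
    (sub _ _ (by omega) (by omega)))
  have p0' : J U _ _ := p0.mono (sub _ _ (by omega) (by omega))
  have f1 : J U c0 c3 := n00.symm.trans (n01.trans (n11.symm.trans (n12.trans (n22.symm.trans n23))))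
  have f2 : J U c3 d0 := f1.symm.trans p0'
  exact ⟨c3, d0, by push_cast; exact f2, by push_cast; omega, by omega⟩

theorem caseA {P : Set (V → Bool) → ℝ} (hP : Law P) (e : ℕ) (he : 1 ≤ e) {w α : ℤ}
    (hD : Dat P ((64 * e : ℕ) : ℤ) w α) (hα : ((64 * e : ℕ) : ℤ) ≤ 4 * α) :
    (((1 / 2) * (1 / 8) * (1 / 8)) ^ 185) ^ 4 * (1 / 2 : ℝ) ^ 4 ≤
      P (VertBC TriAdj (2 * (1024 * e)) (3 * (2 * (1024 * e)))) := by
  obtain ⟨hw1, hw2, hα0, hα1, hV, hT1, hT2⟩ := hD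
  set h : ℤ := ((64 * e : ℕ) : ℤ) with hh
  have hh' : h = 64 * e := by rw [hh]; push_cast; ring
  have hT1' : 1 / 8 ≤ P (evTr 0 0 w h (-h) (-α)) := hT1.trans (evTr_rho hP)
  let d : ℤ := 16 * e
  let A : ℕ → Set (V → Bool) := fun i => evV 0 (i * d) w h ∩ evTr 0 (i * d) w h α h ∩
    evTr 0 (i * d) w h (-h) (-α)
  have par : ∀ i : ℕ, (0 + (i * d : ℤ)) % 2 = 0 := by
    intro i
    rw [show (0 + (i * d : ℤ)) = 2 * (i * (8 * e)) by simp only [d]; ring]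
    omega
  have hA := hP.all_ge A
    (fun i => ((LI_evV _ _ _ _).inter (LI_evTr _ _ _ _ _ _)).inter (LI_evTr _ _ _ _ _ _))
    (by norm_num : (0 : ℝ) ≤ (1 / 2) * (1 / 8) * (1 / 8)) (fun i =>
      hP.inter_ge ((LI_evV _ _ _ _).inter (LI_evTr _ _ _ _ _ _)) (LI_evTr _ _ _ _ _ _)
        (hP.inter_ge (LI_evV _ _ _ _) (LI_evTr _ _ _ _ _ _)
          (hV.trans (evV_le hP (par i))) (hT1.trans (evTr_le hP (par i))) (by norm_num))
        (hT1'.trans (evTr_le hP (par i))) (by norm_num)) 185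
  refine glue4 hP (x0 := -(288 * e)) (y0 := -(64 * e)) (by positivity)
    (hA.2.trans (hP.mono _ _ ?_))
  rintro ξ h1
  simp only [Set.mem_ofPred_eq] at h1
  obtain ⟨a, c, g1, g2, g3⟩ := chainA (B := blk ξ) (w := w) (h := h) (d := d) (α := α) (by omega)
    (by omega) (by omega) 184 (fun i hi => (h1 i (by omega)).1.1)
    (fun i hi => (h1 i (by omega)).1.2) (fun i hi => by
      have : pTr 0 w (i * d + -h) (i * d + -α) (BoxC 0 (i * d) w h ∩ blk ξ) := (h1 i (by omega)).2
      simpa only [sub_eq_add_neg] using this)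
  refine ⟨c, a, g1.symm.mono ?_, by push_cast at *; omega, by omega⟩
  rintro v ⟨k1, k2⟩
  refine ⟨?_, k2⟩
  simp only [Set.mem_ofPred_eq, Par, X] at *
  push_cast at *
  omega

end DaC

namespace DaC

theorem exists_piece {P : Set (V → Bool) → ℝ} (hP : Law P) {w h α s : ℤ} (hs : 0 ≤ s)
    (hα : α ≤ 128 * s) (hT : 1 / 8 ≤ P (evTr 0 0 w h 0 α)) :
    ∃ j, 0 ≤ j ∧ j ≤ α ∧ 1 / 1032 ≤ P (evTr 0 0 w h j (j + s)) := by
  by_contra hc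
  push Not at hc
  have key : ∀ n : ℕ, P (evTr 0 0 w h 0 α) ≤ n * (1 / 1032) + P (evTr 0 0 w h (n * (s + 1)) α) := by
    intro n
    induction n with
    | zero => simp
    | succ n ih =>
      have hn0 : 0 ≤ (n : ℤ) * (s + 1) := by positivity
      by_cases hn : (n : ℤ) * (s + 1) ≤ α
      · have e1 := hc _ hn0 hn
        have e2 := evTr_split hP (w := w) (h := h) (a := n * (s + 1)) (b := n * (s + 1) + s) (c := α)
        have e3 : (n : ℤ) * (s + 1) + s + 1 = ((n + 1 : ℕ) : ℤ) * (s + 1) := by push_cast; ring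
        rw [e3] at e2
        push_cast at *
        linarith
      · have : evTr 0 0 w h (n * (s + 1)) α ⊆ evTr 0 0 w h ((n + 1 : ℕ) * (s + 1)) α := by
          rintro ξ ⟨l, r, h0, h1, h2, h3, h4, h5⟩
          omega
        have := hP.mono _ _ this
        push_cast at *
        linarith
  have k := key 128
  have : evTr 0 0 w h ((128 : ℕ) * (s + 1)) α ⊆ ∅ := by
    rintro ξ ⟨l, r, h0, h1, h2, h3, h4, h5⟩
    push_cast at *
    omega
  have := hP.mono _ _ this
  rw [hP.empty] at this
  push_cast at *
  linarith

theorem long_prob {P : Set (V → Bool) → ℝ} (hP : Law P) {w h w' h' α α' : ℤ}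
    (hh' : 1 ≤ h') (hh : h = 64 * h') (hD : Dat P h w α) (hD' : Dat P h' w' α') (h4 : 4 * α < h)
    (h128 : α ≤ 128 * α') :
    (1 / 2) * ((1 / 1032) * (1 / 8) * (1 / 8)) * ((1 / 1032) * (1 / 8) * (1 / 8)) ≤
      P (evL 0 0 (3 * w) h (-w + 2) (3 * w - 2 * w' - 4)) := by
  obtain ⟨hw1, hw2, hα0, hα1, hV, hT1, hT2⟩ := hD
  obtain ⟨hw1', hw2', hα0', hα1', hV', hT1', hT2'⟩ := hD'
  obtain ⟨j, hj0, hjα, hj⟩ := exists_piece hP hα0' h128 hT2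
  obtain ⟨cx, hg1, hg2, hc⟩ : ∃ cx, w - 1 ≤ cx + w' ∧ cx + w' ≤ w ∧ (cx + j) % 2 = 0 := by
    by_cases hq : (w - w' + j) % 2 = 0
    · exact ⟨w - w', by omega, by omega, hq⟩
    · exact ⟨w - w' - 1, by omega, by omega, by omega⟩
  let T := evTr 0 0 w h j (j + α') ∩ evTr cx j w' h' α' h' ∩ evTr cx j w' h' (-h') (-α')
  have LT : LI T := ((LI_evTr _ _ _ _ _ _).inter (LI_evTr _ _ _ _ _ _)).inter (LI_evTr _ _ _ _ _ _)
  have pT : (1 / 1032) * (1 / 8) * (1 / 8) ≤ P T :=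
    hP.inter_ge ((LI_evTr _ _ _ _ _ _).inter (LI_evTr _ _ _ _ _ _)) (LI_evTr _ _ _ _ _ _)
      (hP.inter_ge (LI_evTr _ _ _ _ _ _) (LI_evTr _ _ _ _ _ _) hj
        (hT1'.trans (evTr_le hP hc)) (by norm_num))
      ((hT1'.trans (evTr_rho hP)).trans (evTr_le hP hc)) (by norm_num)
  have pT' : (1 / 1032) * (1 / 8) * (1 / 8) ≤ P {ξ | ξ ∘ mir cx ∈ T} := by
    rw [hP.inv _ _ (mir_aut cx) LT.1]
    exact pT
  refine (hP.inter_ge ((LI_evV cx j w' h').inter LT) (LT.pre (mir cx))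
    (hP.inter_ge (LI_evV _ _ _ _) LT (hV'.trans (evV_le hP hc)) pT (by norm_num)) pT'
    (by norm_num)).trans (hP.mono _ _ ?_)
  rintro ξ ⟨⟨k1, ⟨k2, k3⟩, k4⟩, ⟨l2, l3⟩, l4⟩
  have k2' : pTr 0 w (0 + j) (0 + (j + α')) (BoxC 0 0 w h ∩ blk ξ) := k2
  have k4' : pTr cx w' (j + -h') (j + -α') (BoxC cx j w' h' ∩ blk ξ) := k4
  have l2' : pTr 0 w (0 + j) (0 + (j + α')) (BoxC 0 0 w h ∩ mir cx ⁻¹' blk ξ) := l2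
  have l4' : pTr cx w' (j + -h') (j + -α') (BoxC cx j w' h' ∩ mir cx ⁻¹' blk ξ) := l4
  rw [← sub_eq_add_neg, ← sub_eq_add_neg] at k4' l4'
  rw [zero_add, zero_add] at k2' l2'
  obtain ⟨a, e, g1, g2, g3⟩ := long_of (by omega) (by omega) (by omega) hg1 hg2 hα0' (by omega) (by omega)
    k1 k2' k3 k4' l2' l3 l4'
  exact ⟨a, e, g1, by omega, by omega⟩

/-- The constant in the second case. -/
noncomputable def cB : ℝ :=
  (((1 / 2) * ((1 / 1032) * (1 / 8) * (1 / 8)) * ((1 / 1032) * (1 / 8) * (1 / 8))) * (1 / 2)) ^ 30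

theorem caseB {P : Set (V → Bool) → ℝ} (hP : Law P) (e : ℕ) (he : 1 ≤ e) {w w' α α' : ℤ}
    (hD : Dat P ((64 * e : ℕ) : ℤ) w α) (hD' : Dat P (e : ℤ) w' α')
    (h4 : 4 * α < ((64 * e : ℕ) : ℤ)) (h128 : α ≤ 128 * α') :
    cB ≤ P (VertBC TriAdj (2 * (64 * e)) (3 * (2 * (64 * e)))) := by
  have hl := long_prob hP (by omega) (by push_cast; ring) hD hD' h4 h128
  obtain ⟨hw1, hw2, hα0, hα1, hV, hT1, hT2⟩ := hD
  obtain ⟨hw1', hw2', hα0', hα1', hV', hT1', hT2'⟩ := hD'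
  set h : ℤ := ((64 * e : ℕ) : ℤ) with hh
  have hh' : h = 64 * e := by rw [hh]; push_cast; ring
  let A : ℕ → Set (V → Bool) := fun i =>
    evL (i * h) 0 (3 * w) h (-w + 2) (3 * w - 2 * w' - 4) ∩ evV (i * h) 0 w h
  have par : ∀ i : ℕ, ((i * h : ℤ) + 0) % 2 = 0 := by
    intro i
    rw [hh', show ((i * (64 * e) : ℤ) + 0) = 2 * (i * (32 * e)) by ring]
    omega
  have hA := hP.all_ge A
    (fun i => (LI_evL _ _ _ _ _ _).inter (LI_evV _ _ _ _))
    (by norm_num : (0 : ℝ) ≤ ((1 / 2) * ((1 / 1032) * (1 / 8) * (1 / 8)) *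
      ((1 / 1032) * (1 / 8) * (1 / 8))) * (1 / 2)) (fun i =>
      hP.inter_ge (LI_evL _ _ _ _ _ _) (LI_evV _ _ _ _)
          (hl.trans (evL_le hP (par i))) (hV.trans (evV_le hP (par i))) (by norm_num)) 30
  have e1 : P (evPH (h) (h + (3 * (2 * (64 * e)) : ℕ)) (-h) (-h + (2 * (64 * e) : ℕ))) ≤
      P (VertBC TriAdj (2 * (64 * e)) (3 * (2 * (64 * e)))) :=
    (evPH_le_evPV hP (x0' := 0) (y0' := 0)).trans (evPV_le hP)
  refine le_trans (hA.2.trans (hP.mono _ _ ?_)) e1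
  rintro ξ h1
  simp only [Set.mem_ofPred_eq] at h1
  obtain ⟨a, c, g1, g2, g3⟩ := chainB (B := blk ξ) (w := w) (h := h) (L := 3 * w - 2 * w' - 4) (by omega)
    29 (fun i hi => by
      obtain ⟨a, b, q1, q2, q3⟩ := (h1 i (by omega)).1
      exact ⟨a, b, q1, by linarith, by linarith⟩) (fun i hi => (h1 i (by omega)).2)
  have ha := g1.left.1
  have hb := g1.right.1
  simp only [Set.mem_ofPred_eq, X] at ha hb g2 g3
  push_cast at *
  obtain ⟨a', b', g1, g2, g3⟩ := trimx (x0 := h) (x1 := h + 3 * (2 * (64 * e)))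
    (by omega) g1 (by omega) (by omega)
  refine ⟨a', b', g1.mono ?_, g2, g3⟩
  rintro v ⟨⟨k1, k2⟩, k3⟩
  simp only [Par, Set.mem_ofPred_eq] at *
  refine ⟨⟨by omega, by omega, by omega, by omega⟩, k2⟩

theorem main_comb {P : Set (V → Bool) → ℝ} (hP : Law P) :
    ∃ c : ℝ, 0 < c ∧ ∀ N : ℕ, ∃ n, N ≤ n ∧ c ≤ P (VertBC TriAdj n (3 * n)) := by
  let cA : ℝ := (((1 / 2) * (1 / 8) * (1 / 8)) ^ 185) ^ 4 * (1 / 2 : ℝ) ^ 4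
  have hcA : 0 < cA := by positivity
  have hcB : 0 < cB := by unfold cB; positivity
  refine ⟨min (1 / 2) (min cA cB), by positivity, ?_⟩
  intro N
  by_contra hc
  push Not at hc
  have hge : ∀ k, N ≤ 64 ^ k → 4 ≤ 64 ^ k → ∃ w α, Dat P ((64 ^ k : ℕ) : ℤ) w α := by
    intro k hk hk4
    rcases exists_dat hP (64 ^ k) hk4 with h | h
    · have := hc (2 * 64 ^ k) (by omega)
      exact absurd (this.trans_le (min_le_left _ _)) (by push Not; exact h)
    · exact h
  have hpow : ∀ k : ℕ, k < 64 ^ k := fun k => Nat.lt_pow_self (by norm_num)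
  have hbig : ∀ k, N + 4 ≤ k → N ≤ 64 ^ k ∧ 4 ≤ 64 ^ k := by
    intro k hk
    have := hpow k
    omega
  have hsmall : ∀ k w α, N + 4 ≤ k → Dat P ((64 ^ (k + 1) : ℕ) : ℤ) w α →
      4 * α < ((64 ^ (k + 1) : ℕ) : ℤ) := by
    intro k w α hk hD
    by_contra hn
    push Not at hn
    have hb := hbig k hk
    rw [pow_succ, mul_comm (64 ^ k)] at hD hn
    have h1 := caseA hP (64 ^ k) (by omega) hD hn
    have h2 := hc (2 * (1024 * 64 ^ k)) (by omega)
    exact absurd (h2.trans_le ((min_le_right _ _).trans (min_le_left _ _))) (by push Not; exact h1)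
  have hgrow : ∀ k w α w' α', N + 4 ≤ k → Dat P ((64 ^ (k + 1) : ℕ) : ℤ) w α →
      Dat P ((64 ^ k : ℕ) : ℤ) w' α' → 128 * α' < α := by
    intro k w α w' α' hk hD hD'
    by_contra hn
    push Not at hn
    have hs := hsmall k w α hk hD
    have hb := hbig k hk
    rw [pow_succ, mul_comm (64 ^ k)] at hD hs
    have h1 := caseB hP (64 ^ k) (by omega) hD hD' hs hn
    have h2 := hc (2 * (64 * 64 ^ k)) (by omega)
    exact absurd (h2.trans_le ((min_le_right _ _).trans (min_le_right _ _))) (by push Not; exact h1)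
  have hall : ∀ m : ℕ, ∃ w α, Dat P ((64 ^ (N + 5 + m) : ℕ) : ℤ) w α ∧ 128 ^ m ≤ α := by
    intro m
    induction m with
    | zero =>
      obtain ⟨w, α, hD⟩ := hge (N + 4) (hbig _ le_rfl).1 (hbig _ le_rfl).2
      obtain ⟨w', α', hD'⟩ := hge (N + 4 + 1) (hbig _ (by omega)).1 (hbig _ (by omega)).2
      refine ⟨w', α', hD', ?_⟩
      have := hgrow _ _ _ _ _ le_rfl hD' hD
      have := hD.hα0
      simp
      omega
    | succ m ih =>
      obtain ⟨w, α, hD, hα⟩ := ih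
      obtain ⟨w', α', hD'⟩ := hge (N + 5 + m + 1) (hbig _ (by omega)).1 (hbig _ (by omega)).2
      refine ⟨w', α', hD', ?_⟩
      have := hgrow _ _ _ _ _ (by omega) hD' hD
      rw [pow_succ]
      omega
  obtain ⟨w, α, hD, hα⟩ := hall (6 * (N + 5) + 1)
  have h1 := hα.trans hD.hα1
  have h2 : 64 ^ (N + 5 + (6 * (N + 5) + 1)) < 128 ^ (6 * (N + 5) + 1) := by
    rw [show (64 : ℕ) = 2 ^ 6 by norm_num, show 128 = 2 ^ 7 by norm_num, ← pow_mul, ← pow_mul]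
    exact Nat.pow_lt_pow_right (by norm_num) (by omega)
  have h3 : (128 ^ (6 * (N + 5) + 1) : ℕ) ≤ 64 ^ (N + 5 + (6 * (N + 5) + 1)) := by
    exact_mod_cast h1
  omega

end DaC

namespace DaC

/-! ### Positive association of the finite model -/

open Classical in
/-- Colourings constant along the edges of `S`, equal to `ζ` off `U`. -/
noncomputable def CF {W ι : Type} (s t : ι → W) (S : Finset ι) (U : Finset W) (ζ : W → Bool) :
    Finset (W → Bool) :=
  (U.powerset.image (fun (T : Finset W) (v : W) => if v ∈ U then decide (v ∈ T) else ζ v)).filter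
    (fun ξ => ∀ e ∈ S, ξ (s e) = ξ (t e))

theorem mem_CF {W ι : Type} {s t : ι → W} {S : Finset ι} {U : Finset W} {ζ ξ : W → Bool} :
    ξ ∈ CF s t S U ζ ↔ (∀ e ∈ S, ξ (s e) = ξ (t e)) ∧ ∀ v, v ∉ U → ξ v = ζ v := by
  classical
  unfold CF
  rw [Finset.mem_filter, Finset.mem_image, and_comm]
  refine and_congr_right (fun _ => ⟨?_, fun h => ?_⟩)
  · rintro ⟨T, _, rfl⟩ v hv
    simp [hv]
  · refine ⟨U.filter (fun v => ξ v = true), by simp, ?_⟩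
    funext v
    by_cases hv : v ∈ U
    · simp [hv]
    · simp [hv, h v hv]

/-- Averages. -/
noncomputable def av {X : Type} (C : Finset X) (f : X → ℝ) : ℝ := (∑ x ∈ C, f x) / C.card

theorem half_aux (A B n : ℝ) (hn : n ≠ 0) :
    (A + B) / (n + n) = (1 / 2) * (A / n) + (1 / 2) * (B / n) := by
  field_simp
  ring

theorem flip_avg {W ι : Type} {s t : ι → W} {S : Finset ι} {U : Finset W} {ζ : W → Bool} {w : W}
    (C Cp Cm : Finset (W → Bool)) (hC : C = CF s t S U ζ)
    (hCp : ∀ ξ, ξ ∈ Cp ↔ ξ ∈ C ∧ ξ w = true) (hCm : ∀ ξ, ξ ∈ Cm ↔ ξ ∈ C ∧ ξ w = false)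
    (hp : Cp.Nonempty) (hm : Cm.Nonempty) (f : (W → Bool) → ℝ) :
    av C f = (1 / 2) * av Cp f + (1 / 2) * av Cm f ∧ (Monotone f → av Cm f ≤ av Cp f) := by
  classical
  obtain ⟨ξp, hξp⟩ := hp
  obtain ⟨ξm, hξm⟩ := hm
  let K : Set W := {v | ∀ ξ : W → Bool, (∀ e ∈ S, ξ (s e) = ξ (t e)) → ξ v = ξ w}
  have hwK : w ∈ K := fun ξ _ => rfl
  have hK : ∀ e ∈ S, (s e ∈ K ↔ t e ∈ K) := by
    intro e he
    constructor
    · intro h ξ hξ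
      rw [← hξ e he]; exact h ξ hξ
    · intro h ξ hξ
      rw [hξ e he]; exact h ξ hξ
  have hmC : ∀ ξ, ξ ∈ C ↔ (∀ e ∈ S, ξ (s e) = ξ (t e)) ∧ ∀ v, v ∉ U → ξ v = ζ v := by
    intro ξ; rw [hC, mem_CF]
  have hKU : ∀ v ∈ K, v ∈ U := by
    intro v hv
    by_contra hvU
    have p1 := (hCp ξp).1 hξp
    have m1 := (hCm ξm).1 hξm
    have p2 := (hmC _).1 p1.1
    have m2 := (hmC _).1 m1.1
    have p3 := hv _ p2.1
    have m3 := hv _ m2.1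
    rw [p2.2 v hvU, p1.2] at p3
    rw [m2.2 v hvU, m1.2, p3] at m3
    simp at m3
  let φ : (W → Bool) → (W → Bool) := fun ξ v => if v ∈ K then !ξ v else ξ v
  have hφφ : ∀ ξ, φ (φ ξ) = ξ := by
    intro ξ; funext v
    by_cases hv : v ∈ K <;> simp [φ, hv]
  have hφC : ∀ ξ ∈ C, φ ξ ∈ C := by
    intro ξ hξ
    rw [hmC] at *
    refine ⟨fun e he => ?_, fun v hv => ?_⟩
    · have := hK e he
      have h2 := hξ.1 e he
      by_cases hs : s e ∈ K
      · simp [φ, hs, this.1 hs, h2]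
      · have ht : t e ∉ K := fun h => hs (this.2 h)
        simp [φ, hs, ht, h2]
    · have : v ∉ K := fun h => hv (hKU v h)
      simp [φ, this, hξ.2 v hv]
  have hφw : ∀ ξ, φ ξ w = !ξ w := by intro ξ; simp [φ, hwK]
  have hpm : ∀ ξ ∈ Cp, φ ξ ∈ Cm := by
    intro ξ h
    rw [hCp] at h
    rw [hCm]
    exact ⟨hφC _ h.1, by rw [hφw, h.2]; rfl⟩
  have hmp : ∀ ξ ∈ Cm, φ ξ ∈ Cp := by
    intro ξ h
    rw [hCm] at h
    rw [hCp]
    exact ⟨hφC _ h.1, by rw [hφw, h.2]; rfl⟩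
  have hcard : Cm.card = Cp.card :=
    Finset.card_nbij' φ φ hmp hpm (fun ξ _ => hφφ ξ) (fun ξ _ => hφφ ξ)
  have hsum : ∑ ξ ∈ Cm, f (φ ξ) = ∑ ξ ∈ Cp, f ξ :=
    Finset.sum_nbij' φ φ hmp hpm (fun ξ _ => hφφ ξ) (fun ξ _ => hφφ ξ) (fun ξ _ => rfl)
  have hunion : C = Cp ∪ Cm := by
    ext ξ
    rw [Finset.mem_union, hCp, hCm]
    cases h : ξ w <;> simp
  have hdisj : Disjoint Cp Cm := by
    rw [Finset.disjoint_left]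
    intro ξ h1 h2
    rw [hCp] at h1
    rw [hCm] at h2
    rw [h1.2] at h2
    simp at h2
  have hpos : (0 : ℝ) < Cp.card := by
    exact_mod_cast Finset.card_pos.2 ⟨ξp, hξp⟩
  constructor
  · unfold av
    rw [hunion, Finset.sum_union hdisj, Finset.card_union_of_disjoint hdisj, hcard]
    rw [Nat.cast_add]
    exact half_aux _ _ _ hpos.ne'
  · intro hf
    unfold av
    rw [hcard, ← hsum]
    refine div_le_div_of_nonneg_right (Finset.sum_le_sum (fun ξ hξ => hf ?_)) hpos.le
    intro v
    by_cases hv : v ∈ K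
    · have h1 := (hCm ξ).1 hξ
      have h2 := hv ξ ((hmC ξ).1 h1.1).1
      rw [h1.2] at h2
      rw [h2]
      exact Bool.false_le _
    · simp [φ, hv]

/-- Weight of an open edge set. -/
noncomputable def wt {ι : Type} [DecidableEq ι] (q : ι → ℝ) (D S : Finset ι) : ℝ :=
  ∏ e ∈ D, if e ∈ S then q e else 1 - q e

/-- The finite model. -/
noncomputable def EE {W ι : Type} [DecidableEq ι] (q : ι → ℝ) (s t : ι → W) (D : Finset ι)
    (U : Finset W) (ζ : W → Bool) (f : (W → Bool) → ℝ) : ℝ :=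
  ∑ S ∈ D.powerset, wt q D S * av (CF s t S U ζ) f

theorem wt_nonneg {ι : Type} [DecidableEq ι] {q : ι → ℝ} (hq : ∀ e, 0 ≤ q e ∧ q e ≤ 1)
    (D S : Finset ι) : 0 ≤ wt q D S := by
  refine Finset.prod_nonneg (fun e _ => ?_)
  have := hq e
  split_ifs <;> linarith

theorem wt_insert_open {ι : Type} [DecidableEq ι] {q : ι → ℝ} {D S : Finset ι} {e : ι}
    (he : e ∉ D) : wt q (insert e D) (insert e S) = q e * wt q D S := by
  unfold wt
  rw [Finset.prod_insert he]
  simp only [Finset.mem_insert_self, if_true]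
  congr 1
  refine Finset.prod_congr rfl (fun x hx => ?_)
  have : x ≠ e := fun h => he (h ▸ hx)
  simp [this]

theorem wt_insert_closed {ι : Type} [DecidableEq ι] {q : ι → ℝ} {D S : Finset ι} {e : ι}
    (he : e ∉ D) (hS : S ⊆ D) : wt q (insert e D) S = (1 - q e) * wt q D S := by
  unfold wt
  rw [Finset.prod_insert he]
  have : e ∉ S := fun h => he (hS h)
  simp [this]

theorem EE_insert {W ι : Type} [DecidableEq ι] (q : ι → ℝ) (s t : ι → W) {D : Finset ι}
    (U : Finset W) (ζ : W → Bool) (f : (W → Bool) → ℝ) {e : ι} (he : e ∉ D) :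
    EE q s t (insert e D) U ζ f =
      q e * (∑ S ∈ D.powerset, wt q D S * av (CF s t (insert e S) U ζ) f) +
      (1 - q e) * EE q s t D U ζ f := by
  unfold EE
  rw [Finset.sum_powerset_insert he, add_comm, Finset.mul_sum, Finset.mul_sum]
  congr 1
  · refine Finset.sum_congr rfl (fun S hS => ?_)
    rw [wt_insert_open he]; ring
  · refine Finset.sum_congr rfl (fun S hS => ?_)
    rw [wt_insert_closed he (Finset.mem_powerset.1 hS)]; ring

/-- Positive association. -/
def PA {W : Type} (E : ((W → Bool) → ℝ) → ℝ) : Prop :=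
  ∀ f g : (W → Bool) → ℝ, Monotone f → Monotone g → E f * E g ≤ E (fun ξ => f ξ * g ξ)

theorem PA_mix {W : Type} {E E1 E2 : ((W → Bool) → ℝ) → ℝ} {x : ℝ} (hx0 : 0 ≤ x) (hx1 : x ≤ 1)
    (hE : ∀ f, E f = x * E1 f + (1 - x) * E2 f) (h1 : PA E1) (h2 : PA E2)
    (hc : (∀ f, Monotone f → E1 f ≤ E2 f) ∨ (∀ f, Monotone f → E2 f ≤ E1 f)) : PA E := by
  intro f g hf hg
  rw [hE, hE, hE]
  have a1 := h1 f g hf hg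
  have a2 := h2 f g hf hg
  have hprod : 0 ≤ (E1 f - E2 f) * (E1 g - E2 g) := by
    rcases hc with hc | hc
    · exact mul_nonneg_of_nonpos_of_nonpos (by linarith [hc f hf]) (by linarith [hc g hg])
    · exact mul_nonneg (by linarith [hc f hf]) (by linarith [hc g hg])
  have b1 := mul_le_mul_of_nonneg_left a1 hx0
  have b2 := mul_le_mul_of_nonneg_left a2 (by linarith : 0 ≤ 1 - x)
  have b3 := mul_nonneg (mul_nonneg hx0 (by linarith : 0 ≤ 1 - x)) hprod
  nlinarith

theorem EE_half {W ι : Type} [DecidableEq ι] [DecidableEq W] (q : ι → ℝ) (hq : ∀ e, 0 ≤ q e ∧ q e ≤ 1)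
    (s t : ι → W) (D : Finset ι) (U : Finset W) (ζ : W → Bool) {u : W} (hu : u ∈ U)
    (h : ∀ S ⊆ D, ∀ c, (CF s t S (U.erase u) (Function.update ζ u c)).Nonempty) (f : (W → Bool) → ℝ) :
    EE q s t D U ζ f = (1 / 2) * EE q s t D (U.erase u) (Function.update ζ u true) f +
      (1 - 1 / 2) * EE q s t D (U.erase u) (Function.update ζ u false) f ∧
    (Monotone f → EE q s t D (U.erase u) (Function.update ζ u false) f ≤
      EE q s t D (U.erase u) (Function.update ζ u true) f) := by
  have hmem : ∀ S c ξ, ξ ∈ CF s t S (U.erase u) (Function.update ζ u c) ↔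
      ξ ∈ CF s t S U ζ ∧ ξ u = c := by
    intro S c ξ
    rw [mem_CF, mem_CF, and_assoc]
    refine and_congr_right (fun _ => ⟨fun h => ⟨fun v hv => ?_, ?_⟩, fun h v hv => ?_⟩)
    · have hvu : v ≠ u := fun e => hv (e ▸ hu)
      have := h v (fun hh => hv (Finset.mem_of_mem_erase hh))
      rwa [Function.update_of_ne hvu] at this
    · have := h u (by simp)
      simpa using this
    · by_cases hvu : v = u
      · subst hvu; simpa using h.2
      · rw [Function.update_of_ne hvu]
        exact h.1 v (fun hh => hv (Finset.mem_erase.2 ⟨hvu, hh⟩))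
  have hfl := fun S (hS : S ⊆ D) => flip_avg (w := u) (CF s t S U ζ) _ _ rfl (hmem S true)
    (hmem S false) (h S hS true) (h S hS false) f
  constructor
  · unfold EE
    rw [Finset.mul_sum, Finset.mul_sum, ← Finset.sum_add_distrib]
    refine Finset.sum_congr rfl (fun S hS => ?_)
    rw [(hfl S (Finset.mem_powerset.1 hS)).1]; ring
  · intro hf
    exact Finset.sum_le_sum (fun S hS => mul_le_mul_of_nonneg_left
      ((hfl S (Finset.mem_powerset.1 hS)).2 hf) (wt_nonneg hq _ _))

theorem CF_nonempty {W ι : Type} {s t : ι → W} {D S : Finset ι} (hS : S ⊆ D)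
    {U : Finset W} {ζ : W → Bool} {c : Bool}
    (h : ∀ e ∈ D, (s e ∉ U → ζ (s e) = c) ∧ (t e ∉ U → ζ (t e) = c)) :
    (CF s t S U ζ).Nonempty := by
  classical
  refine ⟨fun v => if v ∈ U then c else ζ v, ?_⟩
  rw [mem_CF]
  refine ⟨fun e he => ?_, fun v hv => by simp [hv]⟩
  have := h e (hS he)
  have h1 : (if s e ∈ U then c else ζ (s e)) = c := by
    split_ifs with hh
    · rfl
    · exact this.1 hh
  have h2 : (if t e ∈ U then c else ζ (t e)) = c := by
    split_ifs with hh
    · rfl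
    · exact this.2 hh
  rw [h1, h2]

theorem EE_PA {W ι : Type} [DecidableEq ι] [DecidableEq W] (q : ι → ℝ) (hq : ∀ e, 0 ≤ q e ∧ q e ≤ 1)
    (s t : ι → W) : ∀ (n : ℕ) (D : Finset ι) (U : Finset W) (ζ : W → Bool) (c : Bool),
    D.card + U.card = n → (∀ e ∈ D, (s e ∉ U → ζ (s e) = c) ∧ (t e ∉ U → ζ (t e) = c)) →
    PA (EE q s t D U ζ) := by
  intro n
  induction n using Nat.strong_induction_on with
  | _ n ih =>
  intro D U ζ c hn hI
  by_cases h1 : ∃ e ∈ D, s e ∉ U ∧ t e ∉ U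
  · obtain ⟨e, he, hs, ht⟩ := h1
    obtain ⟨D', heD', rfl⟩ : ∃ D', e ∉ D' ∧ insert e D' = D :=
      ⟨D.erase e, by simp, Finset.insert_erase he⟩
    have hh := hI e he
    have hEE : EE q s t (insert e D') U ζ = EE q s t D' U ζ := by
      funext f
      rw [EE_insert q s t U ζ f heD']
      have : ∀ S, CF s t (insert e S) U ζ = CF s t S U ζ := by
        intro S
        ext ξ
        rw [mem_CF, mem_CF]
        refine ⟨fun h => ⟨fun x hx => h.1 x (Finset.mem_insert_of_mem hx), h.2⟩,
          fun h => ⟨fun x hx => ?_, h.2⟩⟩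
        rcases Finset.mem_insert.1 hx with rfl | hx
        · rw [h.2 _ hs, h.2 _ ht, hh.1 hs, hh.2 ht]
        · exact h.1 x hx
      simp only [this]
      unfold EE
      ring
    rw [hEE]
    rw [Finset.card_insert_of_notMem heD'] at hn
    exact ih _ (by omega) D' U ζ c rfl (fun x hx => hI x (Finset.mem_insert_of_mem hx))
  by_cases h2 : ∃ e ∈ D, ∃ a w, a ∉ U ∧ w ∈ U ∧ ((a = s e ∧ w = t e) ∨ (a = t e ∧ w = s e))
  · obtain ⟨e, he, a, w, ha, hw, haw⟩ := h2
    obtain ⟨D', heD', rfl⟩ : ∃ D', e ∉ D' ∧ insert e D' = D :=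
      ⟨D.erase e, by simp, Finset.insert_erase he⟩
    have hac : ζ a = c := by
      have := hI e he
      rcases haw with ⟨rfl, rfl⟩ | ⟨rfl, rfl⟩
      · exact this.1 ha
      · exact this.2 ha
    have hI' : ∀ e ∈ D', (s e ∉ U → ζ (s e) = c) ∧ (t e ∉ U → ζ (t e) = c) :=
      fun x hx => hI x (Finset.mem_insert_of_mem hx)
    have hIw : ∀ e ∈ D', (s e ∉ U.erase w → Function.update ζ w c (s e) = c) ∧
        (t e ∉ U.erase w → Function.update ζ w c (t e) = c) := by
      have gen : ∀ v, (v ∉ U → ζ v = c) → v ∉ U.erase w → Function.update ζ w c v = c := by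
        intro v h1 h2
        by_cases hv : v = w
        · subst hv; simp
        · rw [Function.update_of_ne hv]
          exact h1 (fun h => h2 (Finset.mem_erase.2 ⟨hv, h⟩))
      exact fun x hx => ⟨gen _ (hI' x hx).1, gen _ (hI' x hx).2⟩
    have hmem : ∀ S c' ξ, ξ ∈ CF s t S (U.erase w) (Function.update ζ w c') ↔
        ξ ∈ CF s t S U ζ ∧ ξ w = c' := by
      intro S c' ξ
      rw [mem_CF, mem_CF, and_assoc]
      refine and_congr_right (fun _ => ⟨fun h => ⟨fun v hv => ?_, ?_⟩, fun h v hv => ?_⟩)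
      · have hvu : v ≠ w := fun e => hv (e ▸ hw)
        have := h v (fun hh => hv (Finset.mem_of_mem_erase hh))
        rwa [Function.update_of_ne hvu] at this
      · have := h w (by simp)
        simpa using this
      · by_cases hvu : v = w
        · subst hvu; simpa using h.2
        · rw [Function.update_of_ne hvu]
          exact h.1 v (fun hh => hv (Finset.mem_erase.2 ⟨hvu, hh⟩))
    have hopen : ∀ S, CF s t (insert e S) U ζ = CF s t S (U.erase w) (Function.update ζ w c) := by
      intro S
      ext ξ
      rw [hmem, mem_CF, mem_CF]
      constructor
      · rintro ⟨k1, k2⟩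
        refine ⟨⟨fun x hx => k1 x (Finset.mem_insert_of_mem hx), k2⟩, ?_⟩
        have := k1 e (Finset.mem_insert_self _ _)
        rw [← hac, ← k2 a ha]
        rcases haw with ⟨rfl, rfl⟩ | ⟨rfl, rfl⟩
        · exact this.symm
        · exact this
      · rintro ⟨⟨k1, k2⟩, k3⟩
        refine ⟨fun x hx => ?_, k2⟩
        rcases Finset.mem_insert.1 hx with rfl | hx
        · have : ξ a = ξ w := by rw [k2 a ha, hac, k3]
          rcases haw with ⟨rfl, rfl⟩ | ⟨rfl, rfl⟩
          · exact this
          · exact this.symm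
        · exact k1 x hx
    rw [Finset.card_insert_of_notMem heD'] at hn
    have hUw : (U.erase w).card + 1 = U.card := Finset.card_erase_add_one hw
    have hcmp : ∀ S ⊆ D', ∀ f, Monotone f →
        (c = true → av (CF s t S U ζ) f ≤ av (CF s t S (U.erase w) (Function.update ζ w c)) f) ∧
        (c = false → av (CF s t S (U.erase w) (Function.update ζ w c)) f ≤ av (CF s t S U ζ) f) := by
      intro S hS f hf
      have ne := CF_nonempty hS hIw
      by_cases hne : (CF s t S (U.erase w) (Function.update ζ w (!c))).Nonempty
      · cases c with
        | true =>
          have := flip_avg (w := w) (CF s t S U ζ) _ _ rfl (hmem S true) (hmem S false) ne hne f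
          have h3 := this.2 hf
          refine ⟨fun _ => ?_, by simp⟩
          rw [this.1]; linarith
        | false =>
          have := flip_avg (w := w) (CF s t S U ζ) _ _ rfl (hmem S true) (hmem S false) hne ne f
          have h3 := this.2 hf
          refine ⟨by simp, fun _ => ?_⟩
          rw [this.1]; linarith
      · have heq : CF s t S (U.erase w) (Function.update ζ w c) = CF s t S U ζ := by
          ext ξ
          rw [hmem]
          refine ⟨fun h => h.1, fun h => ⟨h, ?_⟩⟩
          by_contra hcon
          refine hne ⟨ξ, (hmem _ _ _).2 ⟨h, ?_⟩⟩
          cases h : ξ w <;> cases c <;> simp_all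
        rw [heq]
        exact ⟨fun _ => le_rfl, fun _ => le_rfl⟩
    refine PA_mix (x := q e) (hq e).1 (hq e).2
      (E1 := EE q s t D' (U.erase w) (Function.update ζ w c)) (E2 := EE q s t D' U ζ) ?_
      (ih _ (by omega) D' _ _ c rfl hIw) (ih _ (by omega) D' _ _ c rfl hI') ?_
    · intro f
      rw [EE_insert q s t U ζ f heD']
      simp only [hopen]
      rfl
    · cases hcc : c with
      | true =>
        right
        intro f hf
        refine Finset.sum_le_sum (fun S hS => mul_le_mul_of_nonneg_left ?_ (wt_nonneg hq _ _))
        have := (hcmp S (Finset.mem_powerset.1 hS) f hf).1 hcc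
        rwa [hcc] at this
      | false =>
        left
        intro f hf
        refine Finset.sum_le_sum (fun S hS => mul_le_mul_of_nonneg_left ?_ (wt_nonneg hq _ _))
        have := (hcmp S (Finset.mem_powerset.1 hS) f hf).2 hcc
        rwa [hcc] at this
  have h3 : ∀ e ∈ D, s e ∈ U ∧ t e ∈ U := by
    intro e he
    by_contra hc
    by_cases hs : s e ∈ U <;> by_cases ht : t e ∈ U
    · exact hc ⟨hs, ht⟩
    · exact h2 ⟨e, he, t e, s e, ht, hs, Or.inr ⟨rfl, rfl⟩⟩
    · exact h2 ⟨e, he, s e, t e, hs, ht, Or.inl ⟨rfl, rfl⟩⟩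
    · exact h1 ⟨e, he, hs, ht⟩
  rcases U.eq_empty_or_nonempty with rfl | ⟨u, hu⟩
  · have hD : D = ∅ := by
      rw [Finset.eq_empty_iff_forall_notMem]
      intro e he
      have := (h3 e he).1
      simp at this
    subst hD
    have hC : CF s t ∅ ∅ ζ = {ζ} := by
      ext ξ
      rw [mem_CF, Finset.mem_singleton]
      simp [funext_iff]
    intro f g _ _
    simp [EE, wt, hC, av]
  · have hIu : ∀ c', ∀ e ∈ D, (s e ∉ U.erase u → Function.update ζ u c' (s e) = c') ∧
        (t e ∉ U.erase u → Function.update ζ u c' (t e) = c') := by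
      have gen : ∀ c' v, v ∈ U → v ∉ U.erase u → Function.update ζ u c' v = c' := by
        intro c' v k1 k2
        have : v = u := by
          by_contra hne
          exact k2 (Finset.mem_erase.2 ⟨hne, k1⟩)
        subst this; simp
      exact fun c' e he => ⟨gen _ _ (h3 e he).1, gen _ _ (h3 e he).2⟩
    have hUw : (U.erase u).card + 1 = U.card := Finset.card_erase_add_one hu
    have hhalf := EE_half q hq s t D U ζ hu (fun S hS c' => CF_nonempty hS (hIu c'))
    exact PA_mix (by norm_num) (by norm_num) (fun f => (hhalf f).1)
      (ih _ (by omega) D _ _ true rfl (hIu true)) (ih _ (by omega) D _ _ false rfl (hIu false))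
      (Or.inr fun f hf => (hhalf f).2 hf)

end DaC

namespace DaC

/-! ### Independence of the labels -/

theorem boolOf_iff (P : Prop) : boolOf P = true ↔ P := by
  unfold boolOf; exact @decide_eq_true_iff P (Classical.propDecidable P)

/-- The fair coin. -/
noncomputable def coin : Measure Bool :=
  (2⁻¹ : ℝ≥0∞) • Measure.dirac true + (2⁻¹ : ℝ≥0∞) • Measure.dirac false

open Classical in
theorem coin_apply (t : Set Bool) : coin t =
    (if true ∈ t then (2⁻¹ : ℝ≥0∞) else 0) + (if false ∈ t then (2⁻¹ : ℝ≥0∞) else 0) := by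
  unfold coin
  rw [Measure.add_apply, Measure.smul_apply, Measure.smul_apply, Measure.dirac_apply,
    Measure.dirac_apply]
  by_cases h1 : true ∈ t <;> by_cases h2 : false ∈ t <;> simp [h1, h2]

instance coin_prob : IsProbabilityMeasure coin := by
  classical
  constructor
  rw [coin_apply]
  simp [ENNReal.inv_two_add_inv_two]

/-- Points of `[0,1)` with prescribed first digits. -/
def digBox (N : ℕ) (t : ℕ → Set Bool) : Set ℝ := {x | 0 ≤ x ∧ x < 1 ∧ ∀ n < N, bit n x ∈ t n}

theorem bit_shift (n : ℕ) (x : ℝ) (c : ℤ) : bit n (2 * x - c) = bit (n + 1) x := by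
  unfold bit
  have : (2 * x - c) * 2 ^ (n + 1) = x * 2 ^ (n + 1 + 1) - ((2 * (c * 2 ^ n) : ℤ) : ℝ) := by
    push_cast; ring
  rw [this, Int.floor_sub_intCast]
  congr 2
  omega

theorem bit_zero_lo {x : ℝ} (h0 : 0 ≤ x) (h1 : 2 * x < 1) : bit 0 x = false := by
  have : ⌊x * 2 ^ (0 + 1)⌋ = 0 := by
    rw [Int.floor_eq_iff]; constructor <;> norm_num <;> linarith
  unfold bit
  rw [this]
  simp [boolOf]

theorem bit_zero_hi {x : ℝ} (h0 : 1 ≤ 2 * x) (h1 : x < 1) : bit 0 x = true := by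
  have : ⌊x * 2 ^ (0 + 1)⌋ = 1 := by
    rw [Int.floor_eq_iff]; constructor <;> norm_num <;> linarith
  unfold bit
  rw [this]
  simp [boolOf]

theorem measurable_bit (n : ℕ) : Measurable (bit n) := by
  have h : Measurable (fun x : ℝ => ⌊x * 2 ^ (n + 1)⌋) :=
    Int.measurable_floor.comp (measurable_id.mul_const _)
  exact (measurable_from_top (f := fun k : ℤ => boolOf (k % 2 = 1))).comp h

theorem measurableSet_digBox (N : ℕ) (t : ℕ → Set Bool) : MeasurableSet (digBox N t) := by
  have : digBox N t = Set.Ico 0 1 ∩ ⋂ n ∈ Finset.range N, bit n ⁻¹' (t n) := by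
    ext x; simp [digBox, and_assoc]
  rw [this]
  refine measurableSet_Ico.inter (Finset.measurableSet_biInter _ (fun n _ => ?_))
  exact measurable_bit n MeasurableSet.of_discrete

theorem digBox_vol : ∀ (N : ℕ) (t : ℕ → Set Bool),
    volume (digBox N t) = ∏ n ∈ Finset.range N, coin (t n) := by
  classical
  intro N
  induction N with
  | zero =>
    intro t
    have : digBox 0 t = Set.Ico 0 1 := by ext x; simp [digBox]
    rw [this]; simp
  | succ N ih =>
    intro t
    have hm := measurableSet_digBox N (fun n => t (n + 1))
    rw [← measure_inter_add_sdiff (digBox (N + 1) t)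
      (measurableSet_le (f := fun _ : ℝ => (1 : ℝ)) (g := fun x => 2 * x) measurable_const
        (measurable_const.mul measurable_id))]
    rw [Finset.prod_range_succ', coin_apply, mul_add, ← ih (fun n => t (n + 1))]
    congr 1
    · by_cases h : true ∈ t 0
      · have e : digBox (N + 1) t ∩ {x | 1 ≤ 2 * x} =
          (fun x => 2 * x) ⁻¹' ((fun x => x - 1) ⁻¹' digBox N (fun n => t (n + 1))) := by
          ext x
          simp only [digBox, Set.mem_inter_iff, Set.mem_ofPred_eq, Set.mem_preimage]
          have hb : ∀ n, bit n (2 * x - 1) = bit (n + 1) x := by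
            intro n; simpa using bit_shift n x 1
          constructor
          · rintro ⟨⟨h0, h1, h2⟩, h3⟩
            refine ⟨by linarith, by linarith, fun n hn => ?_⟩
            rw [hb]; exact h2 _ (by omega)
          · rintro ⟨h0, h1, h2⟩
            refine ⟨⟨by linarith, by linarith, fun n hn => ?_⟩, by linarith⟩
            rcases n with _ | n
            · rw [bit_zero_hi (by linarith) (by linarith)]; exact h
            · rw [← hb]; exact h2 _ (by omega)
        rw [e, if_pos h, Real.volume_preimage_mul_left (by norm_num)]
        simp only [sub_eq_add_neg]
        rw [measure_preimage_add_right, mul_comm]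
        congr 1
        rw [abs_of_pos (by norm_num), ENNReal.ofReal_inv_of_pos (by norm_num)]
        norm_num
      · have e : digBox (N + 1) t ∩ {x | 1 ≤ 2 * x} = ∅ := by
          ext x
          simp only [digBox, Set.mem_inter_iff, Set.mem_ofPred_eq, Set.mem_empty_iff_false,
            iff_false]
          rintro ⟨⟨h0, h1, h2⟩, h3⟩
          have := h2 0 (by omega)
          rw [bit_zero_hi h3 h1] at this
          exact h this
        rw [e, if_neg h]; simp
    · by_cases h : false ∈ t 0
      · have e : digBox (N + 1) t \ {x | 1 ≤ 2 * x} =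
          (fun x => 2 * x) ⁻¹' (digBox N (fun n => t (n + 1))) := by
          ext x
          simp only [digBox, Set.mem_sdiff, Set.mem_ofPred_eq, Set.mem_preimage, not_le]
          have hb : ∀ n, bit n (2 * x) = bit (n + 1) x := by
            intro n; simpa using bit_shift n x 0
          constructor
          · rintro ⟨⟨h0, h1, h2⟩, h3⟩
            refine ⟨by linarith, by linarith, fun n hn => ?_⟩
            rw [hb]; exact h2 _ (by omega)
          · rintro ⟨h0, h1, h2⟩
            refine ⟨⟨by linarith, by linarith, fun n hn => ?_⟩, by linarith⟩
            rcases n with _ | n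
            · rw [bit_zero_lo (by linarith) (by linarith)]; exact h
            · rw [← hb]; exact h2 _ (by omega)
        rw [e, if_pos h, Real.volume_preimage_mul_left (by norm_num), mul_comm]
        congr 1
        rw [abs_of_pos (by norm_num), ENNReal.ofReal_inv_of_pos (by norm_num)]
        norm_num
      · have e : digBox (N + 1) t \ {x | 1 ≤ 2 * x} = ∅ := by
          ext x
          simp only [digBox, Set.mem_sdiff, Set.mem_ofPred_eq, Set.mem_empty_iff_false,
            iff_false, not_le]
          rintro ⟨⟨h0, h1, h2⟩, h3⟩
          have := h2 0 (by omega)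
          rw [bit_zero_lo h0 h3] at this
          exact h this
        rw [e, if_neg h]; simp

instance base_prob : IsProbabilityMeasure base := by
  constructor; simp [base]

theorem base_eq : base = volume.restrict (Set.Ico 0 1) := by
  unfold base
  exact Measure.restrict_congr_set (Ico_ae_eq_Ioc (μ := volume) (a := (0:ℝ)) (b := 1)).symm

theorem map_bits : base.map (fun x (n : ℕ) => bit n x) = Measure.infinitePi (fun _ : ℕ => coin) := by
  classical
  have hmeas : Measurable (fun x (n : ℕ) => bit n x) := measurable_pi_lambda _ measurable_bit
  apply Measure.eq_infinitePi
  intro s t ht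
  have hs : MeasurableSet (Set.pi (s : Set ℕ) t) :=
    MeasurableSet.pi s.countable_toSet (fun i _ => ht i)
  rw [Measure.map_apply hmeas hs, base_eq, Measure.restrict_apply (hmeas hs)]
  obtain ⟨N, hN⟩ : ∃ N, s ⊆ Finset.range N := by
    obtain ⟨N, hN⟩ := s.bddAbove
    exact ⟨N + 1, fun n hn => Finset.mem_range.2 (Nat.lt_succ_of_le (hN hn))⟩
  have e : (fun x (n : ℕ) => bit n x) ⁻¹' (Set.pi (s : Set ℕ) t) ∩ Set.Ico 0 1 =
      digBox N (fun n => if n ∈ s then t n else Set.univ) := by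
    ext x
    simp only [digBox, Set.mem_inter_iff, Set.mem_preimage, Set.mem_pi, Set.mem_Ico,
      Set.mem_ofPred_eq, Finset.mem_coe]
    constructor
    · rintro ⟨h1, h2, h3⟩
      refine ⟨h2, h3, fun n _ => ?_⟩
      split_ifs with h
      · exact h1 n h
      · trivial
    · rintro ⟨h1, h2, h3⟩
      refine ⟨fun n hn => ?_, h1, h2⟩
      have := h3 n (Finset.mem_range.1 (hN hn))
      rwa [if_pos hn] at this
  rw [e, digBox_vol, ← Finset.prod_subset hN]
  · exact Finset.prod_congr rfl (fun n hn => by rw [if_pos hn])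
  · intro n _ hn
    rw [if_neg hn]; exact measure_univ

end DaC

namespace DaC

/-- The real number with given binary digits. -/
noncomputable def val (b : ℕ → Bool) : ℝ := ∑' k : ℕ, if b k then ((2 : ℝ)⁻¹) ^ (k + 1) else 0

theorem summable_half : Summable (fun k : ℕ => ((2 : ℝ)⁻¹) ^ (k + 1)) :=
  (summable_nat_add_iff 1).2 (summable_geometric_of_lt_one (by norm_num) (by norm_num))

theorem summable_val (b : ℕ → Bool) :
    Summable (fun k : ℕ => if b k then ((2 : ℝ)⁻¹) ^ (k + 1) else 0) := by
  refine Summable.of_nonneg_of_le (fun k => ?_) (fun k => ?_) summable_half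
  · split_ifs <;> positivity
  · split_ifs
    · exact le_rfl
    · positivity

theorem measurable_val : Measurable val := by
  refine measurable_of_tendsto_metrizable
    (f := fun (n : ℕ) (b : ℕ → Bool) => ∑ k ∈ Finset.range n, if b k then ((2 : ℝ)⁻¹) ^ (k + 1) else 0)
    (fun n => ?_) ?_
  · refine Finset.measurable_sum _ (fun k _ => ?_)
    exact (measurable_from_top (f := fun c : Bool => if c then ((2 : ℝ)⁻¹) ^ (k + 1) else 0)).comp
      (measurable_pi_apply k)
  · rw [tendsto_pi_nhds]
    intro b
    exact (summable_val b).hasSum.tendsto_sum_nat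

/-- The digits used by the `i`-th label. -/
noncomputable def blkBits (i : ℕ) (x : ℝ) : ℕ → Bool := fun k => bit (Nat.pair i k) x

theorem unif_eq (i : ℕ) (x : ℝ) : unif i x = val (blkBits i x) := rfl

theorem measurable_blkBits (i : ℕ) : Measurable (blkBits i) :=
  measurable_pi_lambda _ (fun k => measurable_bit _)

theorem measurable_unif (i : ℕ) : Measurable (unif i) :=
  measurable_val.comp (measurable_blkBits i)

/-- Law of the digits. -/
noncomputable def coins : Measure (ℕ → Bool) := Measure.infinitePi (fun _ : ℕ => coin)

instance coins_prob : IsProbabilityMeasure coins := by unfold coins; infer_instance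

theorem map_blk (i : ℕ) : base.map (blkBits i) = coins := by
  have h := Measure.map_infinitePi_infinitePi_of_inj (P := fun _ : ℕ => coin)
    (f := fun k => Nat.pair i k) (fun a b h => (Nat.pair_eq_pair.1 h).2)
  rw [← map_bits, Measure.map_map (by fun_prop) (measurable_pi_lambda _ measurable_bit),
    map_bits] at h
  exact h

theorem map_blks : base.map (fun x i => blkBits i x) = Measure.infinitePi (fun _ : ℕ => coins) := by
  have h := Measure.map_infinitePi_infinitePi_of_inj (P := fun _ : ℕ => coin)
    (f := fun k : ℕ × ℕ => Nat.pair k.1 k.2) (fun a b h => by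
      have := Nat.pair_eq_pair.1 h
      exact Prod.ext this.1 this.2)
  have h2 := Measure.infinitePi_map_curry (fun _ _ : ℕ => coin)
  rw [← h, ← map_bits, Measure.map_map (by fun_prop) (by fun_prop),
    Measure.map_map (by fun_prop) (measurable_pi_lambda _ measurable_bit),
    map_bits] at h2
  exact h2

theorem indep_unif : ProbabilityTheory.iIndepFun unif base := by
  have h : ProbabilityTheory.iIndepFun blkBits base := by
    rw [ProbabilityTheory.iIndepFun_iff_map_fun_eq_infinitePi_map measurable_blkBits, map_blks]
    simp_rw [map_blk]
  exact h.comp (fun _ => val) (fun _ => measurable_val)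

theorem base_unif (i : ℕ) (T : Set ℝ) (hT : MeasurableSet T) :
    base (unif i ⁻¹' T) = coins (val ⁻¹' T) := by
  rw [← map_blk i, Measure.map_apply (measurable_blkBits i) (measurable_val hT)]
  rfl

theorem coins_tail : coins {b | ∀ k, 1 ≤ k → b k = true} = 0 := by
  classical
  have key : ∀ n : ℕ, coins {b | ∀ k, 1 ≤ k → b k = true} ≤ (2⁻¹ : ℝ≥0∞) ^ n := by
    intro n
    have h := Measure.infinitePi_pi (μ := fun _ : ℕ => coin) (s := Finset.Ico 1 (n + 1))
      (t := fun _ => {true}) (fun i _ => MeasurableSet.of_discrete)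
    have h1 : coin {true} = 2⁻¹ := by rw [coin_apply]; simp
    rw [Finset.prod_const, h1, Nat.card_Ico, Nat.add_sub_cancel] at h
    rw [← h]
    refine measure_mono (fun b hb => ?_)
    intro k hk
    exact hb k (Finset.mem_Ico.1 hk).1
  have lim : Filter.Tendsto (fun n : ℕ => (2⁻¹ : ℝ≥0∞) ^ n) Filter.atTop (nhds 0) :=
    ENNReal.tendsto_pow_atTop_nhds_zero_of_lt_one (by norm_num)
  exact le_antisymm (ge_of_tendsto' lim key) (zero_le)

theorem coins_half : coins (val ⁻¹' Set.Iio (1 / 2)) = 2⁻¹ := by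
  classical
  have h0 : coins {b | b 0 = false} = 2⁻¹ := by
    have h := Measure.infinitePi_pi (μ := fun _ : ℕ => coin) (s := {0})
      (t := fun _ => {false}) (fun i _ => MeasurableSet.of_discrete)
    have h1 : coin {false} = 2⁻¹ := by rw [coin_apply]; simp
    rw [Finset.prod_singleton, h1] at h
    rw [← h]
    unfold coins
    congr 1
    ext b
    simp
  rw [← h0]
  have hsum : ∑' k : ℕ, (if k = 0 then (0:ℝ) else (2⁻¹) ^ (k + 1)) = 1 / 2 := by
    have hs : Summable (fun k : ℕ => (if k = 0 then (0:ℝ) else (2⁻¹) ^ (k + 1))) := by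
      refine Summable.of_nonneg_of_le (fun k => ?_) (fun k => ?_) summable_half
      · split_ifs <;> positivity
      · split_ifs
        · positivity
        · exact le_rfl
    rw [hs.tsum_eq_zero_add]
    have : ∀ k : ℕ, (if k + 1 = 0 then (0:ℝ) else (2⁻¹) ^ (k + 1 + 1)) = (1/4) * (2⁻¹) ^ k := by
      intro k; rw [if_neg (by omega)]; ring
    simp_rw [this]
    rw [tsum_mul_left, tsum_geometric_inv_two]
    norm_num
  apply le_antisymm
  · refine measure_mono (fun b hb => ?_)
    by_contra hc
    have hb0 : b 0 = true := by simpa using hc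
    have := (summable_val b).le_tsum 0 (fun k _ => by split_ifs <;> positivity)
    rw [if_pos hb0] at this
    have h2 : val b < 1 / 2 := hb
    unfold val at h2
    norm_num at this h2
    linarith
  · have hsub : {b : ℕ → Bool | b 0 = false} ⊆
        (val ⁻¹' Set.Iio (1 / 2)) ∪ {b | ∀ k, 1 ≤ k → b k = true} := by
      intro b hb
      have hb0 : b 0 = false := hb
      by_cases hk : ∀ k, 1 ≤ k → b k = true
      · exact Or.inr hk
      · left
        push Not at hk
        obtain ⟨k, hk1, hk2⟩ := hk
        change val b < 1 / 2
        rw [← hsum]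
        unfold val
        refine Summable.tsum_lt_tsum (i := k) (fun j => ?_) ?_ (summable_val b) ?_
        · by_cases hj : j = 0
          · subst hj; simp [hb0]
          · rw [if_neg hj]; split_ifs
            · exact le_rfl
            · positivity
        · rw [if_neg hk2, if_neg (by omega)]; positivity
        · by_contra hns
          rw [tsum_eq_zero_of_not_summable hns] at hsum
          norm_num at hsum
    calc coins {b | b 0 = false} ≤ _ := measure_mono hsub
      _ ≤ _ := measure_union_le _ _
      _ = _ := by rw [coins_tail, add_zero]

end DaC

namespace DaC

/-! ### Edges as unordered pairs -/

noncomputable def es (e : Sym2 V) : V := (Quot.out e).1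
noncomputable def et (e : Sym2 V) : V := (Quot.out e).2

theorem est (e : Sym2 V) : s(es e, et e) = e := by
  unfold es et
  have := Quot.out_eq e
  exact this

theorem TriAdj_symm {u v : V} (h : TriAdj u v) : TriAdj v u := by
  obtain ⟨a, b⟩ := u
  obtain ⟨c, d⟩ := v
  simp only [TriAdj, Set.mem_insert_iff, Set.mem_singleton_iff, Prod.mk.injEq] at h ⊢
  omega

theorem rel_est {r : V → V → Prop} (hr : ∀ u v, r u v → r v u) (u v : V) :
    r (es s(u, v)) (et s(u, v)) ↔ r u v := by
  have h := est s(u, v)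
  rw [Sym2.eq_iff] at h
  rcases h with ⟨h1, h2⟩ | ⟨h1, h2⟩
  · rw [h1, h2]
  · rw [h1, h2]; exact ⟨hr _ _, hr _ _⟩

theorem eq_est (ξ : V → Bool) (u v : V) : ξ (es s(u, v)) = ξ (et s(u, v)) ↔ ξ u = ξ v :=
  rel_est (r := fun a b => ξ a = ξ b) (fun _ _ h => h.symm) u v

theorem eIdx_comm (u v : V) : eIdx u v = eIdx v u := by
  unfold eIdx; exact min_comm _ _

noncomputable def idx (e : Sym2 V) : ℕ := eIdx (es e) (et e)

theorem idx_mk (u v : V) : idx s(u, v) = eIdx u v := by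
  unfold idx
  have h := est s(u, v)
  rw [Sym2.eq_iff] at h
  rcases h with ⟨h1, h2⟩ | ⟨h1, h2⟩
  · rw [h1, h2]
  · rw [h1, h2, eIdx_comm]

theorem idx_inj : Function.Injective idx := by
  have key : ∀ u v : V, ∃ a b : V, s(a, b) = s(u, v) ∧ eIdx u v = Encodable.encode (a, b) := by
    intro u v
    rcases min_choice (Encodable.encode (u, v)) (Encodable.encode (v, u)) with h | h
    · exact ⟨u, v, rfl, h⟩
    · exact ⟨v, u, Sym2.eq_swap, h⟩
  intro e f h
  obtain ⟨a, b, h1, h2⟩ := key (es e) (et e)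
  obtain ⟨c, d, h3, h4⟩ := key (es f) (et f)
  unfold idx at h
  rw [h2, h4] at h
  have h5 := Encodable.encode_injective h
  rw [← est e, ← est f, ← h1, ← h3]
  have h6 := Prod.mk.inj h5
  rw [h6.1, h6.2]

/-- Lattice edges. -/
def adjS (e : Sym2 V) : Prop := TriAdj (es e) (et e)

theorem adjS_mk (u v : V) : adjS s(u, v) ↔ TriAdj u v :=
  rel_est (r := TriAdj) (fun _ _ h => TriAdj_symm h) u v

noncomputable def eta (p x : ℝ) (e : Sym2 V) : Bool :=
  boolOf (adjS e) && boolOf (unif (2 * idx e) x < p)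

theorem edgeCfg_eta (p x : ℝ) (u v : V) : edgeCfg TriAdj p x u v = eta p x s(u, v) := by
  unfold edgeCfg eta edgeU
  rw [idx_mk]
  congr 2
  exact propext (adjS_mk u v).symm

noncomputable def om (x : ℝ) (v : V) : Bool := boolOf (vtxU v x < 1 / 2)

/-- All independent bits, jointly indexed. -/
noncomputable def lab (p : ℝ) (j : Sym2 V ⊕ V) (y : ℝ) : Bool :=
  match j with
  | Sum.inl e => boolOf (adjS e) && boolOf (y < p)
  | Sum.inr _ => boolOf (y < 1 / 2)

def labIdx (f : Sym2 V → ℕ) (j : Sym2 V ⊕ V) : ℕ :=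
  match j with
  | Sum.inl e => 2 * f e
  | Sum.inr v => 2 * Encodable.encode v + 1

theorem measurable_ltb (p : ℝ) : Measurable (fun y : ℝ => boolOf (y < p)) := by
  classical
  have : (fun y : ℝ => boolOf (y < p)) = fun y => if y ∈ Set.Iio p then true else false := by
    funext y
    by_cases h : y < p
    · simp [boolOf, h]
    · simp [boolOf, h]
  rw [this]
  exact Measurable.ite measurableSet_Iio measurable_const measurable_const

theorem measurable_lab (p : ℝ) (j : Sym2 V ⊕ V) : Measurable (lab p j) := by
  rcases j with e | v
  · change Measurable (fun y => boolOf (adjS e) && boolOf (y < p))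
    exact (measurable_from_top (f := fun b : Bool => boolOf (adjS e) && b)).comp (measurable_ltb p)
  · exact measurable_ltb _

theorem labIdx_inj : Function.Injective (labIdx idx) := by
  intro a b h
  rcases a with a | a <;> rcases b with b | b <;> simp only [labIdx] at h
  · rw [idx_inj (by omega : idx a = idx b)]
  · omega
  · omega
  · rw [Encodable.encode_injective (by omega : Encodable.encode a = Encodable.encode b)]

noncomputable def bits (p : ℝ) (j : Sym2 V ⊕ V) (x : ℝ) : Bool := lab p j (unif (labIdx idx j) x)

theorem measurable_bits (p : ℝ) (j : Sym2 V ⊕ V) : Measurable (bits p j) :=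
  (measurable_lab p j).comp (measurable_unif _)

theorem indep_bits (p : ℝ) : ProbabilityTheory.iIndepFun (bits p) base :=
  (indep_unif.precomp labIdx_inj).comp (lab p) (measurable_lab p)

theorem measurable_eta (p : ℝ) (e : Sym2 V) : Measurable (fun x => eta p x e) :=
  measurable_bits p (Sum.inl e)

theorem measurable_om (v : V) : Measurable (fun x => om x v) :=
  measurable_bits 0 (Sum.inr v)

open Classical in
/-- Edge probabilities. -/
noncomputable def qq (p : ℝ) (e : Sym2 V) : ℝ :=
  if adjS e then coins.real (val ⁻¹' Set.Iio p) else 0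

theorem qq_mem (p : ℝ) (e : Sym2 V) : 0 ≤ qq p e ∧ qq p e ≤ 1 := by
  unfold qq
  split_ifs
  · exact ⟨measureReal_nonneg, measureReal_le_one⟩
  · norm_num

theorem eta_prob (p : ℝ) (e : Sym2 V) : base.real {x | eta p x e = true} = qq p e := by
  unfold qq
  by_cases h : adjS e
  · rw [if_pos h]
    unfold Measure.real
    rw [← base_unif (2 * idx e) _ measurableSet_Iio]
    congr 2
    ext x
    simp [eta, boolOf_iff, h]
  · rw [if_neg h]
    have : {x | eta p x e = true} = ∅ := by
      ext x; simp [eta, boolOf_iff, h]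
    rw [this]; simp

theorem om_prob (v : V) : base.real {x | om x v = true} = 1 / 2 := by
  have : {x | om x v = true} = unif (2 * Encodable.encode v + 1) ⁻¹' Set.Iio (1 / 2) := by
    ext x; simp [om, boolOf_iff, vtxU]
  rw [this, Measure.real, base_unif _ _ measurableSet_Iio, coins_half]
  simp

theorem false_prob (X : ℝ → Bool) (hX : Measurable X) :
    base.real {x | X x = false} = 1 - base.real {x | X x = true} := by
  have : {x | X x = false} = {x | X x = true}ᶜ := by ext x; simp
  rw [this]
  exact probReal_compl_eq_one_sub (hX (MeasurableSet.of_discrete (s := {true})))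

open Classical in
/-- The atoms of the finite model. -/
def atom (p : ℝ) (D S : Finset (Sym2 V)) (R : Finset V) (ρ : V → Bool) : Set ℝ :=
  {x | (∀ e ∈ D, (eta p x e = true ↔ e ∈ S)) ∧ ∀ v ∈ R, om x v = ρ v}

open Classical in
theorem atom_eq (p : ℝ) (D S : Finset (Sym2 V)) (R : Finset V) (ρ : V → Bool) :
    atom p D S R ρ = ⋂ j ∈ D.disjSum R, bits p j ⁻¹'
      (Sum.elim (fun e => {decide (e ∈ S)}) (fun v => {ρ v}) j : Set Bool) := by
  ext x
  simp only [atom, Set.mem_ofPred_eq, Set.mem_iInter, Set.mem_preimage]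
  constructor
  · rintro ⟨h1, h2⟩ j hj
    rcases j with e | v
    · have := h1 e (Finset.inl_mem_disjSum.1 hj)
      change eta p x e = decide (e ∈ S)
      rw [Bool.eq_iff_iff, this, decide_eq_true_iff]
    · exact h2 v (Finset.inr_mem_disjSum.1 hj)
  · intro h
    constructor
    · intro e he
      have : eta p x e = decide (e ∈ S) := h (Sum.inl e) (Finset.inl_mem_disjSum.2 he)
      rw [this, decide_eq_true_iff]
    · intro v hv
      exact h (Sum.inr v) (Finset.inr_mem_disjSum.2 hv)

theorem measurableSet_atom (p : ℝ) (D S : Finset (Sym2 V)) (R : Finset V) (ρ : V → Bool) :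
    MeasurableSet (atom p D S R ρ) := by
  rw [atom_eq]
  exact Finset.measurableSet_biInter _ (fun j _ => measurable_bits p j MeasurableSet.of_discrete)

open Classical in
theorem atom_prob (p : ℝ) (D S : Finset (Sym2 V)) (R : Finset V) (ρ : V → Bool) :
    base.real (atom p D S R ρ) = wt (qq p) D S * (1 / 2) ^ R.card := by
  rw [atom_eq, Measure.real, (indep_bits p).measure_inter_preimage_eq_mul _
    (fun _ _ => MeasurableSet.of_discrete), ENNReal.toReal_prod, Finset.prod_disjSum]
  unfold wt
  congr 1
  · refine Finset.prod_congr rfl (fun e _ => ?_)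
    by_cases h : e ∈ S
    · rw [if_pos h, ← eta_prob]
      simp only [Sum.elim_inl, h, decide_true]
      rfl
    · rw [if_neg h, ← eta_prob, ← false_prob _ (measurable_eta p e)]
      simp only [Sum.elim_inl, h, decide_false]
      rfl
  · rw [← Finset.prod_const]
    refine Finset.prod_congr rfl (fun v _ => ?_)
    rw [← om_prob v]
    rcases h : ρ v with _ | _
    · have := false_prob _ (measurable_om v)
      rw [om_prob] at this
      rw [om_prob]
      simp only [Sum.elim_inr, h]
      refine Eq.trans ?_ (this.trans (by norm_num))
      rfl
    · simp only [Sum.elim_inr, h]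
      rfl

end DaC

namespace DaC

/-! ### Cluster representatives -/

theorem clusterRep_spec (η : EdgeCfg) (v : V) :
    Conn η v (clusterRep η v) ∧
      Encodable.encode (clusterRep η v) = sInf (Encodable.encode '' pCluster η v) := by
  have hne : (Encodable.encode '' pCluster η v).Nonempty :=
    ⟨_, v, Relation.ReflTransGen.refl, rfl⟩
  obtain ⟨w, hw, hw2⟩ := Nat.sInf_mem hne
  have : clusterRep η v = w := by
    unfold clusterRep
    rw [← hw2, Encodable.encodek]; rfl
  rw [this]
  exact ⟨hw, hw2⟩

theorem clusterRep_congr {η : EdgeCfg} (hs : ∀ a b, η a b = true → η b a = true) {u v : V}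
    (h : Conn η u v) : clusterRep η u = clusterRep η v := by
  have hsym : Conn η v u := by
    induction h with
    | refl => exact Relation.ReflTransGen.refl
    | tail _ h2 ih => exact Relation.ReflTransGen.head (r := fun a b => η a b = true) (hs _ _ h2) ih
  have : pCluster η u = pCluster η v := by
    ext w
    exact ⟨fun hw => hsym.trans hw, fun hw => h.trans hw⟩
  apply Encodable.encode_injective
  rw [(clusterRep_spec η u).2, (clusterRep_spec η v).2, this]

/-- Configuration with open edge set `S`. -/
def cfgS (S : Finset (Sym2 V)) : EdgeCfg := fun u v => decide (s(u, v) ∈ S)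

noncomputable def rep (S : Finset (Sym2 V)) (v : V) : V := clusterRep (cfgS S) v

theorem rep_edge (S : Finset (Sym2 V)) (e : Sym2 V) (he : e ∈ S) : rep S (es e) = rep S (et e) := by
  apply clusterRep_congr
  · intro a b h
    simp only [cfgS, decide_eq_true_iff] at h ⊢
    rwa [Sym2.eq_swap]
  · apply Relation.ReflTransGen.single
    simp only [cfgS, decide_eq_true_iff]
    rwa [est]

theorem rep_const (S : Finset (Sym2 V)) (ξ : V → Bool) (h : ∀ e ∈ S, ξ (es e) = ξ (et e)) (v : V) :
    ξ (rep S v) = ξ v := by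
  have h1 := (clusterRep_spec (cfgS S) v).1
  change ξ (clusterRep (cfgS S) v) = ξ v
  generalize clusterRep (cfgS S) v = w at h1
  induction h1 with
  | refl => rfl
  | tail _ h2 ih =>
    rw [← ih]
    simp only [cfgS, decide_eq_true_iff] at h2
    exact ((eq_est ξ _ _).1 (h _ h2)).symm

theorem rep_out {S : Finset (Sym2 V)} {U : Finset V} (hU : ∀ e ∈ S, es e ∈ U ∧ et e ∈ U) {v : V}
    (hv : v ∉ U) : rep S v = v := by
  classical
  have h := rep_const S (fun w => decide (w = v)) (fun e he => by
    have h1 : es e ≠ v := fun h => hv (h ▸ (hU e he).1)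
    have h2 : et e ≠ v := fun h => hv (h ▸ (hU e he).2)
    simp [h1, h2]) v
  simpa using h

theorem rep_in {S : Finset (Sym2 V)} {U : Finset V} (hU : ∀ e ∈ S, es e ∈ U ∧ et e ∈ U) {v : V}
    (hv : v ∈ U) : rep S v ∈ U := by
  classical
  have h := rep_const S (fun w => decide (w ∈ U)) (fun e he => by
    simp [(hU e he).1, (hU e he).2]) v
  simpa [hv] using h

theorem xor_cancel (a b : Bool) : ((a ^^ b) ^^ b) = a := by cases a <;> cases b <;> rfl
theorem xor_cancel2 (a b : Bool) : (b ^^ (b ^^ a)) = a := by cases a <;> cases b <;> rfl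

/-- Uniform colours of representatives give a uniform cluster-constant colouring. -/
theorem count_rep {S : Finset (Sym2 V)} {U : Finset V} (hU : ∀ e ∈ S, es e ∈ U ∧ et e ∈ U)
    (f : (V → Bool) → ℝ) :
    av (CF es et (∅ : Finset (Sym2 V)) U (fun _ => false)) (fun ρ => f (fun v => ρ (rep S v))) =
      av (CF es et S U (fun _ => false)) f := by
  classical
  set T := CF es et (∅ : Finset (Sym2 V)) U (fun _ => false) with hT
  set C := CF es et S U (fun _ => false) with hC
  have mT : ∀ ρ, ρ ∈ T ↔ ∀ v, v ∉ U → ρ v = false := by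
    intro ρ; rw [hT, mem_CF]; simp
  have mC : ∀ ρ, ρ ∈ C ↔ (∀ e ∈ S, ρ (es e) = ρ (et e)) ∧ ∀ v, v ∉ U → ρ v = false := by
    intro ρ; rw [hC, mem_CF]
  have T0 : (T.card : ℝ) ≠ 0 := by
    have : T.Nonempty := ⟨fun _ => false, (mT _).2 (fun _ _ => rfl)⟩
    exact_mod_cast (Finset.card_pos.2 this).ne'
  have C0 : (C.card : ℝ) ≠ 0 := by
    have : C.Nonempty := ⟨fun _ => false, (mC _).2 ⟨fun _ _ => rfl, fun _ _ => rfl⟩⟩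
    exact_mod_cast (Finset.card_pos.2 this).ne'
  have h1 : ∀ ξ ∈ C, ∑ ρ ∈ T, f (fun v => ρ (rep S v)) = ∑ ρ ∈ T, f (fun v => ρ (rep S v) ^^ ξ v) := by
    intro ξ hξ
    have hξ' := (mC ξ).1 hξ
    refine Finset.sum_nbij' (fun ρ v => ρ v ^^ ξ v) (fun ρ v => ρ v ^^ ξ v) ?_ ?_ ?_ ?_ ?_
    · intro ρ hρ
      rw [mT] at hρ ⊢
      intro v hv; simp [hρ v hv, hξ'.2 v hv]
    · intro ρ hρ
      rw [mT] at hρ ⊢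
      intro v hv; simp [hρ v hv, hξ'.2 v hv]
    · intro ρ _; funext v; exact xor_cancel _ _
    · intro ρ _; funext v; exact xor_cancel _ _
    · intro ρ _
      congr 1
      funext v
      simp only
      rw [rep_const S ξ hξ'.1, xor_cancel]
  have h2 : ∀ ρ ∈ T, ∑ ξ ∈ C, f (fun v => ρ (rep S v) ^^ ξ v) = ∑ ξ ∈ C, f ξ := by
    intro ρ hρ
    rw [mT] at hρ
    have hcl : ∀ ξ ∈ C, (fun v => ρ (rep S v) ^^ ξ v) ∈ C := by
      intro ξ hξ
      rw [mC] at hξ ⊢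
      refine ⟨fun e he => ?_, fun v hv => ?_⟩
      · rw [rep_edge S e he, hξ.1 e he]
      · rw [rep_out hU hv, hρ v hv, hξ.2 v hv]; rfl
    refine Finset.sum_nbij' (fun ξ v => ρ (rep S v) ^^ ξ v) (fun ξ v => ρ (rep S v) ^^ ξ v)
      hcl hcl ?_ ?_ ?_
    · intro ρ _; funext v; exact xor_cancel2 _ _
    · intro ρ _; funext v; exact xor_cancel2 _ _
    · intro ρ _; rfl
  have h3 : (C.card : ℝ) * ∑ ρ ∈ T, f (fun v => ρ (rep S v)) = T.card * ∑ ξ ∈ C, f ξ := by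
    rw [← nsmul_eq_mul, ← nsmul_eq_mul, ← Finset.sum_const, ← Finset.sum_const,
      Finset.sum_congr rfl h1, Finset.sum_comm, Finset.sum_congr rfl h2]
  unfold av
  rw [div_eq_div_iff T0 C0]
  linarith

theorem card_T (U : Finset V) :
    (CF es et (∅ : Finset (Sym2 V)) U (fun _ => false)).card = 2 ^ U.card := by
  classical
  rw [← Finset.card_powerset]
  symm
  refine Finset.card_nbij' (fun (T : Finset V) (v : V) => decide (v ∈ T))
    (fun ρ => U.filter (fun v => ρ v = true)) ?_ ?_ ?_ ?_
  · intro T hT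
    have hT' := Finset.mem_powerset.1 hT
    rw [Finset.mem_coe, mem_CF]
    refine ⟨by simp, fun v hv => ?_⟩
    have : v ∉ T := fun h => hv (hT' h)
    simp [this]
  · intro ρ _
    exact Finset.mem_coe.2 (Finset.mem_powerset.2 (Finset.filter_subset _ _))
  · intro T hT
    have hT' := Finset.mem_powerset.1 hT
    ext v
    simp only [Finset.mem_filter, decide_eq_true_iff]
    exact ⟨fun h => h.2, fun h => ⟨hT' h, h⟩⟩
  · intro ρ hρ
    rw [Finset.mem_coe, mem_CF] at hρ
    funext v
    by_cases hv : v ∈ U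
    · simp [hv]
    · simp [hv, hρ.2 v hv]

/-- Open edges of the finite window `D`. -/
noncomputable def Sx (p x : ℝ) (D : Finset (Sym2 V)) : Finset (Sym2 V) :=
  D.filter (fun e => eta p x e = true)

/-- The colouring of the finite model. -/
noncomputable def xiD (p : ℝ) (D : Finset (Sym2 V)) (x : ℝ) : V → Bool :=
  fun v => om x (rep (Sx p x D) v)

open Classical in
/-- Indicator. -/
noncomputable def ind (A : Set (V → Bool)) (ξ : V → Bool) : ℝ := if ξ ∈ A then 1 else 0

open Classical in
theorem xiD_union (p : ℝ) {A : Set (V → Bool)} {Λ U : Finset V} {D : Finset (Sym2 V)}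
    (hA : ∀ ξ ξ' : V → Bool, (∀ v ∈ Λ, ξ v = ξ' v) → ξ ∈ A → ξ' ∈ A) (hΛ : Λ ⊆ U)
    (hU : ∀ e ∈ D, es e ∈ U ∧ et e ∈ U) :
    {x | xiD p D x ∈ A} = ⋃ z ∈ (D.powerset ×ˢ CF es et (∅ : Finset (Sym2 V)) U (fun _ => false)).filter
      (fun z => (fun v => z.2 (rep z.1 v)) ∈ A), atom p D z.1 U z.2 := by
  have hA' : ∀ S ⊆ D, ∀ ρ ρ' : V → Bool, (∀ v ∈ U, ρ v = ρ' v) →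
      (fun v => ρ (rep S v)) ∈ A → (fun v => ρ' (rep S v)) ∈ A := by
    intro S hS ρ ρ' h
    apply hA
    intro v hv
    exact h _ (rep_in (fun e he => hU e (hS he)) (hΛ hv))
  ext x
  simp only [Set.mem_iUnion, Set.mem_ofPred_eq, Finset.mem_filter, Finset.mem_product,
    Finset.mem_powerset, exists_prop, Prod.exists]
  constructor
  · intro h
    refine ⟨Sx p x D, fun v => if v ∈ U then om x v else false,
      ⟨⟨Finset.filter_subset _ _, mem_CF.2 ⟨by simp, fun v hv => by simp [hv]⟩⟩, ?_⟩, ?_, ?_⟩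
    · exact hA' (Sx p x D) (Finset.filter_subset _ _) (om x)
        (fun v => if v ∈ U then om x v else false) (fun v hv => by simp [hv]) h
    · intro e he
      simp [Sx, he]
    · intro v hv
      simp [hv]
  · rintro ⟨S, ρ, ⟨⟨hS, _⟩, h⟩, h1, h2⟩
    have hSx : Sx p x D = S := by
      ext e
      simp only [Sx, Finset.mem_filter]
      constructor
      · rintro ⟨h3, h4⟩; exact (h1 e h3).1 h4
      · intro h3; exact ⟨hS h3, (h1 e (hS h3)).2 h3⟩
    change (fun v => om x (rep (Sx p x D) v)) ∈ A
    rw [hSx]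
    exact hA' _ hS _ _ (fun v hv => (h2 v hv).symm) h

open Classical in
theorem xiD_prob (p : ℝ) {A : Set (V → Bool)} {Λ U : Finset V} {D : Finset (Sym2 V)}
    (hA : ∀ ξ ξ' : V → Bool, (∀ v ∈ Λ, ξ v = ξ' v) → ξ ∈ A → ξ' ∈ A) (hΛ : Λ ⊆ U)
    (hU : ∀ e ∈ D, es e ∈ U ∧ et e ∈ U) :
    MeasurableSet {x | xiD p D x ∈ A} ∧
    base.real {x | xiD p D x ∈ A} = EE (qq p) es et D U (fun _ => false) (ind A) := by
  rw [xiD_union p hA hΛ hU]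
  constructor
  · exact Finset.measurableSet_biUnion _ (fun z _ => measurableSet_atom _ _ _ _ _)
  rw [measureReal_biUnion_finset]
  · rw [Finset.sum_filter, Finset.sum_product]
    unfold EE
    refine Finset.sum_congr rfl (fun S hS => ?_)
    have hS' := Finset.mem_powerset.1 hS
    rw [← count_rep (fun e he => hU e (hS' he))]
    unfold av
    rw [card_T, Finset.sum_div, Finset.mul_sum]
    refine Finset.sum_congr rfl (fun ρ _ => ?_)
    unfold ind
    simp only
    split_ifs
    · rw [atom_prob]; push_cast; rw [one_div_pow]
    · simp
  · rintro ⟨S, ρ⟩ hz ⟨S', ρ'⟩ hz' hne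
    simp only [Finset.coe_filter, Finset.mem_product, Finset.mem_powerset, Set.mem_ofPred_eq] at hz hz'
    rw [Function.onFun, Set.disjoint_left]
    rintro x ⟨h1, h2⟩ ⟨h3, h4⟩
    apply hne
    have e1 : S = S' := by
      ext e
      constructor
      · intro he; exact (h3 e (hz.1.1 he)).1 ((h1 e (hz.1.1 he)).2 he)
      · intro he; exact (h1 e (hz'.1.1 he)).1 ((h3 e (hz'.1.1 he)).2 he)
    have e2 : ρ = ρ' := by
      funext v
      by_cases hv : v ∈ U
      · exact (h2 v hv).symm.trans (h4 v hv)
      · rw [(mem_CF.1 hz.1.2).2 v hv, (mem_CF.1 hz'.1.2).2 v hv]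
    rw [e1, e2]
  · exact fun z _ => measurableSet_atom _ _ _ _ _

end DaC

namespace DaC

/-! ### Infinite volume -/

theorem Sx_mem (p x : ℝ) (D : Finset (Sym2 V)) (u v : V) :
    cfgS (Sx p x D) u v = true ↔ s(u, v) ∈ D ∧ edgeCfg TriAdj p x u v = true := by
  rw [edgeCfg_eta]
  simp [cfgS, Sx]

theorem conn_eventually (p x : ℝ) {v w : V} (h : Conn (edgeCfg TriAdj p x) v w) :
    ∀ᶠ D : Finset (Sym2 V) in Filter.atTop, Conn (cfgS (Sx p x D)) v w := by
  induction h with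
  | refl => exact Filter.Eventually.of_forall (fun _ => Relation.ReflTransGen.refl)
  | @tail b c _ h2 ih =>
    filter_upwards [ih, Filter.eventually_ge_atTop ({s(b, c)} : Finset (Sym2 V))] with D h3 h4
    refine Relation.ReflTransGen.tail h3 ?_
    exact (Sx_mem p x D b c).2 ⟨h4 (Finset.mem_singleton_self _), h2⟩

theorem rep_eventually (p x : ℝ) (v : V) :
    ∀ᶠ D : Finset (Sym2 V) in Filter.atTop,
      rep (Sx p x D) v = clusterRep (edgeCfg TriAdj p x) v := by
  have hs := clusterRep_spec (edgeCfg TriAdj p x) v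
  filter_upwards [conn_eventually p x hs.1] with D hD
  have hd := clusterRep_spec (cfgS (Sx p x D)) v
  apply Encodable.encode_injective
  apply le_antisymm
  · change Encodable.encode (clusterRep (cfgS (Sx p x D)) v) ≤ _
    rw [hd.2]
    exact Nat.sInf_le ⟨_, hD, rfl⟩
  · rw [hs.2]
    refine Nat.sInf_le ⟨_, ?_, rfl⟩
    exact Relation.ReflTransGen.mono (fun a b hab => ((Sx_mem p x D a b).1 hab).2) _ _ hd.1

theorem xiD_eventually (p x : ℝ) {A : Set (V → Bool)} (hA : Loc A) :
    ∀ᶠ D : Finset (Sym2 V) in Filter.atTop,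
      (xiD p D x ∈ A ↔ colourCfg TriAdj p (1 / 2) x ∈ A) := by
  obtain ⟨Λ, hΛ⟩ := hA
  have : ∀ᶠ D : Finset (Sym2 V) in Filter.atTop,
      ∀ v ∈ Λ, rep (Sx p x D) v = clusterRep (edgeCfg TriAdj p x) v := by
    rw [Filter.eventually_all_finset]
    exact fun v _ => rep_eventually p x v
  filter_upwards [this] with D hD
  have e : ∀ v ∈ Λ, xiD p D x v = colourCfg TriAdj p (1 / 2) x v := by
    intro v hv
    unfold xiD colourCfg om
    rw [hD v hv]
  exact ⟨hΛ _ _ e, hΛ _ _ (fun v hv => (e v hv).symm)⟩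

/-- The window of `D` and `Λ`. -/
noncomputable def win (Λ : Finset V) (D : Finset (Sym2 V)) : Finset V :=
  Λ ∪ (D.image es ∪ D.image et)

theorem win_ends (Λ : Finset V) (D : Finset (Sym2 V)) : ∀ e ∈ D, es e ∈ win Λ D ∧ et e ∈ win Λ D := by
  intro e he
  unfold win
  simp only [Finset.mem_union, Finset.mem_image]
  exact ⟨Or.inr (Or.inl ⟨e, he, rfl⟩), Or.inr (Or.inr ⟨e, he, rfl⟩)⟩

theorem win_sub (Λ : Finset V) (D : Finset (Sym2 V)) : Λ ⊆ win Λ D := Finset.subset_union_left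

/-- The probability of a colour event. -/
noncomputable def PP (p : ℝ) (A : Set (V → Bool)) : ℝ :=
  base.real {x | colourCfg TriAdj p (1 / 2) x ∈ A}

theorem xiD_meas (p : ℝ) {A : Set (V → Bool)} (hA : Loc A) (D : Finset (Sym2 V)) :
    MeasurableSet {x | xiD p D x ∈ A} := by
  obtain ⟨Λ, hΛ⟩ := hA
  exact (xiD_prob p hΛ (win_sub Λ D) (win_ends Λ D)).1

theorem loc_meas (p : ℝ) {A : Set (V → Bool)} (hA : Loc A) :
    MeasurableSet {x | colourCfg TriAdj p (1 / 2) x ∈ A} :=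
  measurableSet_of_tendsto_indicator (Filter.atTop : Filter (Finset (Sym2 V)))
    (fun D => xiD_meas p hA D) (fun x => xiD_eventually p x hA)

theorem PP_lim (p : ℝ) {A : Set (V → Bool)} (hA : Loc A) :
    Filter.Tendsto (fun D : Finset (Sym2 V) => base.real {x | xiD p D x ∈ A}) Filter.atTop
      (nhds (PP p A)) := by
  have := tendsto_measure_of_tendsto_indicator_of_isFiniteMeasure
    (Filter.atTop : Filter (Finset (Sym2 V))) base
    (fun D => xiD_meas p hA D) (fun x => xiD_eventually p x hA)
  exact (ENNReal.tendsto_toReal (measure_ne_top _ _)).comp this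

theorem ind_mono {A : Set (V → Bool)} (hA : Inc A) : Monotone (ind A) := by
  intro ξ ξ' h
  unfold ind
  by_cases h1 : ξ ∈ A
  · have : ξ' ∈ A := hA ξ ξ' (fun v hv => by
      have := h v
      rw [hv] at this
      exact top_le_iff.1 this) h1
    simp [h1, this]
  · rw [if_neg h1]; split_ifs <;> norm_num

theorem PP_fkg (p : ℝ) (A B : Set (V → Bool)) (hA : LI A) (hB : LI B) :
    PP p A * PP p B ≤ PP p (A ∩ B) := by
  have hAB := Loc.inter hA.1 hB.1
  refine le_of_tendsto_of_tendsto' ((PP_lim p hA.1).mul (PP_lim p hB.1)) (PP_lim p hAB) (fun D => ?_)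
  obtain ⟨Λ, h1⟩ := hA.1
  obtain ⟨Λ', h2⟩ := hB.1
  obtain ⟨Λ'', h3⟩ := hAB
  have hs : Λ ∪ Λ' ∪ Λ'' ⊆ win (Λ ∪ Λ' ∪ Λ'') D := win_sub _ _
  have hU := win_ends (Λ ∪ Λ' ∪ Λ'') D
  rw [(xiD_prob p h1 ((Finset.subset_union_left.trans Finset.subset_union_left).trans hs) hU).2,
    (xiD_prob p h2 ((Finset.subset_union_right.trans Finset.subset_union_left).trans hs) hU).2,
    (xiD_prob p h3 (Finset.subset_union_right.trans hs) hU).2]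
  have := EE_PA (qq p) (qq_mem p) es et _ D (win (Λ ∪ Λ' ∪ Λ'') D) (fun _ => false) false rfl
    (fun e he => ⟨fun h => absurd (hU e he).1 h, fun h => absurd (hU e he).2 h⟩)
    (ind A) (ind B) (ind_mono hA.2) (ind_mono hB.2)
  have e : ind (A ∩ B) = fun ξ => ind A ξ * ind B ξ := by
    funext ξ
    unfold ind
    by_cases ha : ξ ∈ A <;> by_cases hb : ξ ∈ B <;> simp [ha, hb]
  rw [e]
  exact this

theorem av_equiv {X : Type} (φ : X ≃ X) (C C' : Finset X) (h : ∀ x, φ x ∈ C' ↔ x ∈ C)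
    (f : X → ℝ) : av C (fun x => f (φ x)) = av C' f := by
  have : C' = C.map φ.toEmbedding := by
    ext y
    obtain ⟨x, rfl⟩ := φ.surjective y
    rw [h]
    simp
  unfold av
  rw [this, Finset.card_map, Finset.sum_map]
  rfl

theorem PP_flip (p : ℝ) (A : Set (V → Bool)) (hA : Loc A) :
    PP p {ξ | (fun v => !ξ v) ∈ A} = PP p A := by
  classical
  obtain ⟨Λ, h1⟩ := hA
  have h2 : ∀ ξ ξ' : V → Bool, (∀ v ∈ Λ, ξ v = ξ' v) → ξ ∈ {ξ | (fun v => !ξ v) ∈ A} →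
      ξ' ∈ {ξ : V → Bool | (fun v => !ξ v) ∈ A} := by
    intro ξ ξ' h h3
    exact h1 _ _ (fun v hv => by rw [h v hv]) h3
  refine tendsto_nhds_unique (PP_lim p ⟨Λ, h2⟩) ?_
  refine (PP_lim p ⟨Λ, h1⟩).congr (fun D => ?_)
  rw [(xiD_prob p h1 (win_sub Λ D) (win_ends Λ D)).2,
    (xiD_prob p h2 (win_sub Λ D) (win_ends Λ D)).2]
  unfold EE
  refine Finset.sum_congr rfl (fun S hS => ?_)
  have hS' := Finset.mem_powerset.1 hS
  congr 1
  symm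
  have hinv : Function.Involutive (fun (ξ : V → Bool) (v : V) =>
      if v ∈ win Λ D then !ξ v else ξ v) := by
    intro ξ; funext v
    by_cases hv : v ∈ win Λ D <;> simp [hv]
  let φ : (V → Bool) ≃ (V → Bool) := hinv.toPerm
  have hφ : ∀ ξ v, φ ξ v = if v ∈ win Λ D then !ξ v else ξ v := fun _ _ => rfl
  rw [← av_equiv φ (CF es et S (win Λ D) (fun _ => false)) _ _ (ind A)]
  · congr 1
    funext ξ
    unfold ind
    congr 1
    apply propext
    constructor
    · apply h1; intro v hv; rw [hφ, if_pos (win_sub Λ D hv)]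
    · apply h1; intro v hv; rw [hφ, if_pos (win_sub Λ D hv)]
  · intro ξ
    rw [mem_CF, mem_CF]
    refine and_congr (forall₂_congr (fun e he => ?_)) (forall₂_congr (fun v hv => ?_))
    · have := win_ends Λ D e (hS' he)
      rw [hφ, hφ, if_pos this.1, if_pos this.2, Bool.not_inj_iff]
    · rw [hφ, if_neg hv]

/-- Action on edges. -/
def sym2E (g : V ≃ V) : Sym2 V ≃ Sym2 V where
  toFun := Sym2.map g
  invFun := Sym2.map g.symm
  left_inv := by intro e; rw [Sym2.map_map]; simp
  right_inv := by intro e; rw [Sym2.map_map]; simp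

theorem qq_inv (p : ℝ) (g : V ≃ V) (hg : Aut g) (e : Sym2 V) : qq p (sym2E g e) = qq p e := by
  unfold qq
  have : adjS (sym2E g e) ↔ adjS e := by
    induction e using Sym2.ind with
    | _ u v =>
      change adjS (Sym2.map g s(u, v)) ↔ _
      rw [Sym2.map_mk, adjS_mk, adjS_mk]
      exact hg u v
  by_cases h : adjS e
  · rw [if_pos h, if_pos (this.2 h)]
  · rw [if_neg h, if_neg (fun h' => h (this.1 h'))]

theorem const_inv (g : V ≃ V) (ξ : V → Bool) (e : Sym2 V) :
    ξ (es (sym2E g e)) = ξ (et (sym2E g e)) ↔ ξ (g (es e)) = ξ (g (et e)) := by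
  induction e using Sym2.ind with
  | _ u v =>
    change ξ (es (Sym2.map g s(u, v))) = ξ (et (Sym2.map g s(u, v))) ↔ _
    rw [Sym2.map_mk, eq_est]
    exact (eq_est (fun w => ξ (g w)) u v).symm

theorem EE_inv (p : ℝ) (g : V ≃ V) (hg : Aut g) (D : Finset (Sym2 V)) (U : Finset V)
    (f : (V → Bool) → ℝ) :
    EE (qq p) es et D U (fun _ => false) f =
    EE (qq p) es et (D.map (sym2E g).toEmbedding) (U.map g.toEmbedding) (fun _ => false)
      (fun ξ => f (ξ ∘ g)) := by
  unfold EE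
  refine Finset.sum_bij' (fun S _ => S.map (sym2E g).toEmbedding)
    (fun S _ => S.map (sym2E g).symm.toEmbedding) ?_ ?_ ?_ ?_ ?_
  · intro S hS
    rw [Finset.mem_powerset] at hS ⊢
    exact Finset.map_subset_map.2 hS
  · intro S hS
    rw [Finset.mem_powerset] at hS ⊢
    intro e he
    obtain ⟨e', he', rfl⟩ := Finset.mem_map.1 he
    obtain ⟨e'', h3, rfl⟩ := Finset.mem_map.1 (hS he')
    simpa using h3
  · intro S _; ext e; simp
  · intro S _; ext e; simp
  · intro S _
    congr 1
    · unfold wt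
      rw [Finset.prod_map]
      refine Finset.prod_congr rfl (fun e _ => ?_)
      change _ = if sym2E g e ∈ _ then qq p (sym2E g e) else 1 - qq p (sym2E g e)
      rw [qq_inv p g hg]
      simp
    · symm
      refine av_equiv (Equiv.arrowCongr g.symm (Equiv.refl Bool)) _ _ (fun ξ => ?_) f
      rw [mem_CF, mem_CF]
      refine and_congr ?_ ?_
      · rw [Finset.forall_mem_map]
        refine forall₂_congr (fun e _ => ?_)
        exact (const_inv g ξ e).symm
      · constructor
        · intro h v hv
          have := h (g.symm v) (fun h' => hv (Finset.mem_map.2 ⟨_, h', by simp⟩))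
          simpa [Equiv.arrowCongr] using this
        · intro h v hv
          have := h (g v) (fun h' => hv (by simpa using h'))
          simpa [Equiv.arrowCongr] using this

theorem PP_inv (p : ℝ) (g : V ≃ V) (A : Set (V → Bool)) (hg : Aut g) (hA : Loc A) :
    PP p {ξ | ξ ∘ g ∈ A} = PP p A := by
  classical
  obtain ⟨Λ, h1⟩ := hA
  have h2 : ∀ ξ ξ' : V → Bool, (∀ v ∈ Λ.map g.toEmbedding, ξ v = ξ' v) → ξ ∈ {ξ | ξ ∘ g ∈ A} →
      ξ' ∈ {ξ : V → Bool | ξ ∘ g ∈ A} := by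
    intro ξ ξ' h h3
    exact h1 _ _ (fun v hv => h (g v) (Finset.mem_map.2 ⟨v, hv, rfl⟩)) h3
  have ht : Filter.Tendsto (fun D : Finset (Sym2 V) => D.map (sym2E g).toEmbedding)
      Filter.atTop Filter.atTop := by
    rw [Filter.tendsto_atTop]
    intro F
    filter_upwards [Filter.eventually_ge_atTop (F.map (sym2E g).symm.toEmbedding)] with D hD
    intro e he
    refine Finset.mem_map.2 ⟨(sym2E g).symm e, hD (Finset.mem_map.2 ⟨e, he, rfl⟩), by simp⟩
  refine tendsto_nhds_unique ((PP_lim p ⟨_, h2⟩).comp ht) ?_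
  refine (PP_lim p ⟨Λ, h1⟩).congr (fun D => ?_)
  have hU : ∀ e ∈ D.map (sym2E g).toEmbedding, es e ∈ (win Λ D).map g.toEmbedding ∧
      et e ∈ (win Λ D).map g.toEmbedding := by
    intro e he
    obtain ⟨e', he', rfl⟩ := Finset.mem_map.1 he
    have h3 := win_ends Λ D e' he'
    have h4 : s(es (sym2E g e'), et (sym2E g e')) = s(g (es e'), g (et e')) := by
      rw [est]
      change Sym2.map g e' = _
      conv_lhs => rw [← est e']
      rfl
    have h5 : g (es e') ∈ (win Λ D).map g.toEmbedding := Finset.mem_map.2 ⟨_, h3.1, rfl⟩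
    have h6 : g (et e') ∈ (win Λ D).map g.toEmbedding := Finset.mem_map.2 ⟨_, h3.2, rfl⟩
    change es (sym2E g e') ∈ _ ∧ et (sym2E g e') ∈ _
    rw [Sym2.eq_iff] at h4
    rcases h4 with ⟨h7, h8⟩ | ⟨h7, h8⟩
    · rw [h7, h8]; exact ⟨h5, h6⟩
    · rw [h7, h8]; exact ⟨h6, h5⟩
  change _ = base.real {x | xiD p (D.map (sym2E g).toEmbedding) x ∈ {ξ | ξ ∘ g ∈ A}}
  rw [(xiD_prob p h1 (win_sub Λ D) (win_ends Λ D)).2,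
    (xiD_prob p h2 (Finset.map_subset_map.2 (win_sub Λ D)) hU).2, EE_inv p g hg]
  rfl

theorem PP_law (p : ℝ) : Law (PP p) where
  mono := fun A B h => measureReal_mono (fun _ hx => h hx)
  nonneg := fun _ => measureReal_nonneg
  union_le := fun A B => measureReal_union_le _ _
  univ := by
    unfold PP
    have : {x | colourCfg TriAdj p (1 / 2) x ∈ Set.univ} = Set.univ := by ext; simp
    rw [this]; simp
  empty := by
    unfold PP
    have : {x | colourCfg TriAdj p (1 / 2) x ∈ (∅ : Set (V → Bool))} = ∅ := by ext; simp
    rw [this]; simp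
  fkg := PP_fkg p
  inv := PP_inv p
  flip := PP_flip p

theorem measurable_cfg (p : ℝ) :
    Measurable (fun x => (edgeCfg TriAdj p x, colourCfg TriAdj p (1 / 2) x)) := by
  refine Measurable.prodMk ?_ ?_
  · refine measurable_pi_lambda _ (fun u => measurable_pi_lambda _ (fun v => ?_))
    simp_rw [edgeCfg_eta]
    exact measurable_eta p _
  · refine measurable_pi_lambda _ (fun v => ?_)
    refine measurable_to_bool ?_
    exact loc_meas p (A := {ξ | ξ v = true}) ⟨{v}, fun ξ ξ' h h1 => by
      have := h v (Finset.mem_singleton_self v)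
      exact this.symm.trans h1⟩

theorem final_aux (p : ℝ) :
    0 < Filter.limsup
        (fun n : ℕ =>
          DaCMeasure TriAdj p (1 / 2) (colourEvent (VertBC TriAdj n (3 * n))))
        Filter.atTop := by
  obtain ⟨c, hc, h⟩ := main_comb (PP_law p)
  have h1 : ENNReal.ofReal c ≤ Filter.limsup
        (fun n : ℕ =>
          DaCMeasure TriAdj p (1 / 2) (colourEvent (VertBC TriAdj n (3 * n))))
        Filter.atTop := by
    apply Filter.le_limsup_of_frequently_le'
    rw [Filter.frequently_atTop]
    intro N
    obtain ⟨n, hn, h2⟩ := h N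
    refine ⟨n, hn, ?_⟩
    calc ENNReal.ofReal c ≤ ENNReal.ofReal (PP p (VertBC TriAdj n (3 * n))) :=
          ENNReal.ofReal_le_ofReal h2
      _ = base ((fun x => (edgeCfg TriAdj p x, colourCfg TriAdj p (1 / 2) x)) ⁻¹'
            colourEvent (VertBC TriAdj n (3 * n))) := by
          unfold PP Measure.real
          rw [ENNReal.ofReal_toReal (measure_ne_top _ _)]
          rfl
      _ ≤ _ := Measure.le_map_apply (measurable_cfg p).aemeasurable _
  exact lt_of_lt_of_le (ENNReal.ofReal_pos.2 hc) h1

end DaC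
namespace DaC

/-- **Lemma 5.2.** On the triangular lattice, for every subcritical
`p < 2 sin(π/18)`, black vertical crossings of `n × 3n` parallelograms at
`r = 1/2` occur with non-vanishing probability. -/
theorem tri_crossing_limsup_pos (p : ℝ) (hp0 : 0 ≤ p)
    (hp : p < 2 * Real.sin (Real.pi / 18)) :
    0 < Filter.limsup
        (fun n : ℕ =>
          DaCMeasure TriAdj p (1 / 2) (colourEvent (VertBC TriAdj n (3 * n))))
        Filter.atTop := by
  exact final_aux p

end DaC
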